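/- (Topological Noetherianity) Let M = (M_0, M_1, M_2, …) be an increasing sequence of positive real numbers with M_0 = 1 that is logarithmically convex, satisfies ∑_{k≥0} M_k/((k+1)M_{k+1}) = ∞, and satisfies sup_{j≥1} (M_{j+1}/M_j)^{1/j} < ∞. Let U ⊆ ℂ^n be a connected open set, and for each j ≥ 1 let I_j be a finitely generated ideal of the ring C_M(U), with the corresponding zero sets forming a decreasing sequence V(I_1) ⊇ V(I_2) ⊇ ⋯ in U. Then for every compact set K ⊆ U the sequence stabilizes in a neighborhood of K: there exist an open neighborhood W of K in U and an index k such that V(I_j) ∩ W = V(I_k) ∩ W for all j ≥ k. -/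

import Mathlib

/-- The `i`-th partial derivative of a function on Euclidean space. -/
noncomputable def pd {ι : Type} [Fintype ι] [DecidableEq ι] {W : Type} [NormedAddCommGroup W]
    [NormedSpace ℝ W] (i : ι) (f : EuclideanSpace ℝ ι → W) : EuclideanSpace ℝ ι → W :=
  fun x => fderiv ℝ f x (EuclideanSpace.single i 1)

/-- The multi-index derivative `D^α f`. -/
noncomputable def mderiv {ι : Type} [Fintype ι] [DecidableEq ι] {W : Type} [NormedAddCommGroup W]
    [NormedSpace ℝ W] (α : ι → ℕ) (f : EuclideanSpace ℝ ι → W) : EuclideanSpace ℝ ι → W :=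
  (Finset.univ : Finset ι).toList.foldr (fun i g => (pd i)^[α i] g) f

/-- Membership in the real Denjoy-Carleman class `C^ℝ_M(U)`: `f` is `C^∞` on `U` and on every
compact `K ⊆ U` there are `A, B > 0` with `|(1/α!) D^α f(x)| ≤ A B^{|α|} M_{|α|}`. -/
def CRM {ι : Type} [Fintype ι] [DecidableEq ι] (M : ℕ → ℝ)
    (U : Set (EuclideanSpace ℝ ι)) (f : EuclideanSpace ℝ ι → ℝ) : Prop :=
  ContDiffOn ℝ (⊤ : ℕ∞) f U ∧
  ∀ K : Set (EuclideanSpace ℝ ι), K ⊆ U → IsCompact K →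
    ∃ A B : ℝ, 0 < A ∧ 0 < B ∧ ∀ x ∈ K, ∀ α : ι → ℕ,
      (1 / (∏ i, ((α i).factorial : ℝ))) * |mderiv α f x| ≤
        A * B ^ (∑ i, α i) * M (∑ i, α i)

/-- Membership in the complex-valued Denjoy-Carleman class `C_M(U)`:
`f = g + ih` with `g, h ∈ C^ℝ_M(U)`. -/
def CMc {ι : Type} [Fintype ι] [DecidableEq ι] (M : ℕ → ℝ)
    (U : Set (EuclideanSpace ℝ ι)) (f : EuclideanSpace ℝ ι → ℂ) : Prop :=
  CRM M U (fun x => (f x).re) ∧ CRM M U (fun x => (f x).im)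

namespace DC

open Set Filter Topology
open scoped ContDiff Nat

/-- The standing hypotheses on the weight sequence. -/
class Wt (M : ℕ → ℝ) : Prop where
  pos : ∀ j, 0 < M j
  mono : Monotone M
  M0 : M 0 = 1
  log : ∀ j : ℕ, M (j+1) / M j ≤ M (j+2) / M (j+1)
  qa : ∑' k : ℕ, ENNReal.ofReal (M k / (((k : ℝ) + 1) * M (k+1))) = ⊤
  der : ∃ C : ℝ, ∀ j : ℕ, 1 ≤ j → (M (j+1) / M j) ^ ((1 : ℝ) / j) ≤ C

section comb

theorem sum_ofp_succ (n : ℕ) (W : OrderedFinpartition (n+1) → ℝ) :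
    ∑ c, W c = ∑ c : OrderedFinpartition n, (W c.extendLeft + ∑ i, W (c.extendMiddle i)) := by
  rw [← (OrderedFinpartition.extendEquiv n).sum_comp, Fintype.sum_sigma]
  refine Finset.sum_congr rfl fun c _ => ?_
  rw [Fintype.sum_option]
  rfl

theorem sum_partSize {n : ℕ} (c : OrderedFinpartition n) :
    ∑ i, (c.partSize i : ℝ) = n := by
  have := c.sum_sigma_eq_sum (fun _ => (1:ℝ))
  simpa using this

/-- weight of a partition -/
noncomputable def pw (G F : ℕ → ℝ) {n : ℕ} (c : OrderedFinpartition n) : ℝ :=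
  G c.length * ∏ i, F (c.partSize i)

theorem pw_left (G F : ℕ → ℝ) {n : ℕ} (c : OrderedFinpartition n) :
    pw G F c.extendLeft = G (c.length + 1) * F 1 * ∏ i, F (c.partSize i) := by
  simp only [pw]
  change G (c.length + 1) * ∏ i : Fin (c.length + 1),
    F ((Fin.cons 1 c.partSize : Fin (c.length + 1) → ℕ) i) = _
  rw [Fin.prod_univ_succ]
  simp [mul_assoc]

theorem pw_middle (G F : ℕ → ℝ) {n : ℕ} (c : OrderedFinpartition n) (k : Fin c.length) :
    pw G F (c.extendMiddle k) =
      G c.length * (F (c.partSize k + 1) * ∏ i ∈ Finset.univ.erase k, F (c.partSize i)) := by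
  simp only [pw]
  change G c.length * ∏ i : Fin c.length,
    F (Function.update c.partSize k (c.partSize k + 1) i) = _
  rw [← Finset.mul_prod_erase _ _ (Finset.mem_univ k)]
  simp only [Function.update_self]
  congr 2
  refine Finset.prod_congr rfl fun i hi => ?_
  rw [Function.update_of_ne (Finset.ne_of_mem_erase hi)]

theorem sum_pw_le (G F : ℕ → ℝ) (hG : ∀ l, 0 ≤ G l) (hF : ∀ s, 0 ≤ F s) (a b e : ℝ)
    (h1 : ∀ l, G (l+1) * F 1 ≤ a * (l+1) * G l)
    (h2 : ∀ s, 1 ≤ s → F (s+1) ≤ (b * s + e) * F s) (n : ℕ) :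
    ∑ c : OrderedFinpartition (n+1), pw G F c ≤
      ∑ c : OrderedFinpartition n, pw G F c * (a * (c.length + 1) + b * n + e * c.length) := by
  rw [sum_ofp_succ]
  refine Finset.sum_le_sum fun c _ => ?_
  have hP : 0 ≤ ∏ i, F (c.partSize i) := Finset.prod_nonneg fun i _ => hF _
  have A : pw G F c.extendLeft ≤ pw G F c * (a * (c.length + 1)) := by
    rw [pw_left]
    calc _ ≤ a * (c.length+1) * G c.length * ∏ i, F (c.partSize i) :=
          mul_le_mul_of_nonneg_right (h1 _) hP
      _ = _ := by simp only [pw]; ring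
  have B : ∀ k, pw G F (c.extendMiddle k) ≤ pw G F c * (b * c.partSize k + e) := by
    intro k
    rw [pw_middle, pw, ← Finset.mul_prod_erase Finset.univ (fun i => F (c.partSize i)) (Finset.mem_univ k)]
    have hP' : 0 ≤ ∏ i ∈ Finset.univ.erase k, F (c.partSize i) :=
      Finset.prod_nonneg fun i _ => hF _
    calc _ ≤ G c.length * (((b * c.partSize k + e) * F (c.partSize k)) *
            ∏ i ∈ Finset.univ.erase k, F (c.partSize i)) := by
          apply mul_le_mul_of_nonneg_left _ (hG _)
          exact mul_le_mul_of_nonneg_right (h2 _ (c.partSize_pos k)) hP'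
      _ = _ := by ring
  calc _ ≤ pw G F c * (a * (c.length + 1)) + ∑ k, pw G F c * (b * c.partSize k + e) :=
        add_le_add A (Finset.sum_le_sum fun k _ => B k)
    _ = _ := by
        rw [← Finset.mul_sum, Finset.sum_add_distrib, ← Finset.mul_sum, sum_partSize]
        simp; ring

theorem sum_pw_zero (G F : ℕ → ℝ) :
    ∑ c : OrderedFinpartition 0, pw G F c = G 0 := by
  rw [Fintype.sum_unique]
  change G 0 * ∏ i : Fin 0, _ = _
  simp

theorem pw_nonneg (G F : ℕ → ℝ) (hG : ∀ l, 0 ≤ G l) (hF : ∀ s, 0 ≤ F s) {n : ℕ}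
    (c : OrderedFinpartition n) : 0 ≤ pw G F c :=
  mul_nonneg (hG _) (Finset.prod_nonneg fun i _ => hF _)

/-- composition sum -/
theorem sum_comp_le (X : ℝ) (hX : 0 ≤ X) (n : ℕ) :
    ∑ c : OrderedFinpartition n, pw (fun l => X ^ l * l !) (fun s => (s ! : ℝ)) c
      ≤ (X + 2) ^ n * n ! := by
  have hG : ∀ l : ℕ, 0 ≤ X ^ l * (l ! : ℝ) := fun l => by positivity
  have hF : ∀ s : ℕ, (0:ℝ) ≤ (s ! : ℝ) := fun l => by positivity
  induction n with
  | zero => rw [sum_pw_zero]; simp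
  | succ n ih =>
    refine (sum_pw_le _ _ hG hF X 1 1 ?_ ?_ n).trans ?_
    · intro l; rw [Nat.factorial_succ]; push_cast; simp; apply le_of_eq; ring
    · intro s _; rw [Nat.factorial_succ]; push_cast; simp
    · calc _ ≤ ∑ c : OrderedFinpartition n,
            pw (fun l => X ^ l * l !) (fun s => (s ! : ℝ)) c * ((X + 2) * (n+1)) := by
            refine Finset.sum_le_sum fun c _ => ?_
            apply mul_le_mul_of_nonneg_left _ (pw_nonneg _ _ hG hF c)
            have : (c.length : ℝ) ≤ n := by exact_mod_cast c.length_le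
            nlinarith
        _ = (∑ c : OrderedFinpartition n,
            pw (fun l => X ^ l * l !) (fun s => (s ! : ℝ)) c) * ((X + 2) * (n+1)) := by
            rw [Finset.sum_mul]
        _ ≤ ((X + 2) ^ n * n !) * ((X + 2) * (n+1)) := by
            apply mul_le_mul_of_nonneg_right ih; positivity
        _ = _ := by rw [Nat.factorial_succ]; push_cast; ring

/-- majorant for the ODE -/
noncomputable def Yq (A B : ℝ) (s : ℕ) : ℝ := A * ∏ j ∈ Finset.range (s - 1), (A * B * (2 * j + 1))

theorem Yq_nonneg {A B : ℝ} (hA : 0 ≤ A) (hB : 0 ≤ B) (s : ℕ) : 0 ≤ Yq A B s := by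
  unfold Yq
  apply mul_nonneg hA
  exact Finset.prod_nonneg fun _ _ => by positivity

theorem Yq_succ (A B : ℝ) (s : ℕ) (hs : 1 ≤ s) :
    Yq A B (s + 1) = (A * B * (2 * s - 1)) * Yq A B s := by
  obtain ⟨s, rfl⟩ : ∃ t, s = t + 1 := ⟨s - 1, by omega⟩
  simp only [Yq, Nat.add_sub_cancel, Finset.prod_range_succ]
  push_cast; ring

theorem sum_ode_le (A B : ℝ) (hA : 0 ≤ A) (hB : 0 ≤ B) (n : ℕ) :
    ∑ c : OrderedFinpartition n, pw (fun l => A * B ^ l * l !) (Yq A B) c ≤ Yq A B (n+1) := by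
  have hG : ∀ l : ℕ, 0 ≤ A * B ^ l * (l ! : ℝ) := fun l => by positivity
  have hF : ∀ s : ℕ, (0:ℝ) ≤ Yq A B s := fun l => Yq_nonneg hA hB l
  induction n with
  | zero => rw [sum_pw_zero]; simp [Yq]
  | succ n ih =>
    refine (sum_pw_le _ _ hG hF (A*B) (2*A*B) (-(A*B)) ?_ ?_ n).trans ?_
    · intro l; rw [Nat.factorial_succ]; push_cast; simp [Yq]; apply le_of_eq; ring
    · intro s hs; rw [Yq_succ _ _ _ hs]; apply le_of_eq; ring
    · rw [Yq_succ _ _ _ (by omega)]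
      calc _ = (∑ c : OrderedFinpartition n,
            pw (fun l => A * B ^ l * l !) (Yq A B) c) * (A * B * (2 * (n+1:ℕ) - 1)) := by
            rw [Finset.sum_mul]
            refine Finset.sum_congr rfl fun c _ => ?_
            push_cast; ring
        _ ≤ _ := by
            rw [mul_comm]
            apply mul_le_mul_of_nonneg_left ih
            have : (0:ℝ) ≤ 2 * ((n+1:ℕ):ℝ) - 1 := by push_cast; linarith [n.cast_nonneg (α := ℝ)]
            positivity

theorem Yq_le {A B : ℝ} (hA : 0 ≤ A) (hB : 0 ≤ B) (s : ℕ) :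
    Yq A B s ≤ A * (2 * A * B + 1) ^ s * s ! := by
  rcases Nat.eq_zero_or_pos s with rfl | hs
  · simp [Yq]
  obtain ⟨t, rfl⟩ : ∃ t, s = t + 1 := ⟨s - 1, by omega⟩
  clear hs
  induction t with
  | zero => simp [Yq]; nlinarith [mul_nonneg (mul_nonneg hA hA) hB]
  | succ t ih =>
    rw [Yq_succ _ _ _ (by omega)]
    calc _ ≤ (A * B * (2 * (t+1:ℕ) - 1)) * (A * (2 * A * B + 1) ^ (t+1) * (t+1) !) := by
            apply mul_le_mul_of_nonneg_left ih
            have : (0:ℝ) ≤ 2 * ((t+1:ℕ):ℝ) - 1 := by push_cast; linarith [t.cast_nonneg (α := ℝ)]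
            positivity
      _ ≤ ((2 * A * B + 1) * (t+2)) * (A * (2 * A * B + 1) ^ (t+1) * (t+1) !) := by
            apply mul_le_mul_of_nonneg_right _ (by positivity)
            have : 0 ≤ A * B := by positivity
            push_cast
            nlinarith [t.cast_nonneg (α := ℝ)]
      _ = _ := by rw [Nat.factorial_succ (t+1)]; push_cast; ring

end comb

section weight
variable {M : ℕ → ℝ} [hM : Wt M]

theorem one_le (k : ℕ) : 1 ≤ M k := by
  rw [← hM.M0]; exact hM.mono (Nat.zero_le k)

theorem ratio_mono {i j : ℕ} (h : i ≤ j) : M (i+1) / M i ≤ M (j+1) / M j :=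
  monotone_nat_of_le_succ (f := fun j => M (j+1) / M j) hM.log h

theorem M_mul_le (i j : ℕ) : M i * M j ≤ M (i + j) := by
  induction i with
  | zero => simp [hM.M0]
  | succ i ih =>
    have h1 := ratio_mono (M := M) (Nat.le_add_right i j)
    have hi := hM.pos i
    have hij := hM.pos (i+j)
    rw [div_le_div_iff₀ hi hij] at h1
    have h2 : M (i+1) * M (i+j) ≤ M (i+1+j) * M i := by
      rw [show i + 1 + j = i + j + 1 by omega]; exact h1
    have h3 := mul_le_mul_of_nonneg_left ih (hM.pos (i+1)).le
    nlinarith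

theorem M_part {n : ℕ} (c : OrderedFinpartition n) :
    M c.length * ∏ i, M (c.partSize i) ≤ M 1 ^ c.length * M n := by
  induction n with
  | zero =>
    have : c = default := Subsingleton.elim _ _
    subst this
    change M 0 * ∏ i : Fin 0, _ ≤ M 1 ^ 0 * M 0
    simp
  | succ n ih =>
    obtain ⟨⟨c, o⟩, rfl⟩ := (OrderedFinpartition.extendEquiv n).surjective c
    have hp : ∀ k, 0 < M k := hM.pos
    have hr : ∀ k ≤ n, M (k+1) * M n ≤ M (n+1) * M k := by
      intro k hk
      have := ratio_mono (M := M) hk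
      rwa [div_le_div_iff₀ (hp _) (hp _)] at this
    cases o with
    | none =>
      have e := pw_left M M c
      simp only [pw] at e
      change M c.extendLeft.length * ∏ i, M (c.extendLeft.partSize i) ≤ M 1 ^ (c.length + 1) * _
      rw [e]
      have h1 := hr c.length c.length_le
      have h2 := ih c
      have hP : 0 < ∏ i, M (c.partSize i) := Finset.prod_pos fun i _ => hp _
      have : M (c.length+1) * (∏ i, M (c.partSize i)) * M n ≤ M 1 ^ c.length * M (n+1) * M n := by
        calc _ = (M (c.length+1) * M n) * (∏ i, M (c.partSize i)) := by ring
          _ ≤ (M (n+1) * M c.length) * (∏ i, M (c.partSize i)) :=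
            mul_le_mul_of_nonneg_right h1 hP.le
          _ = M (n+1) * (M c.length * (∏ i, M (c.partSize i))) := by ring
          _ ≤ M (n+1) * (M 1 ^ c.length * M n) := mul_le_mul_of_nonneg_left h2 (hp _).le
          _ = _ := by ring
      have := le_of_mul_le_mul_right this (hp n)
      have := mul_le_mul_of_nonneg_left this (hp 1).le
      calc _ = M 1 * (M (c.length+1) * (∏ i, M (c.partSize i))) := by ring
        _ ≤ _ := this
        _ = _ := by ring
    | some k =>
      have e := pw_middle M M c k
      simp only [pw] at e
      change M (c.extendMiddle k).length * ∏ i, M ((c.extendMiddle k).partSize i)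
        ≤ M 1 ^ c.length * _
      rw [e]
      have h1 := hr _ (c.partSize_le k)
      have h2 := ih c
      rw [← Finset.mul_prod_erase Finset.univ (fun i => M (c.partSize i)) (Finset.mem_univ k)] at h2
      have hP : 0 < ∏ i ∈ Finset.univ.erase k, M (c.partSize i) :=
        Finset.prod_pos fun i _ => hp _
      set P := ∏ i ∈ Finset.univ.erase k, M (c.partSize i)
      refine le_of_mul_le_mul_right ?_ (hp n)
      calc _ = (M (c.partSize k + 1) * M n) * (M c.length * P) := by ring
        _ ≤ (M (n+1) * M (c.partSize k)) * (M c.length * P) :=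
            mul_le_mul_of_nonneg_right h1 (mul_pos (hp _) hP).le
        _ = M (n+1) * (M c.length * (M (c.partSize k) * P)) := by ring
        _ ≤ M (n+1) * (M 1 ^ c.length * M n) := mul_le_mul_of_nonneg_left h2 (hp _).le
        _ = _ := by ring

theorem M_succ_le : ∃ C : ℝ, 0 < C ∧ ∀ k, M (k+1) ≤ C ^ (k+1) * M k := by
  obtain ⟨C, hC⟩ := hM.der
  refine ⟨max (max C 1) (M 1), by positivity, fun k => ?_⟩
  have hk := hM.pos k
  rcases Nat.eq_zero_or_pos k with rfl | h
  · simp [hM.M0]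
  have hC1 := hC k h
  have hr : 0 ≤ M (k+1) / M k := (div_pos (hM.pos _) hk).le
  have h2 : M (k+1) / M k ≤ C ^ k := by
    have := pow_le_pow_left₀ (Real.rpow_nonneg hr _) hC1 k
    rwa [← Real.rpow_natCast, ← Real.rpow_mul hr, one_div, inv_mul_cancel₀
      (by exact_mod_cast h.ne'), Real.rpow_one] at this
  rw [div_le_iff₀ hk] at h2
  refine h2.trans ?_
  apply mul_le_mul_of_nonneg_right _ hk.le
  have hC0 : 0 ≤ C := le_trans (Real.rpow_nonneg hr _) hC1
  calc C ^ k ≤ (max (max C 1) (M 1)) ^ k := by gcongr; simp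
    _ ≤ _ := pow_le_pow_right₀ (by simp) (by omega)

end weight

end DC

namespace DC

open Set Filter Topology
open scoped ContDiff Nat

/-- Germ version of the Denjoy-Carleman class for maps between normed spaces. -/
def QAt (M : ℕ → ℝ) {E F : Type} [NormedAddCommGroup E] [NormedSpace ℝ E]
    [NormedAddCommGroup F] [NormedSpace ℝ F] (f : E → F) (a : E) : Prop :=
  ∃ A B : ℝ, 0 < A ∧ 0 < B ∧ ∀ᶠ x in 𝓝 a, ContDiffAt ℝ ∞ f x ∧
    ∀ k : ℕ, ‖iteratedFDeriv ℝ k f x‖ ≤ A * B ^ k * k ! * M k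

section Q
variable {M : ℕ → ℝ}
variable {E F G H : Type} [NormedAddCommGroup E] [NormedSpace ℝ E]
  [NormedAddCommGroup F] [NormedSpace ℝ F] [NormedAddCommGroup G] [NormedSpace ℝ G]
  [NormedAddCommGroup H] [NormedSpace ℝ H]

theorem QAt.contDiffAt {f : E → F} {a : E} (h : QAt M f a) : ContDiffAt ℝ ∞ f a := by
  obtain ⟨A, B, _, _, h⟩ := h
  exact h.self_of_nhds.1

theorem QAt.continuousAt {f : E → F} {a : E} (h : QAt M f a) : ContinuousAt f a :=
  h.contDiffAt.continuousAt

theorem QAt.differentiableAt {f : E → F} {a : E} (h : QAt M f a) : DifferentiableAt ℝ f a :=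
  h.contDiffAt.differentiableAt (by simp)

theorem QAt.eventually {f : E → F} {a : E} (h : QAt M f a) : ∀ᶠ x in 𝓝 a, QAt M f x := by
  obtain ⟨A, B, hA, hB, h⟩ := h
  filter_upwards [h.eventually_nhds] with x hx using ⟨A, B, hA, hB, hx⟩

theorem QAt.congr {f g : E → F} {a : E} (h : QAt M f a) (e : g =ᶠ[𝓝 a] f) : QAt M g a := by
  obtain ⟨A, B, hA, hB, h⟩ := h
  refine ⟨A, B, hA, hB, ?_⟩
  filter_upwards [h, e.eventuallyEq_nhds] with x hx ex
  refine ⟨hx.1.congr_of_eventuallyEq ex, fun k => ?_⟩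
  rw [(ex.iteratedFDeriv ℝ k).eq_of_nhds]
  exact hx.2 k

variable [hM : Wt M]

theorem qmul {A A' B B' : ℝ} (hA : 0 ≤ A) (hB : 0 ≤ B) (hA' : A ≤ A') (hB' : B ≤ B') (k : ℕ) :
    A * B ^ k * k ! * M k ≤ A' * B' ^ k * k ! * M k := by
  have := hM.pos k
  have : 0 ≤ A' := hA.trans hA'
  gcongr

theorem QAt.mk_of {f : E → F} {a : E} (A B : ℝ) (h : ∀ᶠ x in 𝓝 a, ContDiffAt ℝ ∞ f x ∧
    ∀ k : ℕ, ‖iteratedFDeriv ℝ k f x‖ ≤ A * B ^ k * k ! * M k) : QAt M f a := by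
  refine ⟨|A| + 1, |B| + 1, by positivity, by positivity, ?_⟩
  filter_upwards [h] with x hx
  refine ⟨hx.1, fun k => (hx.2 k).trans ?_⟩
  refine le_trans ?_ (qmul (abs_nonneg A) (abs_nonneg B) (le_add_of_nonneg_right zero_le_one)
    (le_add_of_nonneg_right zero_le_one) k)
  have := (hM.pos k).le
  rw [← abs_pow]
  gcongr ?_ * _ * _
  rw [← abs_mul]; exact le_abs_self _

theorem QAt.fderiv {f : E → F} {a : E} (h : QAt M f a) : QAt M (fderiv ℝ f) a := by
  obtain ⟨A, B, hA, hB, h⟩ := h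
  obtain ⟨C, hC, hC'⟩ := M_succ_le (M := M)
  refine ⟨A * (B * C), 2 * B * C, by positivity, by positivity, ?_⟩
  filter_upwards [h] with x hx
  refine ⟨hx.1.fderiv_right (by simp), fun k => ?_⟩
  rw [norm_iteratedFDeriv_fderiv]
  refine (hx.2 (k+1)).trans ?_
  have h2 : ((k:ℝ)+1) ≤ 2 ^ k := by
    have := Nat.lt_two_pow_self (n := k)
    exact_mod_cast this
  have hk := hM.pos k
  calc A * B ^ (k+1) * ((k+1)! : ℕ) * M (k+1) ≤ A * B ^ (k+1) * ((k+1)! : ℕ) * (C^(k+1) * M k) := by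
        gcongr; exact hC' k
    _ = A * B ^ (k+1) * (((k:ℝ)+1) * k !) * (C^(k+1) * M k) := by
        rw [Nat.factorial_succ]; push_cast; ring
    _ ≤ A * B ^ (k+1) * (2 ^ k * k !) * (C^(k+1) * M k) := by gcongr
    _ = _ := by rw [mul_pow, mul_pow]; ring

theorem QAt.of_fderiv {f : E → F} {a : E} (hc : ∀ᶠ x in 𝓝 a, ContDiffAt ℝ ∞ f x)
    (h : QAt M (_root_.fderiv ℝ f) a) : QAt M f a := by
  obtain ⟨A, B, hA, hB, h⟩ := h
  have hb : ∀ᶠ x in 𝓝 a, ‖f x‖ < ‖f a‖ + 1 := by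
    have : ContinuousAt (fun x => ‖f x‖) a := hc.self_of_nhds.continuousAt.norm
    exact this.eventually_lt continuousAt_const (by simp)
  refine QAt.mk_of (‖f a‖ + 1 + A) (B + 1) ?_
  filter_upwards [h, hc, hb] with x hx hcx hbx
  refine ⟨hcx, fun k => ?_⟩
  rcases k with _ | k
  · rw [norm_iteratedFDeriv_zero]; simp [hM.M0]; linarith
  · rw [← norm_iteratedFDeriv_fderiv]
    refine (hx.2 k).trans ?_
    have hk := hM.pos k
    have hk1 : M k ≤ M (k+1) := hM.mono (Nat.le_succ k)
    have h1 : (k ! : ℝ) ≤ ((k+1)! : ℕ) := by exact_mod_cast Nat.factorial_le (Nat.le_succ k)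
    have h3 : B ^ k ≤ (B+1)^(k+1) := by
      calc B ^ k ≤ (B+1)^k := by gcongr; linarith
        _ ≤ (B+1)^(k+1) := pow_le_pow_right₀ (by linarith) (Nat.le_succ k)
    have := norm_nonneg (f a)
    gcongr
    linarith

theorem QAt.const (c : F) (a : E) : QAt M (fun _ : E => c) a := by
  refine QAt.mk_of ‖c‖ 1 (Eventually.of_forall fun x => ⟨contDiffAt_const, fun k => ?_⟩)
  rcases k with _ | k
  · rw [norm_iteratedFDeriv_zero]; simp [hM.M0]
  · rw [iteratedFDeriv_const_of_ne (by omega)]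
    have := hM.pos (k+1)
    simp only [Pi.zero_apply, norm_zero]; positivity

theorem QAt.clm (L : E →L[ℝ] F) (a : E) : QAt M (fun x => L x) a := by
  refine QAt.of_fderiv (Eventually.of_forall fun x => L.contDiff.contDiffAt) ?_
  have : _root_.fderiv ℝ (fun x => L x) = fun _ => L := by ext1 x; exact L.fderiv
  rw [this]; exact QAt.const _ _

theorem QAt.id (a : E) : QAt M (fun x : E => x) a := QAt.clm (ContinuousLinearMap.id ℝ E) a

theorem norm_comp_le {g : F → G} {f : E → F} {x : E} (hg : ContDiffAt ℝ ∞ g (f x))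
    (hf : ContDiffAt ℝ ∞ f x) (n : ℕ) :
    ‖iteratedFDeriv ℝ n (g ∘ f) x‖ ≤ ∑ c : OrderedFinpartition n,
      ‖iteratedFDeriv ℝ c.length g (f x)‖ * ∏ i, ‖iteratedFDeriv ℝ (c.partSize i) f x‖ := by
  rw [iteratedFDeriv_comp hg hf (by exact_mod_cast le_top)]
  refine (norm_sum_le _ _).trans (Finset.sum_le_sum fun c _ => ?_)
  exact c.norm_compAlongOrderedFinpartition_le _ _

theorem QAt.comp {g : F → G} {f : E → F} {a : E} (hg : QAt M g (f a)) (hf : QAt M f a) :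
    QAt M (fun x => g (f x)) a := by
  have hc := hf.continuousAt
  obtain ⟨A, B, hA, hB, hg⟩ := hg
  obtain ⟨A', B', hA', hB', hf⟩ := hf
  have hM1 := hM.pos 1
  refine QAt.mk_of A (B' * (B * A' * M 1 + 2)) ?_
  filter_upwards [hf, hc.eventually hg] with x hfx hgx
  refine ⟨hgx.1.comp x hfx.1, fun n => ?_⟩
  refine (norm_comp_le hgx.1 hfx.1 n).trans ?_
  have hMn := hM.pos n
  calc _ ≤ ∑ c : OrderedFinpartition n, A * B' ^ n * M n *
        pw (fun l => (B * A' * M 1)^l*l !) (fun s => (s ! :ℝ)) c := by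
        refine Finset.sum_le_sum fun c _ => ?_
        have h1 : ∏ i, ‖iteratedFDeriv ℝ (c.partSize i) f x‖ ≤
            ∏ i, (A' * B' ^ (c.partSize i) * (c.partSize i)! * M (c.partSize i)) :=
          Finset.prod_le_prod (fun _ _ => norm_nonneg _) fun i _ => hfx.2 _
        have h2 : ∏ i, (A' * B' ^ (c.partSize i) * ((c.partSize i)! : ℝ) * M (c.partSize i)) =
            A' ^ c.length * B' ^ n * (∏ i, ((c.partSize i)! : ℝ)) * ∏ i, M (c.partSize i) := by
          simp only [Finset.prod_mul_distrib, Finset.prod_const, Finset.card_univ,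
            Fintype.card_fin]
          rw [Finset.prod_pow_eq_pow_sum]
          congr 4
          have := sum_partSize c
          exact_mod_cast this
        have hM0 : 0 ≤ M c.length := (hM.pos _).le
        have hP : 0 ≤ ∏ i, M (c.partSize i) := Finset.prod_nonneg fun _ _ => (hM.pos _).le
        calc _ ≤ (A * B ^ c.length * c.length ! * M c.length) * (A' ^ c.length * B' ^ n *
              (∏ i, ((c.partSize i)! : ℝ)) * ∏ i, M (c.partSize i)) := by
              rw [← h2]
              exact mul_le_mul (hgx.2 _) h1 (Finset.prod_nonneg fun _ _ => norm_nonneg _)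
                (by positivity)
          _ = (A * B ^ c.length * c.length ! * A' ^ c.length * B' ^ n *
              (∏ i, ((c.partSize i)! : ℝ))) * (M c.length * ∏ i, M (c.partSize i)) := by ring
          _ ≤ (A * B ^ c.length * c.length ! * A' ^ c.length * B' ^ n *
              (∏ i, ((c.partSize i)! : ℝ))) * (M 1 ^ c.length * M n) :=
              mul_le_mul_of_nonneg_left (M_part c) (by positivity)
          _ = _ := by simp only [pw, mul_pow]; ring
    _ ≤ A * B' ^ n * M n * ((B * A' * M 1 + 2)^n * n !) := by
        rw [← Finset.mul_sum]
        exact mul_le_mul_of_nonneg_left (sum_comp_le _ (by positivity) n) (by positivity)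
    _ = _ := by rw [mul_pow]; ring

/-- Solutions of a total differential equation in the class are in the class. -/
theorem QAt.ode {f : E → F} {S : F → (E →L[ℝ] F)} {a : E}
    (hf : ∀ᶠ x in 𝓝 a, ContDiffAt ℝ ∞ f x) (hS : QAt M S (f a))
    (he : ∀ᶠ x in 𝓝 a, _root_.fderiv ℝ f x = S (f x)) : QAt M f a := by
  have hc := hf.self_of_nhds.continuousAt
  obtain ⟨A, B, hA, hB, hS⟩ := hS
  have hM1 := hM.pos 1
  have hb : ∀ᶠ x in 𝓝 a, ‖f x‖ < ‖f a‖ + 1 :=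
    hc.norm.eventually_lt continuousAt_const (by simp)
  refine QAt.mk_of (‖f a‖ + 1 + A) (2 * A * (B * M 1) + 1) ?_
  filter_upwards [hf, hc.eventually hS, he.eventually_nhds, hb] with x hfx hSx hex hbx
  have key : ∀ s : ℕ, 1 ≤ s → ‖iteratedFDeriv ℝ s f x‖ ≤ M s * Yq A (B * M 1) s := by
    intro s
    induction s using Nat.strong_induction_on with
    | _ s ih =>
    intro hs
    obtain ⟨n, rfl⟩ : ∃ n, s = n + 1 := ⟨s - 1, by omega⟩
    have e1 : _root_.fderiv ℝ f =ᶠ[𝓝 x] S ∘ f := hex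
    rw [← norm_iteratedFDeriv_fderiv, (e1.iteratedFDeriv ℝ n).eq_of_nhds]
    refine (norm_comp_le hSx.1 hfx n).trans ?_
    calc _ ≤ ∑ c : OrderedFinpartition n, M n *
        pw (fun l => A * (B * M 1)^l*l !) (Yq A (B * M 1)) c := by
          refine Finset.sum_le_sum fun c _ => ?_
          have h1 : ∏ i, ‖iteratedFDeriv ℝ (c.partSize i) f x‖ ≤
              ∏ i, (M (c.partSize i) * Yq A (B * M 1) (c.partSize i)) := by
            refine Finset.prod_le_prod (fun _ _ => norm_nonneg _) fun i _ => ih _ ?_ ?_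
            · exact Nat.lt_succ_of_le (c.partSize_le i)
            · exact c.partSize_pos i
          rw [Finset.prod_mul_distrib] at h1
          have hM0 : 0 ≤ M c.length := (hM.pos _).le
          have hY : 0 ≤ ∏ i, Yq A (B * M 1) (c.partSize i) :=
            Finset.prod_nonneg fun _ _ => Yq_nonneg (by positivity) (by positivity) _
          have hP : 0 ≤ ∏ i, M (c.partSize i) := Finset.prod_nonneg fun _ _ => (hM.pos _).le
          calc _ ≤ (A * B ^ c.length * c.length ! * M c.length) * ((∏ i, M (c.partSize i)) *
                ∏ i, Yq A (B * M 1) (c.partSize i)) := by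
                exact mul_le_mul (hSx.2 _) h1 (Finset.prod_nonneg fun _ _ => norm_nonneg _)
                  (by positivity)
            _ = (A * B ^ c.length * c.length ! * ∏ i, Yq A (B * M 1) (c.partSize i)) *
                (M c.length * ∏ i, M (c.partSize i)) := by ring
            _ ≤ (A * B ^ c.length * c.length ! * ∏ i, Yq A (B * M 1) (c.partSize i)) *
                (M 1 ^ c.length * M n) := by
                exact mul_le_mul_of_nonneg_left (M_part c) (by positivity)
            _ = _ := by simp only [pw, mul_pow]; ring
      _ ≤ M n * Yq A (B * M 1) (n+1) := by
          rw [← Finset.mul_sum]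
          exact mul_le_mul_of_nonneg_left (sum_ode_le _ _ hA.le (by positivity) n) (hM.pos _).le
      _ ≤ _ := mul_le_mul_of_nonneg_right (hM.mono (Nat.le_succ n))
          (Yq_nonneg hA.le (by positivity) _)
  refine ⟨hfx, fun k => ?_⟩
  rcases k with _ | k
  · rw [norm_iteratedFDeriv_zero]; simp [hM.M0]; linarith
  · refine (key _ (by omega)).trans ?_
    have hk := hM.pos (k+1)
    calc _ ≤ M (k+1) * (A * (2 * A * (B * M 1) + 1) ^ (k+1) * (k+1)!) :=
          mul_le_mul_of_nonneg_left (Yq_le hA.le (by positivity) _) hk.le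
      _ = A * (2 * A * (B * M 1) + 1) ^ (k+1) * (k+1)! * M (k+1) := by ring
      _ ≤ _ := qmul hA.le (by positivity) (by linarith [norm_nonneg (f a)]) le_rfl _

theorem QAt.add {f g : E → F} {a : E} (hf : QAt M f a) (hg : QAt M g a) :
    QAt M (fun x => f x + g x) a := by
  obtain ⟨A, B, hA, hB, hf⟩ := hf
  obtain ⟨A', B', hA', hB', hg⟩ := hg
  refine QAt.mk_of (A + A') (B + B') ?_
  filter_upwards [hf, hg] with x hx hy
  refine ⟨hx.1.add hy.1, fun k => ?_⟩
  have e := iteratedFDeriv_add_apply (i := k) (hx.1.of_le (by exact_mod_cast le_top))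
    (hy.1.of_le (by exact_mod_cast le_top))
  have e' : iteratedFDeriv ℝ k (fun x => f x + g x) x =
    iteratedFDeriv ℝ k f x + iteratedFDeriv ℝ k g x := e
  rw [e']
  refine (norm_add_le _ _).trans ?_
  have h1 := (hx.2 k).trans (qmul hA.le hB.le le_rfl (le_add_of_nonneg_right hB'.le) k)
  have h2 := (hy.2 k).trans (qmul hA'.le hB'.le le_rfl (le_add_of_nonneg_left hB.le) k)
  calc _ ≤ _ := add_le_add h1 h2
    _ = _ := by ring

theorem QAt.lin (L : F →L[ℝ] G) {f : E → F} {a : E} (hf : QAt M f a) :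
    QAt M (fun x => L (f x)) a := QAt.comp (g := fun y => L y) (QAt.clm L _) hf

theorem QAt.prodMk {f : E → F} {g : E → G} {a : E} (hf : QAt M f a) (hg : QAt M g a) :
    QAt M (fun x => (f x, g x)) a := by
  have := (hf.lin (ContinuousLinearMap.inl ℝ F G)).add (hg.lin (ContinuousLinearMap.inr ℝ F G))
  simpa using this

theorem QAt.fst {f : E → F × G} {a : E} (hf : QAt M f a) : QAt M (fun x => (f x).1) a :=
  hf.lin (ContinuousLinearMap.fst ℝ F G)

theorem QAt.snd {f : E → F × G} {a : E} (hf : QAt M f a) : QAt M (fun x => (f x).2) a :=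
  hf.lin (ContinuousLinearMap.snd ℝ F G)

theorem QAt.sum {ι : Type*} {s : Finset ι} {f : ι → E → F} {a : E}
    (hf : ∀ i ∈ s, QAt M (f i) a) : QAt M (fun x => ∑ i ∈ s, f i x) a := by
  classical
  induction s using Finset.induction_on with
  | empty => simpa using QAt.const _ _
  | insert i s hi ih =>
    simp only [Finset.sum_insert hi]
    exact (hf i (by simp)).add (ih fun j hj => hf j (by simp [hj]))

theorem QAt.pi {ι : Type} [Fintype ι] [DecidableEq ι] {f : E → ι → ℝ} {a : E}
    (hf : ∀ i, QAt M (fun x => f x i) a) : QAt M f a := by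
  have := QAt.sum (s := Finset.univ) (a := a) (f := fun i x =>
    (ContinuousLinearMap.single ℝ (fun _ : ι => ℝ) i) (f x i))
    fun i _ => (hf i).lin (ContinuousLinearMap.single ℝ (fun _ : ι => ℝ) i)
  refine this.congr (Eventually.of_forall fun x => ?_)
  ext j
  simp [Finset.sum_apply, Pi.single_apply]

theorem QAt.apply {ι : Type} [Fintype ι] {f : E → ι → ℝ} {a : E}
    (hf : QAt M f a) (i : ι) : QAt M (fun x => f x i) a :=
  hf.lin (ContinuousLinearMap.proj i : (ι → ℝ) →L[ℝ] ℝ)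

theorem QAt.coord {ι : Type} [Fintype ι] (i : ι) (a : ι → ℝ) :
    QAt M (fun x : ι → ℝ => x i) a := (QAt.id a).apply i

/-- bilinear maps -/
theorem QAt.bilin (L : F →L[ℝ] G →L[ℝ] H) {f : E → F} {g : E → G} {a : E} (hf : QAt M f a)
    (hg : QAt M g a) : QAt M (fun x => L (f x) (g x)) a := by
  have key : QAt M (fun z : F × G => L z.1 z.2) (f a, g a) := by
    have hb : IsBoundedBilinearMap ℝ (fun z : F × G => L z.1 z.2) := L.isBoundedBilinearMap
    refine QAt.of_fderiv (Eventually.of_forall fun x => hb.contDiff.contDiffAt) ?_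
    have : _root_.fderiv ℝ (fun z : F × G => L z.1 z.2) =
        fun z => (ContinuousLinearMap.compL ℝ (F × G) G H).flip (ContinuousLinearMap.snd ℝ F G) (L z.1)
          + (ContinuousLinearMap.compL ℝ (F × G) F H).flip (ContinuousLinearMap.fst ℝ F G)
            (L.flip z.2) := by
      ext1 z
      rw [hb.fderiv]
      ext w <;> simp [add_comm]
    rw [this]
    exact (((QAt.id _).fst.lin L).lin _).add (((QAt.id _).snd.lin L.flip).lin _)
  exact QAt.comp (g := fun z : F × G => L z.1 z.2) (f := fun x => (f x, g x)) key (hf.prodMk hg)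

theorem QAt.mul {f g : E → ℝ} {a : E} (hf : QAt M f a) (hg : QAt M g a) :
    QAt M (fun x => f x * g x) a := hf.bilin (ContinuousLinearMap.mul ℝ ℝ) hg

theorem QAt.smul {f : E → ℝ} {g : E → F} {a : E} (hf : QAt M f a) (hg : QAt M g a) :
    QAt M (fun x => f x • g x) a := hf.bilin (ContinuousLinearMap.lsmul ℝ ℝ) hg

theorem QAt.neg {f : E → F} {a : E} (hf : QAt M f a) :
    QAt M (fun x => - f x) a := hf.lin (-(ContinuousLinearMap.id ℝ F))

theorem QAt.sub {f g : E → F} {a : E} (hf : QAt M f a) (hg : QAt M g a) :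
    QAt M (fun x => f x - g x) a := by
  simpa [sub_eq_add_neg] using hf.add hg.neg

theorem QAt.pow {f : E → ℝ} {a : E} (hf : QAt M f a) (n : ℕ) :
    QAt M (fun x => f x ^ n) a := by
  induction n with
  | zero => simpa using QAt.const _ _
  | succ n ih => simpa [pow_succ] using ih.mul hf

theorem QAt.prod {ι : Type*} {s : Finset ι} {f : ι → E → ℝ} {a : E}
    (hf : ∀ i ∈ s, QAt M (f i) a) : QAt M (fun x => ∏ i ∈ s, f i x) a := by
  classical
  induction s using Finset.induction_on with
  | empty => simpa using QAt.const _ _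
  | insert i s hi ih =>
    simp only [Finset.prod_insert hi]
    exact (hf i (by simp)).mul (ih fun j hj => hf j (by simp [hj]))

theorem QAt.inv {f : E → ℝ} {a : E} (hf : QAt M f a) (h0 : f a ≠ 0) :
    QAt M (fun x => (f x)⁻¹) a := by
  have key : QAt M (fun y : ℝ => y⁻¹) (f a) := by
    refine QAt.ode (S := fun y => (-(y ^ 2)) • (ContinuousLinearMap.id ℝ ℝ)) ?_ ?_ ?_
    · filter_upwards [isOpen_ne.mem_nhds h0] with y hy using contDiffAt_inv ℝ hy
    · exact ((QAt.id _).pow 2).neg.smul (QAt.const _ _)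
    · filter_upwards [isOpen_ne.mem_nhds h0] with y hy
      ext
      simp [fderiv_inv]
  exact QAt.comp (g := fun y : ℝ => y⁻¹) key hf

theorem QAt.div {f g : E → ℝ} {a : E} (hf : QAt M f a) (hg : QAt M g a) (h0 : g a ≠ 0) :
    QAt M (fun x => f x / g x) a := by
  simpa [div_eq_mul_inv] using hf.mul (hg.inv h0)

end Q
end DC

namespace DC

open Set Filter Topology
open scoped ContDiff Nat

section Q
variable {M : ℕ → ℝ} [hM : Wt M]
variable {E F G H : Type} [NormedAddCommGroup E] [NormedSpace ℝ E]
  [NormedAddCommGroup F] [NormedSpace ℝ F] [NormedAddCommGroup G] [NormedSpace ℝ G]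
  [NormedAddCommGroup H] [NormedSpace ℝ H]

theorem norm_affine {f : F → G} (L : E →L[ℝ] F) (c : F) {x : E}
    (hf : ContDiffAt ℝ ∞ f (L x + c)) (k : ℕ) :
    ‖iteratedFDeriv ℝ k (fun x => f (L x + c)) x‖ ≤ ‖iteratedFDeriv ℝ k f (L x + c)‖ * ‖L‖ ^ k := by
  set g : F → G := fun y => f (y + c) with hg
  have hgk : ContDiffAt ℝ k g (L x) := by
    have h1 : ContDiffAt ℝ k f (L x + c) := hf.of_le (by exact_mod_cast le_top)
    exact ContDiffAt.comp (f := fun y : F => y + c) (L x) h1 (by fun_prop)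
  have := (hgk.eventually (by simp)).eventually_nhds
  obtain ⟨s, hs, hso, hxs⟩ := eventually_nhds_iff.1 this
  have e := L.iteratedFDerivWithin_comp_right (f := g) (n := k) (s := s)
    (fun y hy => ((hs y hy).self_of_nhds).contDiffWithinAt) hso.uniqueDiffOn
    ((hso.preimage L.continuous).uniqueDiffOn) (x := x) hxs (i := k) le_rfl
  rw [iteratedFDerivWithin_of_isOpen _ (hso.preimage L.continuous) hxs,
    iteratedFDerivWithin_of_isOpen _ hso hxs] at e
  have e2 : (fun x => f (L x + c)) = g ∘ L := rfl
  rw [e2, e, ← iteratedFDeriv_comp_add_right k c (L x)]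
  refine (ContinuousMultilinearMap.norm_compContinuousLinearMap_le _ _).trans ?_
  simp [hg]

theorem QAt.ode' {f : E → F} {S : F → (E →L[ℝ] F)} {a : E}
    (hf : ∀ᶠ x in 𝓝 a, DifferentiableAt ℝ f x) (hS : QAt M S (f a))
    (he : ∀ᶠ x in 𝓝 a, _root_.fderiv ℝ f x = S (f x)) : QAt M f a := by
  refine QAt.ode ?_ hS he
  have hc := hf.self_of_nhds.continuousAt
  have h1 : ∀ᶠ x in 𝓝 a, ContDiffAt ℝ ∞ S (f x) :=
    hc.eventually (hS.eventually.mono fun x hx => hx.contDiffAt)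
  obtain ⟨V, hV, hVo, haV⟩ := eventually_nhds_iff.1 (hf.and (h1.and he))
  have key : ∀ n : ℕ, ContDiffOn ℝ n f V := by
    intro n
    induction n with
    | zero =>
      exact contDiffOn_zero.2 fun x hx => ((hV x hx).1.continuousAt).continuousWithinAt
    | succ n ih =>
      have := contDiffOn_succ_iff_fderiv_of_isOpen (𝕜 := ℝ) (f := f) (n := n) hVo
      push_cast
      refine this.2 ⟨fun x hx => (hV x hx).1.differentiableWithinAt, by simp, ?_⟩
      have : ContDiffOn ℝ n (S ∘ f) V := by
        intro x hx
        exact ((hV x hx).2.1.of_le (by exact_mod_cast le_top)).comp_contDiffWithinAt x (ih x hx)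
      exact this.congr fun x hx => (hV x hx).2.2
  filter_upwards [hVo.mem_nhds haV] with x hx
  exact (contDiffOn_infty.2 key).contDiffAt (hVo.mem_nhds hx)

theorem ift [CompleteSpace E] {h : E × ℝ → ℝ} {a : E} {b : ℝ} (hh : QAt M h (a, b))
    (h0 : h (a, b) = 0) (hy : fderiv ℝ h (a, b) (0, 1) ≠ 0) :
    ∃ p : E → ℝ, QAt M p a ∧ p a = b ∧ ∀ᶠ x in 𝓝 a, h (x, p x) = 0 := by
  have inv : (fderiv ℝ h (a, b) ∘L ContinuousLinearMap.inr ℝ E ℝ).IsInvertible := by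
    set c := fderiv ℝ h (a, b) (0, 1)
    refine ⟨ContinuousLinearEquiv.unitsEquivAut ℝ (Units.mk0 c hy), ?_⟩
    ext
    simp [c]
  have cd := hh.contDiffAt
  have pn : (∞ : WithTop ℕ∞) ≠ 0 := by simp
  set p := cd.implicitFunction pn inv with hp
  have hpa : p a = b := cd.implicitFunction_apply_self pn inv
  have hpe : ∀ᶠ x in 𝓝 a, h (x, p x) = 0 := by
    have := cd.eventually_apply_implicitFunction pn inv
    rwa [h0] at this
  have hpc : ContDiffAt ℝ ∞ p a := cd.contDiffAt_implicitFunction pn inv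
  have hpd : ∀ᶠ x in 𝓝 a, DifferentiableAt ℝ p x := by
    have := ((hpc.of_le (m := 1) (by simp)).eventually (by simp))
    exact this.mono fun x hx => hx.differentiableAt (by simp)
  refine ⟨p, ?_, hpa, hpe⟩
  have key : QAt M (fun x => (x, p x)) a := by
    refine QAt.ode' (S := fun z => ContinuousLinearMap.inl ℝ E ℝ +
      (ContinuousLinearMap.compL ℝ E ℝ (E × ℝ) (ContinuousLinearMap.inr ℝ E ℝ))
        ((-((fderiv ℝ h z (0, 1))⁻¹)) • ((ContinuousLinearMap.compL ℝ E (E × ℝ) ℝ).flip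
          (ContinuousLinearMap.inl ℝ E ℝ) (fderiv ℝ h z)))) ?_ ?_ ?_
    · filter_upwards [hpd] with x hx using differentiableAt_id.prodMk hx
    · rw [hpa]
      have h1 := hh.fderiv
      have h2 : QAt M (fun z => fderiv ℝ h z (0, 1)) (a, b) :=
        h1.lin (ContinuousLinearMap.apply ℝ ℝ ((0, 1) : E × ℝ))
      exact (QAt.const _ _).add (((h2.inv hy).neg.smul (h1.lin _)).lin _)
    · have hcp : ContinuousAt (fun x => (x, p x)) a :=
        continuousAt_id.prodMk hpc.continuousAt
      have e1 : ∀ᶠ x in 𝓝 a, QAt M h (x, p x) :=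
        hcp.eventually (by beta_reduce; rw [hpa]; exact hh.eventually)
      have e2 : ∀ᶠ x in 𝓝 a, fderiv ℝ h (x, p x) (0, 1) ≠ 0 := by
        have h2 : QAt M (fun z => fderiv ℝ h z (0, 1)) (a, b) :=
          hh.fderiv.lin (ContinuousLinearMap.apply ℝ ℝ ((0, 1) : E × ℝ))
        have h3 : ContinuousAt (fun z => fderiv ℝ h z (0, 1)) (a, p a) := by
          rw [hpa]; exact h2.continuousAt
        exact (ContinuousAt.comp (f := fun x => (x, p x)) h3 hcp).eventually_ne (by
          simpa [hpa] using hy)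
      filter_upwards [hpd, e1, e2, hpe.eventually_nhds] with x hx h1 h2 h3
      have d1 : HasFDerivAt (fun x => (x, p x)) ((ContinuousLinearMap.id ℝ E).prod (fderiv ℝ p x)) x :=
        (hasFDerivAt_id x).prodMk hx.hasFDerivAt
      have d2 := (h1.differentiableAt.hasFDerivAt).comp x d1
      have d3 : HasFDerivAt (h ∘ fun x => (x, p x)) (0 : E →L[ℝ] ℝ) x :=
        (hasFDerivAt_const (0:ℝ) x).congr_of_eventuallyEq h3
      have d4 := d2.unique d3
      rw [d1.fderiv]
      have d5 : ∀ w, fderiv ℝ p x w = -((fderiv ℝ h (x, p x) (0, 1))⁻¹ * fderiv ℝ h (x, p x) (w, 0)) := by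
        intro w
        have := congrArg (fun L => L w) d4
        simp only [ContinuousLinearMap.comp_apply, ContinuousLinearMap.prod_apply,
          ContinuousLinearMap.id_apply, _root_.zero_apply] at this
        have e : ((w, fderiv ℝ p x w) : E × ℝ) = (w, 0) + (fderiv ℝ p x w) • ((0, 1) : E × ℝ) := by
          simp
        rw [e, map_add, map_smul, smul_eq_mul] at this
        field_simp
        linarith
      ext w
      · simp
      · simp [d5]
  exact key.snd

theorem paramInt_hasFDerivAt {a : E} {r : ℝ} [CompleteSpace F] {T : ℝ × E → F}
    (hT : ∀ t ∈ Icc (0:ℝ) 1, ∀ z ∈ Metric.ball a r, ContDiffAt ℝ ∞ T (t, z)) {C : ℝ}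
    (hC : ∀ t ∈ Icc (0:ℝ) 1, ∀ z ∈ Metric.ball a r,
      ‖fderiv ℝ T (t, z) ∘L ContinuousLinearMap.inr ℝ ℝ E‖ ≤ C)
    {z : E} (hz : z ∈ Metric.ball a r) :
    HasFDerivAt (fun z => ∫ t in (0:ℝ)..1, T (t, z))
      (∫ t in (0:ℝ)..1, fderiv ℝ T (t, z) ∘L ContinuousLinearMap.inr ℝ ℝ E) z := by
  have hI : Set.uIoc (0:ℝ) 1 = Ioc 0 1 := uIoc_of_le zero_le_one
  have hu : uIcc (0:ℝ) 1 = Icc 0 1 := uIcc_of_le zero_le_one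
  have hcT : ∀ x ∈ Metric.ball a r, ContinuousOn (fun t => T (t, x)) (Icc 0 1) := fun x hx t ht =>
    (ContinuousAt.comp (f := fun t => (t, x)) (hT t ht x hx).continuousAt
      (by fun_prop)).continuousWithinAt
  have hcD : ContinuousOn (fun t => fderiv ℝ T (t, z) ∘L ContinuousLinearMap.inr ℝ ℝ E) (Icc 0 1) := by
    intro t ht
    have h1 : ContinuousAt (fderiv ℝ T) (t, z) :=
      ((hT t ht z hz).fderiv_right (m := 0) (by simp)).continuousAt
    have h2 : ContinuousAt (fun t => fderiv ℝ T (t, z)) t :=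
      ContinuousAt.comp (f := fun t => (t, z)) h1 (by fun_prop)
    exact (h2.clm_comp continuousAt_const).continuousWithinAt
  refine intervalIntegral.hasFDerivAt_integral_of_dominated_of_fderiv_le
    (F := fun z t => T (t, z)) (F' := fun z t => fderiv ℝ T (t, z) ∘L ContinuousLinearMap.inr ℝ ℝ E)
    (bound := fun _ => C) (Metric.isOpen_ball.mem_nhds hz) ?_ ?_ ?_ ?_ ?_ ?_
  · filter_upwards [Metric.isOpen_ball.mem_nhds hz] with x hx
    rw [hI]
    exact ((hcT x hx).mono Ioc_subset_Icc_self).aestronglyMeasurable measurableSet_Ioc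
  · exact ContinuousOn.intervalIntegrable (by rw [hu]; exact hcT z hz)
  · rw [hI]
    exact (hcD.mono Ioc_subset_Icc_self).aestronglyMeasurable measurableSet_Ioc
  · refine Eventually.of_forall fun t ht x hx => hC t ?_ x hx
    rw [hI] at ht; exact Ioc_subset_Icc_self ht
  · exact intervalIntegrable_const
  · refine Eventually.of_forall fun t ht x hx => ?_
    rw [hI] at ht
    have h1 := (hT t (Ioc_subset_Icc_self ht) x hx).differentiableAt (by simp)
    exact h1.hasFDerivAt.comp (f := fun z => (t, z)) x
      (by exact hasFDerivAt_prodMk_right t x)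

theorem paramInt {a : E} {r : ℝ} (n : ℕ) : ∀ {F : Type} [NormedAddCommGroup F] [NormedSpace ℝ F]
    [CompleteSpace F] {T : ℝ × E → F}
    (_ : ∀ t ∈ Icc (0:ℝ) 1, ∀ z ∈ Metric.ball a r, ContDiffAt ℝ ∞ T (t, z)) {C : ℕ → ℝ}
    (_ : ∀ k, ∀ t ∈ Icc (0:ℝ) 1, ∀ z ∈ Metric.ball a r,
      ‖iteratedFDeriv ℝ k (fun z => T (t, z)) z‖ ≤ C k),
    ContDiffOn ℝ n (fun z => ∫ t in (0:ℝ)..1, T (t, z)) (Metric.ball a r) ∧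
    ∀ z ∈ Metric.ball a r, ‖iteratedFDeriv ℝ n (fun z => ∫ t in (0:ℝ)..1, T (t, z)) z‖ ≤ C n := by
  induction n with
  | zero =>
    intro F _ _ _ T hT C hC
    have hfd : ∀ t ∈ Icc (0:ℝ) 1, ∀ z ∈ Metric.ball a r,
        fderiv ℝ T (t, z) ∘L ContinuousLinearMap.inr ℝ ℝ E = fderiv ℝ (fun z => T (t, z)) z := by
      intro t ht z hz
      exact (((hT t ht z hz).differentiableAt (by simp)).hasFDerivAt.comp (f := fun z => (t, z)) z
        (hasFDerivAt_prodMk_right t z)).fderiv.symm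
    refine ⟨?_, fun z hz => ?_⟩
    · rw [Nat.cast_zero, contDiffOn_zero]
      intro z hz
      refine (paramInt_hasFDerivAt hT (C := C 1) ?_ hz).continuousAt.continuousWithinAt
      intro t ht z hz
      rw [hfd t ht z hz]
      have := hC 1 t ht z hz
      rwa [norm_iteratedFDeriv_one] at this
    · rw [norm_iteratedFDeriv_zero]
      have := intervalIntegral.norm_integral_le_of_norm_le_const (a := (0:ℝ)) (b := 1) (C := C 0)
        (f := fun t => T (t, z)) ?_
      · simpa using this
      · intro t ht
        rw [uIoc_of_le zero_le_one] at ht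
        have := hC 0 t (Ioc_subset_Icc_self ht) z hz
        rwa [norm_iteratedFDeriv_zero] at this
  | succ n ih =>
    intro F _ _ _ T hT C hC
    have hfd : ∀ t ∈ Icc (0:ℝ) 1, ∀ z ∈ Metric.ball a r,
        fderiv ℝ T (t, z) ∘L ContinuousLinearMap.inr ℝ ℝ E = fderiv ℝ (fun z => T (t, z)) z := by
      intro t ht z hz
      exact (((hT t ht z hz).differentiableAt (by simp)).hasFDerivAt.comp (f := fun z => (t, z)) z
        (hasFDerivAt_prodMk_right t z)).fderiv.symm
    have hC1 : ∀ t ∈ Icc (0:ℝ) 1, ∀ z ∈ Metric.ball a r,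
        ‖fderiv ℝ T (t, z) ∘L ContinuousLinearMap.inr ℝ ℝ E‖ ≤ C 1 := by
      intro t ht z hz
      rw [hfd t ht z hz]
      have := hC 1 t ht z hz
      rwa [norm_iteratedFDeriv_one] at this
    have hd := fun z (hz : z ∈ Metric.ball a r) => paramInt_hasFDerivAt hT hC1 hz
    obtain ⟨i1, i2⟩ := ih (F := E →L[ℝ] F)
      (T := fun p => fderiv ℝ T p ∘L ContinuousLinearMap.inr ℝ ℝ E) (C := fun k => C (k+1))
      (fun t ht z hz => ((hT t ht z hz).fderiv_right (m := ∞) (by simp)).clm_comp contDiffAt_const)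
      (fun k t ht z hz => by
        have e : (fun z => fderiv ℝ T (t, z) ∘L ContinuousLinearMap.inr ℝ ℝ E) =ᶠ[𝓝 z]
            fderiv ℝ (fun z => T (t, z)) := by
          filter_upwards [Metric.isOpen_ball.mem_nhds hz] with w hw using hfd t ht w hw
        rw [(e.iteratedFDeriv ℝ k).eq_of_nhds, norm_iteratedFDeriv_fderiv]
        exact hC (k+1) t ht z hz)
    refine ⟨?_, fun z hz => ?_⟩
    · push_cast
      refine (contDiffOn_succ_iff_fderiv_of_isOpen Metric.isOpen_ball).2
        ⟨fun z hz => (hd z hz).differentiableAt.differentiableWithinAt, by simp, ?_⟩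
      exact i1.congr fun z hz => (hd z hz).fderiv
    · rw [← norm_iteratedFDeriv_fderiv]
      have e : fderiv ℝ (fun z => ∫ t in (0:ℝ)..1, T (t, z)) =ᶠ[𝓝 z]
          fun z => ∫ t in (0:ℝ)..1, fderiv ℝ T (t, z) ∘L ContinuousLinearMap.inr ℝ ℝ E := by
        filter_upwards [Metric.isOpen_ball.mem_nhds hz] with w hw using (hd w hw).fderiv
      rw [(e.iteratedFDeriv ℝ n).eq_of_nhds]
      exact i2 z hz

theorem QAt.avg [CompleteSpace F] {h : E → F} (l : E →L[ℝ] ℝ) (v : E) {a : E} (hh : QAt M h a) :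
    QAt M (fun z => ∫ t in (0:ℝ)..1, h (z - ((1 - t) * (l z - l a)) • v)) a := by
  obtain ⟨A, B, hA, hB, hh⟩ := hh
  obtain ⟨R, hR, hball⟩ := Metric.eventually_nhds_iff_ball.1 hh
  set k : ℝ := 1 + ‖l‖ * ‖v‖ with hk
  have hk0 : 0 < k := by positivity
  have hL : ∀ t ∈ Icc (0:ℝ) 1, ‖ContinuousLinearMap.id ℝ E - (1 - t) • l.smulRight v‖ ≤ k := by
    intro t ht
    refine (norm_sub_le _ _).trans (add_le_add ContinuousLinearMap.norm_id_le ?_)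
    rw [norm_smul, ContinuousLinearMap.norm_smulRight_apply, Real.norm_eq_abs,
      abs_of_nonneg (by linarith [ht.2])]
    exact mul_le_of_le_one_left (by positivity) (by linarith [ht.1])
  have hTeq : ∀ t z, z - ((1 - t) * (l z - l a)) • v =
      (ContinuousLinearMap.id ℝ E - (1 - t) • l.smulRight v) z + ((1 - t) * l a) • v := by
    intro t z
    simp only [ContinuousLinearMap.sub_apply, ContinuousLinearMap.smul_apply,
      ContinuousLinearMap.smulRight_apply, ContinuousLinearMap.id_apply]
    module
  have hmem : ∀ t ∈ Icc (0:ℝ) 1, ∀ z ∈ Metric.ball a (R / k),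
      z - ((1 - t) * (l z - l a)) • v ∈ Metric.ball a R := by
    intro t ht z hz
    have e : z - ((1 - t) * (l z - l a)) • v - a =
      (ContinuousLinearMap.id ℝ E - (1 - t) • l.smulRight v) (z - a) := by
      simp only [ContinuousLinearMap.sub_apply, ContinuousLinearMap.smul_apply,
        ContinuousLinearMap.smulRight_apply, ContinuousLinearMap.id_apply, map_sub]
      module
    rw [mem_ball_iff_norm, e]
    rw [mem_ball_iff_norm] at hz
    refine (ContinuousLinearMap.le_opNorm _ _).trans_lt ?_
    calc _ ≤ k * ‖z - a‖ := by gcongr; exact hL t ht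
      _ < k * (R / k) := by gcongr
      _ = R := by field_simp
  have hP := fun n => paramInt (E := E) (a := a) (r := R / k) n
    (T := fun p : ℝ × E => h (p.2 - ((1 - p.1) * (l p.2 - l a)) • v))
    (C := fun n => (A * B ^ n * n ! * M n) * k ^ n) (fun t ht z hz => by
      have := (hball _ (hmem t ht z hz)).1
      exact ContDiffAt.comp (f := fun p : ℝ × E => p.2 - ((1 - p.1) * (l p.2 - l a)) • v) (t, z) this
        (by fun_prop)) (fun n t ht z hz => by
      have h1 := hball _ (hmem t ht z hz)
      simp only [hTeq] at h1 ⊢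
      refine (norm_affine _ _ h1.1 n).trans ?_
      have := hM.pos n
      gcongr
      · exact h1.2 n
      · exact hL t ht)
  refine QAt.mk_of A (B * k) ?_
  filter_upwards [Metric.ball_mem_nhds a (div_pos hR hk0)] with z hz
  refine ⟨?_, fun n => ((hP n).2 z hz).trans (le_of_eq ?_)⟩
  · exact (contDiffOn_infty.2 fun n => (hP n).1).contDiffAt (Metric.isOpen_ball.mem_nhds hz)
  · rw [mul_pow]; ring

/-- Division with respect to a hyperplane. -/
theorem qdivide {f : E → ℝ} (l : E →L[ℝ] ℝ) (v : E) {a : E} (hf : QAt M f a) :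
    ∃ q : E → ℝ, QAt M q a ∧
      ∀ᶠ z in 𝓝 a, f z = f (z - (l z - l a) • v) + (l z - l a) * q z := by
  refine ⟨fun z => ∫ t in (0:ℝ)..1, fderiv ℝ f (z - ((1 - t) * (l z - l a)) • v) v, ?_, ?_⟩
  · exact QAt.avg (h := fun z => fderiv ℝ f z v) l v
      (hf.fderiv.lin (ContinuousLinearMap.apply ℝ ℝ v))
  · obtain ⟨R, hR, hball⟩ := Metric.eventually_nhds_iff_ball.1 hf.eventually
    have hcont : ContinuousAt (fun z => z - (l z - l a) • v) a := by fun_prop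
    have hev : ∀ᶠ z in 𝓝 a, z - (l z - l a) • v ∈ Metric.ball a R :=
      hcont.eventually_mem (by simpa using Metric.ball_mem_nhds a hR)
    filter_upwards [hev, Metric.ball_mem_nhds a hR] with z h1 h2
    have hmem : ∀ t ∈ Icc (0:ℝ) 1, z - ((1 - t) * (l z - l a)) • v ∈ Metric.ball a R := by
      intro t ht
      have e : z - ((1 - t) * (l z - l a)) • v = (1 - t) • (z - (l z - l a) • v) + t • z := by
        rw [smul_sub, smul_smul, sub_smul 1 t z, one_smul]; abel
      rw [e]
      exact (convex_ball a R) h1 h2 (by linarith [ht.2]) ht.1 (by ring)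
    have hd : ∀ t ∈ uIcc (0:ℝ) 1, HasDerivAt (fun t => f (z - ((1 - t) * (l z - l a)) • v))
        ((l z - l a) * fderiv ℝ f (z - ((1 - t) * (l z - l a)) • v) v) t := by
      intro t ht
      rw [uIcc_of_le zero_le_one] at ht
      have d1 : HasDerivAt (fun t : ℝ => z - ((1 - t) * (l z - l a)) • v) ((l z - l a) • v) t := by
        have d0 : HasDerivAt (fun t : ℝ => (1 - t) * (l z - l a)) (-(l z - l a)) t := by
          simpa using ((hasDerivAt_id t).const_sub 1).mul_const (l z - l a)
        have := (d0.smul_const v).const_sub z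
        simpa [sub_smul] using this
      have := ((hball _ (hmem t ht)).differentiableAt.hasFDerivAt).comp_hasDerivAt t d1
      simpa [Function.comp_def] using this
    have hi : IntervalIntegrable (fun t : ℝ =>
        (l z - l a) * fderiv ℝ f (z - ((1 - t) * (l z - l a)) • v) v) MeasureTheory.volume 0 1 := by
      apply ContinuousOn.intervalIntegrable
      rw [uIcc_of_le zero_le_one]
      intro t ht
      have h3 := ((hball _ (hmem t ht)).fderiv.lin
        (ContinuousLinearMap.apply ℝ ℝ v)).continuousAt
      have h4 : ContinuousAt (fun t : ℝ => fderiv ℝ f (z - ((1 - t) * (l z - l a)) • v) v) t :=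
        ContinuousAt.comp (g := fun x => fderiv ℝ f x v)
          (f := fun t : ℝ => z - ((1 - t) * (l z - l a)) • v) h3 (by fun_prop)
      exact (continuousAt_const.mul h4).continuousWithinAt
    have := intervalIntegral.integral_eq_sub_of_hasDerivAt hd hi
    rw [intervalIntegral.integral_const_mul] at this
    simp only [sub_self, zero_mul, zero_smul, sub_zero, one_mul] at this
    linarith

end Q
end DC

namespace DC

open Set Filter Topology
open scoped ContDiff Nat

section QA
variable {M : ℕ → ℝ} [hM : Wt M]

theorem hasDerivAt_iter {f : ℝ → ℝ} {x : ℝ} (hf : ContDiffAt ℝ ∞ f x) (j : ℕ) :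
    HasDerivAt (iteratedDeriv j f) (iteratedDeriv (j+1) f x) x := by
  rw [iteratedDeriv_succ]
  have h1 : DifferentiableAt ℝ (iteratedFDeriv ℝ j f) x :=
    hf.differentiableAt_iteratedFDeriv (by exact_mod_cast WithTop.coe_lt_top _)
  rw [iteratedDeriv_eq_equiv_comp]
  exact (((ContinuousMultilinearMap.piFieldEquiv ℝ (Fin j) ℝ).symm.differentiable.differentiableAt).comp
    x h1).hasDerivAt

/-- Bang's step -/
theorem bang_step {m : ℕ → ℝ} (hm : ∀ k, 0 < m k)
    (hr : ∀ i j, i ≤ j → m (i+1) / m i ≤ m (j+1) / m j) {f : ℝ → ℝ}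
    (hf : ∀ x ∈ Icc (0:ℝ) 1, ContDiffAt ℝ ∞ f x)
    (hb : ∀ x ∈ Icc (0:ℝ) 1, ∀ k, |iteratedDeriv k f x| ≤ m k) (n : ℕ) {x y : ℝ}
    (hx : 0 ≤ x) (hxy : x ≤ y) (hy : y ≤ 1) (hyt : y ≤ x + m n / (Real.exp 1 * m (n+1)))
    (hP : ∀ j : ℕ, |iteratedDeriv j f x| ≤ Real.exp (j - (n+1:ℕ)) * m j) :
    ∀ j : ℕ, |iteratedDeriv j f y| ≤ Real.exp (j - (n:ℕ)) * m j := by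
  set ρ := m (n+1) / m n with hρ
  have hρ0 : 0 < ρ := div_pos (hm _) (hm _)
  set e := Real.exp 1 with he
  have he0 : 0 < e := Real.exp_pos 1
  have key : ∀ i j : ℕ, j + i = n + 1 → ∀ z ∈ Icc x y,
      |iteratedDeriv j f z| ≤ Real.exp (j - (n+1:ℕ)) * m j * Real.exp (e * ρ * (z - x)) := by
    intro i
    induction i with
    | zero =>
      intro j hj z hz
      obtain rfl : j = n + 1 := by omega
      refine (hb z ⟨hx.trans hz.1, hz.2.trans hy⟩ _).trans ?_
      rw [sub_self, Real.exp_zero, one_mul]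
      have : 1 ≤ Real.exp (e * ρ * (z - x)) := by
        apply Real.one_le_exp; have := sub_nonneg.2 hz.1; positivity
      nlinarith [hm (n+1)]
    | succ i ih =>
      intro j hj z hz
      have ih' := ih (j+1) (by omega)
      have hder : ∀ w ∈ Icc x y, HasDerivAt (iteratedDeriv j f) (iteratedDeriv (j+1) f w) w :=
        fun w hw => hasDerivAt_iter (hf w ⟨hx.trans hw.1, hw.2.trans hy⟩) j
      have := image_norm_le_of_norm_deriv_right_le_deriv_boundary (E := ℝ)
        (f := iteratedDeriv j f) (f' := iteratedDeriv (j+1) f) (a := x) (b := y)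
        (fun w hw => (hder w hw).continuousAt.continuousWithinAt)
        (fun w hw => (hder w ⟨hw.1, hw.2.le⟩).hasDerivWithinAt)
        (B := fun z => Real.exp (j - (n+1:ℕ)) * m j * Real.exp (e * ρ * (z - x)))
        (B' := fun z => Real.exp (j - (n+1:ℕ)) * m j * (Real.exp (e * ρ * (z - x)) * (e * ρ)))
        (by simpa using hP j)
        (fun w => by
          have d0 : HasDerivAt (fun z => e * ρ * (z - x)) (e * ρ) w := by
            simpa using ((hasDerivAt_id w).sub_const x).const_mul (e * ρ)
          exact d0.exp.const_mul _)
        (fun w hw => by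
          rw [Real.norm_eq_abs]
          refine (ih' w ⟨hw.1, hw.2.le⟩).trans ?_
          have h1 : m (j+1) ≤ ρ * m j := by
            have := hr j n (by omega)
            rwa [div_le_iff₀ (hm j)] at this
          have h2 : Real.exp (((j+1:ℕ):ℝ) - (n+1:ℕ)) = Real.exp (j - (n+1:ℕ)) * e := by
            rw [he, ← Real.exp_add]; congr 1; push_cast; ring
          rw [h2]
          calc _ ≤ Real.exp (j - (n+1:ℕ)) * e * (ρ * m j) * Real.exp (e * ρ * (w - x)) := by
                gcongr
            _ = _ := by ring)
        hz
      simpa [Real.norm_eq_abs] using this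
  intro j
  rcases Nat.lt_or_ge j (n+1) with h | h
  · refine (key (n+1-j) j (by omega) y ⟨hxy, le_rfl⟩).trans ?_
    have h1 : e * ρ * (y - x) ≤ 1 := by
      have : y - x ≤ m n / (e * m (n+1)) := by linarith
      calc e * ρ * (y - x) ≤ e * ρ * (m n / (e * m (n+1))) := by gcongr
        _ = 1 := by rw [hρ]; have := hm n; have := hm (n+1); field_simp
    have h2 : Real.exp (e * ρ * (y - x)) ≤ e := Real.exp_le_exp.2 h1
    have h3 : Real.exp ((j:ℝ) - (n:ℕ)) = Real.exp (j - (n+1:ℕ)) * e := by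
      rw [he, ← Real.exp_add]; congr 1; push_cast; ring
    rw [h3]
    have := hm j
    calc _ ≤ Real.exp (j - (n+1:ℕ)) * m j * e := by gcongr
      _ = _ := by ring
  · refine (hb y ⟨hx.trans hxy, hy⟩ j).trans ?_
    have : 1 ≤ Real.exp ((j:ℝ) - (n:ℕ)) := by
      apply Real.one_le_exp
      have : (n:ℝ) + 1 ≤ j := by exact_mod_cast h
      linarith
    nlinarith [hm j]

theorem denjoy_carleman {A B : ℝ} (hA : 0 < A) (hB : 0 < B) {f : ℝ → ℝ}
    (hf : ∀ x ∈ Icc (0:ℝ) 1, ContDiffAt ℝ ∞ f x)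
    (hb : ∀ x ∈ Icc (0:ℝ) 1, ∀ k, |iteratedDeriv k f x| ≤ A * B ^ k * k ! * M k)
    (h0 : ∀ k, iteratedDeriv k f 0 = 0) : ∀ y ∈ Icc (0:ℝ) 1, f y = 0 := by
  set m : ℕ → ℝ := fun k => A * B ^ k * k ! * M k with hmdef
  have hm : ∀ k, 0 < m k := fun k => by have := hM.pos k; simp only [hmdef]; positivity
  have hrat : ∀ i, m (i+1) / m i = B * ((i+1) * (M (i+1) / M i)) := by
    intro i
    have := hM.pos i
    have hi := hM.pos (i+1)
    simp only [hmdef]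
    rw [Nat.factorial_succ, pow_succ]
    push_cast
    field_simp
  have hr : ∀ i j, i ≤ j → m (i+1) / m i ≤ m (j+1) / m j := by
    intro i j hij
    rw [hrat, hrat]
    have h1 := ratio_mono (M := M) hij
    have h2 : (i:ℝ) ≤ j := by exact_mod_cast hij
    have := div_pos (hM.pos (i+1)) (hM.pos i)
    gcongr
  set τ : ℕ → ℝ := fun n => m n / (Real.exp 1 * m (n+1)) with hτ
  have hτ0 : ∀ n, 0 ≤ τ n := fun n => (div_pos (hm n) (mul_pos (Real.exp_pos 1) (hm _))).le
  have key : ∀ d k : ℕ, ∀ y ∈ Icc (0:ℝ) 1, y ≤ ∑ i ∈ Finset.range d, τ (k + i) →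
      ∀ j : ℕ, |iteratedDeriv j f y| ≤ Real.exp (j - (k:ℕ)) * m j := by
    intro d
    induction d with
    | zero =>
      intro k y hy hy' j
      obtain rfl : y = 0 := le_antisymm (by simpa using hy') hy.1
      rw [h0, abs_zero]
      exact mul_nonneg (Real.exp_pos _).le (hm j).le
    | succ d ih =>
      intro k y hy hy'
      rw [Finset.sum_range_succ'] at hy'
      set s := ∑ i ∈ Finset.range d, τ (k + 1 + i) with hs
      have hs' : ∑ i ∈ Finset.range d, τ (k + (i + 1)) = s :=
        Finset.sum_congr rfl fun i _ => by congr 1; ring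
      rw [hs', add_zero] at hy'
      have hs0 : 0 ≤ s := Finset.sum_nonneg fun i _ => hτ0 _
      refine bang_step hm hr hf hb k (x := min y s) (le_min hy.1 hs0) (min_le_left _ _) hy.2 ?_ ?_
      · change y ≤ min y s + τ k
        rcases min_choice y s with h | h <;> rw [h]
        · linarith [hτ0 k]
        · linarith
      · exact ih (k+1) (min y s) ⟨le_min hy.1 hs0, (min_le_left _ _).trans hy.2⟩ (min_le_right _ _)
  have hns : ¬ Summable τ := by
    intro hsum
    have h1 : ∀ k, M k / (((k:ℝ)+1) * M (k+1)) = (Real.exp 1 * B) * τ k := by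
      intro k
      have e1 : τ k = (Real.exp 1 * (m (k+1) / m k))⁻¹ := by
        simp only [hτ]; have := hm k; have := hm (k+1); field_simp
      rw [e1, hrat]
      have := hM.pos k
      have := hM.pos (k+1)
      have := Real.exp_pos 1
      field_simp
    have h2 : Summable fun k => M k / (((k:ℝ)+1) * M (k+1)) := by
      simp only [h1]; exact hsum.mul_left _
    have := hM.qa
    rw [← ENNReal.ofReal_tsum_of_nonneg (fun k => by
      rw [h1]; exact mul_nonneg (by positivity) (hτ0 k)) h2] at this
    exact ENNReal.ofReal_ne_top this
  intro y hy
  have hlim : Tendsto (fun k : ℕ => Real.exp ((0:ℕ) - (k:ℝ)) * m 0) atTop (𝓝 0) := by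
    have : Tendsto (fun k : ℕ => Real.exp (-(k:ℝ))) atTop (𝓝 0) :=
      Real.tendsto_exp_neg_atTop_nhds_zero.comp tendsto_natCast_atTop_atTop
    simpa using this.mul_const (m 0)
  have hle : ∀ k : ℕ, |f y| ≤ Real.exp ((0:ℕ) - (k:ℝ)) * m 0 := by
    intro k
    have hns' : ¬ Summable (fun i => τ (k + i)) := by
      have := (summable_nat_add_iff (f := τ) k).not.2 hns
      simpa [add_comm] using this
    have := (not_summable_iff_tendsto_nat_atTop_of_nonneg fun i => hτ0 (k+i)).1 hns'
    obtain ⟨d, hd⟩ := (this.eventually_ge_atTop y).exists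
    simpa using key d k y hy hd 0
  have := ge_of_tendsto' hlim hle
  exact abs_eq_zero.1 (le_antisymm this (abs_nonneg _))

variable {E F : Type} [NormedAddCommGroup E] [NormedSpace ℝ E]
  [NormedAddCommGroup F] [NormedSpace ℝ F]

theorem QAt.compact {g : E → F} {K : Set E} (hK : IsCompact K) (h : ∀ z ∈ K, QAt M g z) :
    ∃ A B : ℝ, 0 < A ∧ 0 < B ∧ ∀ z ∈ K, ContDiffAt ℝ ∞ g z ∧
      ∀ k : ℕ, ‖iteratedFDeriv ℝ k g z‖ ≤ A * B ^ k * k ! * M k := by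
  refine hK.induction_on (p := fun K => ∃ A B : ℝ, 0 < A ∧ 0 < B ∧ ∀ z ∈ K, ContDiffAt ℝ ∞ g z ∧
      ∀ k : ℕ, ‖iteratedFDeriv ℝ k g z‖ ≤ A * B ^ k * k ! * M k) ?_ ?_ ?_ ?_
  · exact ⟨1, 1, one_pos, one_pos, by simp⟩
  · rintro s t hst ⟨A, B, hA, hB, h⟩
    exact ⟨A, B, hA, hB, fun z hz => h z (hst hz)⟩
  · rintro s t ⟨A, B, hA, hB, h⟩ ⟨A', B', hA', hB', h'⟩
    refine ⟨A + A', B + B', by positivity, by positivity, ?_⟩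
    rintro z (hz | hz)
    · exact ⟨(h z hz).1, fun k => ((h z hz).2 k).trans
        (qmul hA.le hB.le (by linarith) (by linarith) k)⟩
    · exact ⟨(h' z hz).1, fun k => ((h' z hz).2 k).trans
        (qmul hA'.le hB'.le (by linarith) (by linarith) k)⟩
  · intro x hx
    obtain ⟨A, B, hA, hB, h⟩ := h x hx
    exact ⟨_, mem_nhdsWithin_of_mem_nhds h, A, B, hA, hB, fun z hz => hz⟩

theorem qa_seg {g : E → ℝ} {x y : E} (h : ∀ z ∈ segment ℝ x y, QAt M g z)
    (h0 : ∀ k, iteratedDeriv k (fun t : ℝ => g (x + t • (y - x))) 0 = 0) : g y = 0 := by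
  have hK : IsCompact (segment ℝ x y) := by
    rw [segment_eq_image']
    exact isCompact_Icc.image (by fun_prop)
  obtain ⟨A, B, hA, hB, hb⟩ := QAt.compact hK h
  set L : ℝ →L[ℝ] E := ContinuousLinearMap.toSpanSingleton ℝ (y - x)
  have hmem : ∀ t ∈ Icc (0:ℝ) 1, L t + x ∈ segment ℝ x y := by
    intro t ht
    rw [segment_eq_image']
    exact ⟨t, ht, by simp [L, add_comm]⟩
  have e : (fun t : ℝ => g (x + t • (y - x))) = fun t => g (L t + x) := by
    ext t; simp [L, add_comm]
  rw [e] at h0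
  have := denjoy_carleman (M := M) hA (B := B * (‖L‖ + 1)) (by positivity)
    (f := fun t => g (L t + x)) (fun t ht => by
      exact ContDiffAt.comp (f := fun t => L t + x) t (hb _ (hmem t ht)).1 (by fun_prop))
    (fun t ht k => by
      have h1 := norm_affine L x (hb _ (hmem t ht)).1 k
      rw [norm_iteratedFDeriv_eq_norm_iteratedDeriv, Real.norm_eq_abs] at h1
      refine h1.trans ?_
      have := hM.pos k
      calc _ ≤ (A * B ^ k * k ! * M k) * (‖L‖ + 1) ^ k := by
            gcongr
            · exact (hb _ (hmem t ht)).2 k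
            · linarith
        _ = _ := by rw [mul_pow]; ring)
    h0 1 (by simp)
  simpa [L] using this

theorem qa_ball {g : E → ℝ} {a : E} {r : ℝ} (h : ∀ z ∈ Metric.ball a r, QAt M g z) {x : E}
    (hx : x ∈ Metric.ball a r) (hg : g =ᶠ[𝓝 x] 0) : ∀ y ∈ Metric.ball a r, g y = 0 := by
  intro y hy
  refine qa_seg (x := x) (fun z hz => h z ((convex_ball a r).segment_subset hx hy hz)) fun k => ?_
  have hc : ContinuousAt (fun t : ℝ => x + t • (y - x)) 0 := by fun_prop
  have e : (fun t : ℝ => g (x + t • (y - x))) =ᶠ[𝓝 0] fun _ => 0 := by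
    have : ∀ᶠ z in 𝓝 ((fun t : ℝ => x + t • (y - x)) 0), g z = 0 := by
      simp only [zero_smul, add_zero]; exact hg
    exact hc.eventually this
  have := e.iteratedDeriv_eq k
  rw [this]; simp

theorem qa_domain {f h : E → ℝ} {c : E} (hf : QAt M f c) (hh : QAt M h c)
    (hz : ∀ᶠ x in 𝓝 c, f x * h x = 0) : (f =ᶠ[𝓝 c] 0) ∨ (h =ᶠ[𝓝 c] 0) := by
  obtain ⟨r, hr, hb⟩ := Metric.eventually_nhds_iff_ball.1 ((hf.eventually.and hh.eventually).and hz)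
  by_cases hf0 : ∀ x ∈ Metric.ball c r, f x = 0
  · left; filter_upwards [Metric.ball_mem_nhds c hr] with x hx using hf0 x hx
  · right
    push Not at hf0
    obtain ⟨x, hx, hfx⟩ := hf0
    have h1 : h =ᶠ[𝓝 x] 0 := by
      filter_upwards [(hb x hx).1.1.continuousAt.eventually_ne hfx,
        Metric.isOpen_ball.mem_nhds hx] with z hz hz'
      exact (mul_eq_zero.1 (hb z hz').2).resolve_left hz
    filter_upwards [Metric.ball_mem_nhds c hr] with y hy
      using qa_ball (fun z hz => (hb z hz).1.2) hx h1 y hy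

theorem qa_nonflat {g : E → ℝ} {a : E} (h : QAt M g a) (hg : ¬ g =ᶠ[𝓝 a] 0) :
    ∃ v : E, ∃ d : ℕ, iteratedDeriv d (fun t : ℝ => g (a + t • v)) 0 ≠ 0 := by
  by_contra hcon
  push Not at hcon
  obtain ⟨r, hr, hb⟩ := Metric.eventually_nhds_iff_ball.1 h.eventually
  refine hg ?_
  filter_upwards [Metric.ball_mem_nhds a hr] with y hy
  exact qa_seg (x := a) (fun z hz => hb z ((convex_ball a r).segment_subset
    (Metric.mem_ball_self hr) hy hz)) fun k => hcon (y - a) k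

end QA
end DC

namespace DC

open Set Filter Topology
open scoped ContDiff Nat

section mon
variable {m : ℕ}

/-- centered monomial -/
def mon (c : Fin m → ℝ) (α : Fin m → ℕ) (x : Fin m → ℝ) : ℝ := ∏ i, (x i - c i) ^ α i

theorem mon_zero (c x : Fin m → ℝ) : mon c 0 x = 1 := by simp [mon]

theorem mon_add (c : Fin m → ℝ) (α β : Fin m → ℕ) (x : Fin m → ℝ) :
    mon c (α + β) x = mon c α x * mon c β x := by
  simp [mon, pow_add, Finset.prod_mul_distrib]

theorem mon_single (c : Fin m → ℝ) (j : Fin m) (k : ℕ) (x : Fin m → ℝ) :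
    mon c (Pi.single j k) x = (x j - c j) ^ k := by
  unfold mon
  rw [Finset.prod_eq_single j]
  · simp
  · intro i _ hi; simp [hi]
  · simp

theorem mon_smul (c : Fin m → ℝ) (k : ℕ) (α : Fin m → ℕ) (x : Fin m → ℝ) :
    mon c (k • α) x = mon c α x ^ k := by
  simp only [mon, Pi.smul_apply, smul_eq_mul, ← Finset.prod_pow]
  exact Finset.prod_congr rfl fun i _ => by rw [mul_comm, pow_mul]

theorem mon_self_of_ne (c : Fin m → ℝ) {α : Fin m → ℕ} (h : α ≠ 0) : mon c α c = 0 := by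
  obtain ⟨i, hi⟩ : ∃ i, α i ≠ 0 := by
    by_contra hcon; push Not at hcon; exact h (funext hcon)
  exact Finset.prod_eq_zero (Finset.mem_univ i) (by simp [hi])

theorem mon_eq_zero {c : Fin m → ℝ} {α : Fin m → ℕ} {x : Fin m → ℝ} (h : mon c α x = 0) :
    ∃ i, x i = c i ∧ α i ≠ 0 := by
  obtain ⟨i, _, hi⟩ := Finset.prod_eq_zero_iff.1 h
  refine ⟨i, ?_, ?_⟩
  · exact sub_eq_zero.1 (pow_eq_zero_iff_of_pos_exp hi)
  · rintro h0; rw [h0] at hi; simp at hi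
where
  pow_eq_zero_iff_of_pos_exp {a : ℝ} {n : ℕ} (h : a ^ n = 0) : a = 0 := by
    by_contra hne; exact pow_ne_zero n hne h

theorem exists_near {c : Fin m → ℝ} {P : (Fin m → ℝ) → Prop} (h : ∀ᶠ x in 𝓝 c, P x)
    (w : Fin m → ℝ) : ∃ δ : ℝ, δ ≠ 0 ∧ P (c + δ • w) := by
  have hc : Tendsto (fun δ : ℝ => c + δ • w) (𝓝[≠] 0) (𝓝 c) := by
    have : ContinuousAt (fun δ : ℝ => c + δ • w) 0 := by fun_prop
    have h2 := this.tendsto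
    simp only [zero_smul, add_zero] at h2
    exact h2.mono_left nhdsWithin_le_nhds
  obtain ⟨δ, h1, h2⟩ := ((hc.eventually h).and self_mem_nhdsWithin).exists
  exact ⟨δ, h2, h1⟩

end mon

section NC
variable {M : ℕ → ℝ} [hM : Wt M] {m : ℕ}

theorem QAt.mon (c : Fin m → ℝ) (α : Fin m → ℕ) (a : Fin m → ℝ) : QAt M (mon c α) a :=
  QAt.prod fun i _ => ((QAt.coord i a).sub (QAt.const _ _)).pow _

/-- normal crossings at a point -/
def NCAt (M : ℕ → ℝ) {m : ℕ} (h : (Fin m → ℝ) → ℝ) (c : Fin m → ℝ) : Prop :=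
  ∃ (α : Fin m → ℕ) (u : (Fin m → ℝ) → ℝ), QAt M u c ∧ u c ≠ 0 ∧
    ∀ᶠ x in 𝓝 c, h x = mon c α x * u x

theorem NCAt.congr {h h' : (Fin m → ℝ) → ℝ} {c : Fin m → ℝ} (H : NCAt M h c) (e : h' =ᶠ[𝓝 c] h) :
    NCAt M h' c := by
  obtain ⟨α, u, hu, h0, he⟩ := H
  refine ⟨α, u, hu, h0, ?_⟩
  filter_upwards [e, he] with x h1 h2 using h1.trans h2

theorem NCAt.qat {h : (Fin m → ℝ) → ℝ} {c : Fin m → ℝ} (H : NCAt M h c) : QAt M h c := by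
  obtain ⟨α, u, hu, h0, he⟩ := H
  exact ((QAt.mon c α c).mul hu).congr he

theorem NCAt.mul {h h' : (Fin m → ℝ) → ℝ} {c : Fin m → ℝ} (H : NCAt M h c) (H' : NCAt M h' c) :
    NCAt M (fun x => h x * h' x) c := by
  obtain ⟨α, u, hu, h0, he⟩ := H
  obtain ⟨α', u', hu', h0', he'⟩ := H'
  refine ⟨α + α', _, hu.mul hu', mul_ne_zero h0 h0', ?_⟩
  filter_upwards [he, he'] with x h1 h2
  rw [h1, h2, mon_add]; ring

theorem NCAt.unit {h : (Fin m → ℝ) → ℝ} {c : Fin m → ℝ} (H : QAt M h c) (h0 : h c ≠ 0) :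
    NCAt M h c := ⟨0, h, H, h0, by simp [mon_zero]⟩

theorem NCAt.mon (c : Fin m → ℝ) (α : Fin m → ℕ) : NCAt M (mon c α) c :=
  ⟨α, fun _ => 1, QAt.const _ _, one_ne_zero, by simp⟩

theorem NCAt.pow {h : (Fin m → ℝ) → ℝ} {c : Fin m → ℝ} (H : NCAt M h c) (k : ℕ) :
    NCAt M (fun x => h x ^ k) c := by
  induction k with
  | zero => simpa using NCAt.unit (QAt.const (1:ℝ) c) one_ne_zero
  | succ k ih => simpa [pow_succ] using ih.mul H

theorem NCAt.eventually {h : (Fin m → ℝ) → ℝ} {c : Fin m → ℝ} (H : NCAt M h c) :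
    ∀ᶠ c' in 𝓝 c, NCAt M h c' := by
  obtain ⟨α, u, hu, h0, he⟩ := H
  filter_upwards [hu.eventually, hu.continuousAt.eventually_ne h0, he.eventually_nhds]
    with c' h1 h2 h3
  classical
  refine ⟨fun i => if c' i = c i then α i else 0,
    fun x => (∏ i, if c' i = c i then 1 else (x i - c i) ^ α i) * u x, ?_, ?_, ?_⟩
  · refine (QAt.prod fun i _ => ?_).mul h1
    by_cases h : c' i = c i
    · simp only [h, if_true]; exact QAt.const _ _
    · simp only [h, if_false]; exact ((QAt.coord i c').sub (QAt.const _ _)).pow _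
  · refine mul_ne_zero (Finset.prod_ne_zero_iff.2 fun i _ => ?_) h2
    split_ifs with h
    · exact one_ne_zero
    · exact pow_ne_zero _ (sub_ne_zero.2 h)
  · filter_upwards [h3] with x hx
    rw [hx, ← mul_assoc, DC.mon, DC.mon, ← Finset.prod_mul_distrib]
    congr 1
    refine Finset.prod_congr rfl fun i _ => ?_
    split_ifs with h
    · rw [h, mul_one]
    · rw [pow_zero, one_mul]

theorem not_ev_zero_coord (c : Fin m → ℝ) (j : Fin m) : ¬ ((fun x : Fin m → ℝ => x j - c j) =ᶠ[𝓝 c] 0) := by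
  intro h
  obtain ⟨δ, h1, h2⟩ := exists_near h 1
  simp at h2
  exact h1 h2

theorem cancel_coord {c : Fin m → ℝ} {j : Fin m} {A B : (Fin m → ℝ) → ℝ} (hA : QAt M A c)
    (hB : QAt M B c) (h : ∀ᶠ x in 𝓝 c, (x j - c j) * A x = (x j - c j) * B x) :
    ∀ᶠ x in 𝓝 c, A x = B x := by
  have := qa_domain (f := fun x => x j - c j) (h := fun x => A x - B x)
    ((QAt.coord j c).sub (QAt.const _ _)) (hA.sub hB) (h.mono fun x hx => by
      rw [mul_sub, hx, sub_self])
  rcases this with h | h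
  · exact absurd h (not_ev_zero_coord c j)
  · exact h.mono fun x hx => sub_eq_zero.1 hx

/-- restriction to a coordinate hyperplane -/
def restr (c : Fin m → ℝ) (j : Fin m) (x : Fin m → ℝ) : Fin m → ℝ :=
  x - (x j - c j) • Pi.single j (1:ℝ)

theorem restr_self (c : Fin m → ℝ) (j : Fin m) : restr c j c = c := by simp [restr]

theorem restr_apply_same (c : Fin m → ℝ) (j : Fin m) (x) : restr c j x j = c j := by simp [restr]

theorem restr_apply_ne (c : Fin m → ℝ) {i j : Fin m} (h : i ≠ j) (x) : restr c j x i = x i := by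
  simp [restr, h]

theorem QAt.restr (c : Fin m → ℝ) (j : Fin m) (a) : QAt M (restr c j) a :=
  (QAt.id a).sub (((QAt.coord j a).sub (QAt.const _ _)).smul (QAt.const _ _))

/-- If `f` vanishes on the hyperplane, it is divisible. -/
theorem divide_coord {c : Fin m → ℝ} {j : Fin m} {f : (Fin m → ℝ) → ℝ} (hf : QAt M f c)
    (h : ∀ᶠ x in 𝓝 c, f (restr c j x) = 0) :
    ∃ q, QAt M q c ∧ ∀ᶠ x in 𝓝 c, f x = (x j - c j) * q x := by
  obtain ⟨q, hq, e⟩ := qdivide (ContinuousLinearMap.proj j : (Fin m → ℝ) →L[ℝ] ℝ)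
    (Pi.single j (1:ℝ)) hf
  refine ⟨q, hq, ?_⟩
  filter_upwards [e, h] with x h1 h2
  simp only [ContinuousLinearMap.proj_apply] at h1
  rw [h1]
  unfold DC.restr at h2
  rw [h2, zero_add]

theorem NCAt.factor_aux (n : ℕ) : ∀ (c : Fin m → ℝ) (f h : (Fin m → ℝ) → ℝ) (α : Fin m → ℕ)
    (u : (Fin m → ℝ) → ℝ), ∑ i, α i = n → QAt M f c → QAt M h c → QAt M u c → u c ≠ 0 →
    (∀ᶠ x in 𝓝 c, f x * h x = DC.mon c α x * u x) → NCAt M f c := by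
  induction n with
  | zero =>
    intro c f h α u hα hf hh hu hu0 he
    have : α = 0 := by
      ext i
      have := (Finset.sum_eq_zero_iff.1 hα) i (Finset.mem_univ i)
      simpa using this
    subst this
    have h1 := he.self_of_nhds
    rw [mon_zero, one_mul] at h1
    refine NCAt.unit hf ?_
    intro h0; rw [h0, zero_mul] at h1; exact hu0 h1.symm
  | succ n ih =>
    intro c f h α u hα hf hh hu hu0 he
    obtain ⟨j, hj⟩ : ∃ j, α j ≠ 0 := by
      by_contra hcon; push Not at hcon
      simp [hcon] at hα
    have hα' : α = Pi.single j 1 + (α - Pi.single j 1) := by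
      ext i
      by_cases hi : i = j
      · subst hi; simp; omega
      · simp [hi]
    set α' := α - Pi.single j 1 with hα'def
    have hsum : ∑ i, α' i = n := by
      rw [hα'] at hα
      simp only [Pi.add_apply, Finset.sum_add_distrib, Finset.sum_pi_single',
        Finset.mem_univ, if_true] at hα
      omega
    have hmon : ∀ x, DC.mon c α x = (x j - c j) * DC.mon c α' x := by
      intro x
      conv_lhs => rw [hα', mon_add, mon_single, pow_one]
    have hcr : ContinuousAt (DC.restr c j) c := (QAt.restr (M := M) c j c).continuousAt
    have hz : ∀ᶠ x in 𝓝 c, f (DC.restr c j x) * h (DC.restr c j x) = 0 := by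
      have := hcr.eventually (p := fun y => f y * h y = DC.mon c α y * u y)
        (by rw [restr_self]; exact he)
      filter_upwards [this] with x hx
      rw [hx, hmon, restr_apply_same, sub_self, zero_mul, zero_mul]
    have hfr : QAt M (fun x => f (DC.restr c j x)) c :=
      QAt.comp (by rw [restr_self]; exact hf) (QAt.restr c j c)
    have hhr : QAt M (fun x => h (DC.restr c j x)) c :=
      QAt.comp (by rw [restr_self]; exact hh) (QAt.restr c j c)
    rcases qa_domain hfr hhr hz with h1 | h1
    · obtain ⟨q, hq, e⟩ := divide_coord hf h1
      have : NCAt M q c := by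
        refine ih c q h α' u hsum hq hh hu hu0 ?_
        refine cancel_coord (hq.mul hh) ((QAt.mon c α' c).mul hu) (j := j) ?_
        filter_upwards [he, e] with x h1 h2
        rw [h2, hmon] at h1
        linarith
      have h3 : NCAt M (fun x => DC.mon c (Pi.single j 1) x * q x) c := (NCAt.mon c _).mul this
      refine h3.congr ?_
      filter_upwards [e] with x hx
      rw [hx, mon_single, pow_one]
    · obtain ⟨q, hq, e⟩ := divide_coord hh h1
      refine ih c f q α' u hsum hf hq hu hu0 ?_
      refine cancel_coord (hf.mul hq) ((QAt.mon c α' c).mul hu) (j := j) ?_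
      filter_upwards [he, e] with x h1 h2
      rw [h2, hmon] at h1
      linarith

theorem NCAt.factor {c : Fin m → ℝ} {f h : (Fin m → ℝ) → ℝ} (hf : QAt M f c) (hh : QAt M h c)
    (H : NCAt M (fun x => f x * h x) c) : NCAt M f c := by
  obtain ⟨α, u, hu, h0, he⟩ := H
  exact NCAt.factor_aux _ c f h α u rfl hf hh hu h0 he

theorem NCAt.factor_right {c : Fin m → ℝ} {f h : (Fin m → ℝ) → ℝ} (hf : QAt M f c)
    (hh : QAt M h c) (H : NCAt M (fun x => f x * h x) c) : NCAt M h c :=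
  NCAt.factor hh hf (by simpa [mul_comm] using H)

theorem NCAt.factor_prod {ι : Type*} {s : Finset ι} {c : Fin m → ℝ} {f : ι → (Fin m → ℝ) → ℝ}
    (hf : ∀ i ∈ s, QAt M (f i) c) (H : NCAt M (fun x => ∏ i ∈ s, f i x) c) :
    ∀ i ∈ s, NCAt M (f i) c := by
  classical
  intro i hi
  refine NCAt.factor (hf i hi) (h := fun x => ∏ j ∈ s.erase i, f j x)
    (QAt.prod fun j hj => hf j (Finset.mem_of_mem_erase hj)) ?_
  have e : (fun x => f i x * ∏ j ∈ s.erase i, f j x) = fun x => ∏ j ∈ s, f j x := by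
    funext x; exact Finset.mul_prod_erase s (fun j => f j x) hi
  rw [e]; exact H

/-- If a sum of squares of normal crossings functions is normal crossings, then one of the
exponents is the smallest. -/
theorem NCAt.min_exp {ι : Type*} {s : Finset ι} (hs : s.Nonempty) {c : Fin m → ℝ}
    {A : ι → Fin m → ℕ} {u : ι → (Fin m → ℝ) → ℝ} (hu : ∀ i ∈ s, QAt M (u i) c)
    (hu0 : ∀ i ∈ s, u i c ≠ 0)
    (H : NCAt M (fun x => ∑ i ∈ s, (DC.mon c (A i) x * u i x) ^ 2) c) :
    ∃ i₀ ∈ s, ∀ i ∈ s, A i₀ ≤ A i := by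
  set β : Fin m → ℕ := fun j => s.inf' hs (fun i => A i j) with hβ
  have hβle : ∀ i ∈ s, β ≤ A i := fun i hi j => Finset.inf'_le (fun i => A i j) hi
  have hA : ∀ i ∈ s, A i = β + (A i - β) := fun i hi => (add_tsub_cancel_of_le (hβle i hi)).symm
  set D' : (Fin m → ℝ) → ℝ := fun x => ∑ i ∈ s, (DC.mon c (A i - β) x * u i x) ^ 2 with hD'
  have hD'q : QAt M D' c := QAt.sum fun i hi => ((QAt.mon c _ c).mul (hu i hi)).pow 2
  have heq : ∀ x, ∑ i ∈ s, (DC.mon c (A i) x * u i x) ^ 2 = DC.mon c (2 • β) x * D' x := by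
    intro x
    rw [hD', Finset.mul_sum]
    refine Finset.sum_congr rfl fun i hi => ?_
    conv_lhs => rw [hA i hi, mon_add]
    rw [mon_smul]; ring
  simp only [heq] at H
  obtain ⟨γ, w, hw, hw0, he⟩ := NCAt.factor_right (QAt.mon c _ c) hD'q H
  have hγ : γ = 0 := by
    by_contra hne
    obtain ⟨j, hj⟩ : ∃ j, γ j ≠ 0 := by
      by_contra hcon; push Not at hcon; exact hne (funext hcon)
    obtain ⟨i, hi, hij⟩ := Finset.exists_mem_eq_inf' hs (fun i => A i j)
    have hui := (hu i hi).continuousAt.eventually_ne (hu0 i hi)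
    obtain ⟨δ, hδ, h1, h2⟩ := exists_near (he.and hui) (fun k => if k = j then 0 else 1)
    set x := c + δ • (fun k => if k = j then (0:ℝ) else 1) with hx
    have hxj : x j = c j := by simp [hx]
    have hz : DC.mon c γ x = 0 :=
      Finset.prod_eq_zero (Finset.mem_univ j) (by rw [hxj, sub_self, zero_pow hj])
    rw [hz, zero_mul, hD'] at h1
    have h3 := (Finset.sum_eq_zero_iff_of_nonneg (fun i _ => sq_nonneg _)).1 h1 i hi
    have h4 := (mul_eq_zero.1 (pow_eq_zero_iff (two_ne_zero) |>.1 h3)).resolve_right h2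
    obtain ⟨k, hk, hk'⟩ := mon_eq_zero h4
    by_cases hkj : k = j
    · subst hkj
      apply hk'
      simp only [Pi.sub_apply]
      have : β k = A i k := hij
      omega
    · simp [hx, hkj] at hk
      exact hδ hk
  have hDc : D' c ≠ 0 := by
    have := he.self_of_nhds
    rw [this, hγ, mon_zero, one_mul]; exact hw0
  obtain ⟨i₀, hi₀, hne⟩ := Finset.exists_ne_zero_of_sum_ne_zero hDc
  refine ⟨i₀, hi₀, fun i hi => ?_⟩
  have : A i₀ - β = 0 := by
    by_contra h
    exact hne (by rw [mon_self_of_ne c h]; simp)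
  have h2 := hA i₀ hi₀
  rw [this, add_zero] at h2
  rw [h2]; exact hβle i hi

end NC
end DC

namespace DC

open Set Filter Topology
open scoped ContDiff Nat

section Cov
variable {Y Z : Type} [NormedAddCommGroup Y] [NormedSpace ℝ Y] [NormedAddCommGroup Z]
  [NormedSpace ℝ Z]

/-- Sets covered by finitely many compact normal crossings charts for `g`. -/
inductive Cov (M : ℕ → ℝ) (N : ℕ) {Y : Type} [NormedAddCommGroup Y] [NormedSpace ℝ Y]
    (g : Y → ℝ) : Set Y → Prop
  | chart (f : (Fin N → ℝ) → Y) (K : Set (Fin N → ℝ)) (hK : IsCompact K)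
      (h : ∀ c ∈ K, QAt M f c ∧ NCAt M (fun x => g (f x)) c) : Cov M N g (f '' K)
  | empty : Cov M N g ∅
  | union (S T : Set Y) (hS : Cov M N g S) (hT : Cov M N g T) : Cov M N g (S ∪ T)
  | mono (S T : Set Y) (hS : Cov M N g S) (hT : T ⊆ S) : Cov M N g T

/-- `g` can be resolved near `a`. -/
def Res (M : ℕ → ℝ) (N : ℕ) (g : Y → ℝ) (a : Y) : Prop := ∃ S ∈ 𝓝 a, Cov M N g S

variable {M : ℕ → ℝ} [hM : Wt M] {N : ℕ}

theorem Res.eventually {g : Y → ℝ} {a : Y} (h : Res M N g a) : ∀ᶠ x in 𝓝 a, Res M N g x := by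
  obtain ⟨S, hS, hc⟩ := h
  filter_upwards [eventually_mem_nhds_iff.2 hS] with x hx using ⟨S, hx, hc⟩

theorem Cov.push {h : Z → ℝ} {g : Y → ℝ} {ψ : Z → Y} {C : Set Z} (hC : IsCompact C)
    (hψ : ∀ c ∈ C, QAt M ψ c ∧ h =ᶠ[𝓝 c] fun z => g (ψ z)) {S : Set Z} (hS : Cov M N h S) :
    Cov M N g (ψ '' (S ∩ C)) := by
  induction hS with
  | chart f K hK hf =>
    have hcont : ContinuousOn f K := fun c hc => (hf c hc).1.continuousAt.continuousWithinAt
    have hK' : IsCompact (K ∩ f ⁻¹' C) :=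
      hK.of_isClosed_subset (hcont.preimage_isClosed_of_isClosed hK.isClosed hC.isClosed)
        inter_subset_left
    refine Cov.mono _ _ (Cov.chart (fun x => ψ (f x)) (K ∩ f ⁻¹' C) hK' ?_) ?_
    · rintro c ⟨hc, hfc⟩
      have h1 := hψ _ hfc
      refine ⟨QAt.comp h1.1 (hf c hc).1, (hf c hc).2.congr ?_⟩
      exact ((hf c hc).1.continuousAt.eventually h1.2).mono fun x hx => hx.symm
    · rintro _ ⟨_, ⟨⟨x, hx, rfl⟩, hxC⟩, rfl⟩
      exact ⟨x, ⟨hx, hxC⟩, rfl⟩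
  | empty => simpa using Cov.empty
  | union S T _ _ h1 h2 =>
    rw [union_inter_distrib_right, image_union]; exact Cov.union _ _ h1 h2
  | mono S T _ hT h1 => exact Cov.mono _ _ h1 (image_mono (inter_subset_inter_left _ hT))

theorem Cov.compact [LocallyCompactSpace Z] {g : Y → ℝ} {ψ : Z → Y} {K : Set Z} (hK : IsCompact K)
    (h : ∀ c ∈ K, QAt M ψ c ∧ Res M N (fun z => g (ψ z)) c) : Cov M N g (ψ '' K) := by
  have : Cov M N g (ψ '' (K ∩ K)) := by
    refine hK.induction_on (p := fun T => Cov M N g (ψ '' (T ∩ K))) ?_ ?_ ?_ ?_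
    · simpa using Cov.empty
    · intro s t hst ht
      exact Cov.mono _ _ ht (image_mono (inter_subset_inter_left _ hst))
    · intro s t hs ht
      rw [union_inter_distrib_right, image_union]; exact Cov.union _ _ hs ht
    · intro x hx
      obtain ⟨S, hS, hcov⟩ := (h x hx).2
      refine ⟨S, mem_nhdsWithin_of_mem_nhds hS, ?_⟩
      exact hcov.push hK fun c hc => ⟨(h c hc).1, EventuallyEq.rfl⟩
  simpa using this

theorem Res.of_map [LocallyCompactSpace Z] {g : Y → ℝ} {h : Z → ℝ} {ψ : Z → Y} {c : Z}
    (hψ : QAt M ψ c) (e : h =ᶠ[𝓝 c] fun z => g (ψ z)) (hr : Res M N h c)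
    (hmap : 𝓝 (ψ c) ≤ map ψ (𝓝 c)) : Res M N g (ψ c) := by
  obtain ⟨S, hS, hcov⟩ := hr
  obtain ⟨C, hC, hsub, hcpt⟩ := local_compact_nhds (hψ.eventually.and e.eventuallyEq_nhds)
  refine ⟨ψ '' (S ∩ C), hmap (image_mem_map (inter_mem hS hC)), hcov.push hcpt fun c hc => hsub hc⟩

theorem Res.congr [LocallyCompactSpace Y] {g h : Y → ℝ} {c : Y} (hr : Res M N h c)
    (e : g =ᶠ[𝓝 c] h) : Res M N g c :=
  Res.of_map (ψ := fun x => x) (QAt.id c) e.symm hr (by rw [map_id'])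

theorem Res.of_equiv [LocallyCompactSpace Z] {g : Y → ℝ} (L : Z ≃L[ℝ] Y) {c : Z}
    (hr : Res M N (fun z => g (L z)) c) : Res M N g (L c) :=
  Res.of_map (ψ := fun x => L x) (QAt.clm (L : Z →L[ℝ] Y) c) EventuallyEq.rfl hr
    (L.toHomeomorph.map_nhds_eq c).ge

theorem Res.of_NC {m : ℕ} {g : (Fin m → ℝ) → ℝ} {c : Fin m → ℝ} (h : NCAt M g c) :
    Res M m g c := by
  obtain ⟨C, hC, hsub, hcpt⟩ := local_compact_nhds h.eventually
  refine ⟨C, hC, ?_⟩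
  have := Cov.chart (M := M) (g := g) (fun x => x) C hcpt fun c hc => ⟨QAt.id c, hsub hc⟩
  simpa using this

/-- splitting the first coordinate -/
noncomputable def splitL (m : ℕ) : (Fin (m+1) → ℝ) ≃L[ℝ] (Fin m → ℝ) × ℝ :=
  LinearEquiv.toContinuousLinearEquiv
  { toFun := fun x => (fun i => x i.succ, x 0)
    invFun := fun z => Fin.cons z.2 z.1
    map_add' := fun x y => rfl
    map_smul' := fun c x => rfl
    left_inv := fun x => by
      funext i
      refine Fin.cases ?_ (fun i => ?_) i <;> simp
    right_inv := fun z => by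
      ext <;> simp }

theorem splitL_apply (m : ℕ) (x) : splitL m x = (fun i => x i.succ, x 0) := rfl

theorem Res.of_NC2 {m : ℕ} {G : (Fin m → ℝ) × ℝ → ℝ} {c : Fin m → ℝ} {y : ℝ} {α : Fin m → ℕ} {k : ℕ}
    {u : (Fin m → ℝ) × ℝ → ℝ} (hu : QAt M u (c, y)) (hu0 : u (c, y) ≠ 0)
    (h : ∀ᶠ z in 𝓝 (c, y), G z = mon c α z.1 * (z.2 - y) ^ k * u z) : Res M (m+1) G (c, y) := by
  obtain ⟨x, hx⟩ := (splitL m).surjective (c, y)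
  rw [← hx] at h hu hu0 ⊢
  refine Res.of_equiv (splitL m) (Res.of_NC ⟨Fin.cons k α, fun x => u (splitL m x),
    QAt.comp hu (QAt.clm ((splitL m : (Fin (m+1) → ℝ) ≃L[ℝ] (Fin m → ℝ) × ℝ) : (Fin (m+1) → ℝ) →L[ℝ] (Fin m → ℝ) × ℝ) x), hu0, ?_⟩)
  have hcont : ContinuousAt (splitL m) x := (splitL m).continuous.continuousAt
  filter_upwards [hcont.eventually h] with w hw
  rw [hw, mon, mon, Fin.prod_univ_succ]
  rw [splitL_apply, Prod.mk.injEq] at hx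
  simp only [Fin.cons_zero, Fin.cons_succ, splitL_apply, ← hx.1, ← hx.2]
  ring

theorem Res.lift {m : ℕ} {P : (Fin m → ℝ) → ℝ} {a : Fin m → ℝ} {b : ℝ}
    {G : (Fin m → ℝ) × ℝ → ℝ} (hP : Res M m P a) {V : Set (Fin m → ℝ)} (hV : V ∈ 𝓝 a) {ε : ℝ}
    (hε : 0 < ε)
    (h : ∀ (f : (Fin m → ℝ) → Fin m → ℝ) c, QAt M f c → f c ∈ V → NCAt M (fun x => P (f x)) c →
      ∀ y ∈ Icc (b - ε) (b + ε), Res M (m+1) (fun z => G (f z.1, z.2)) (c, y)) :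
    Res M (m+1) G (a, b) := by
  obtain ⟨S, hS, hcov⟩ := hP
  obtain ⟨C, hC, hsub, hcpt⟩ := local_compact_nhds hV
  have key : ∀ S, Cov M m P S → Cov M (m+1) G ((S ∩ C) ×ˢ Icc (b - ε) (b + ε)) := by
    intro S hS
    induction hS with
    | chart f K hK hf =>
      have hcont : ContinuousOn f K := fun c hc => (hf c hc).1.continuousAt.continuousWithinAt
      have hK' : IsCompact (K ∩ f ⁻¹' C) :=
        hK.of_isClosed_subset (hcont.preimage_isClosed_of_isClosed hK.isClosed hcpt.isClosed)
          inter_subset_left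
      refine Cov.mono _ _ (Cov.compact (g := G) (ψ := fun z : (Fin m → ℝ) × ℝ => (f z.1, z.2))
        (hK'.prod (isCompact_Icc (a := b - ε) (b := b + ε))) ?_) ?_
      · rintro ⟨c, y⟩ ⟨⟨hc, hfc⟩, hy⟩
        refine ⟨?_, h f c (hf c hc).1 (hsub hfc) (hf c hc).2 y hy⟩
        exact (QAt.comp (g := f) (f := fun z : (Fin m → ℝ) × ℝ => z.1) (hf c hc).1
          (QAt.id _).fst).prodMk (QAt.id _).snd
      · rintro ⟨_, y⟩ ⟨⟨⟨x, hx, rfl⟩, hxC⟩, hy⟩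
        exact ⟨(x, y), ⟨⟨hx, hxC⟩, hy⟩, rfl⟩
    | empty => simpa using Cov.empty
    | union S T _ _ h1 h2 =>
      rw [union_inter_distrib_right, union_prod]; exact Cov.union _ _ h1 h2
    | mono S T _ hT h1 =>
      exact Cov.mono _ _ h1 (prod_mono (inter_subset_inter_left _ hT) le_rfl)
  refine ⟨_, ?_, key S hcov⟩
  exact prod_mem_nhds (inter_mem hS hC) (Icc_mem_nhds (by linarith) (by linarith))

end Cov
end DC

namespace DC

open Set Filter Topology
open scoped ContDiff Nat

section dy
variable {E : Type} [NormedAddCommGroup E] [NormedSpace ℝ E]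

/-- derivative in the last variable -/
noncomputable def dy (g : E × ℝ → ℝ) : E × ℝ → ℝ := fun z => fderiv ℝ g z (0, 1)

variable {M : ℕ → ℝ} [hM : Wt M]

theorem QAt.dy {g : E × ℝ → ℝ} {z : E × ℝ} (h : QAt M g z) : QAt M (dy g) z :=
  QAt.lin (ContinuousLinearMap.apply ℝ ℝ ((0, 1) : E × ℝ)) h.fderiv

theorem QAt.dyn {g : E × ℝ → ℝ} {z : E × ℝ} (h : QAt M g z) (k : ℕ) : QAt M (DC.dy^[k] g) z := by
  induction k with
  | zero => exact h
  | succ k ih => rw [Function.iterate_succ_apply']; exact ih.dy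

theorem hasDerivAt_fiber {g : E × ℝ → ℝ} {x : E} {y : ℝ} (h : QAt M g (x, y)) :
    HasDerivAt (fun y => g (x, y)) (DC.dy g (x, y)) y := by
  have h1 : HasDerivAt (fun y : ℝ => (x, y)) ((0 : E), (1 : ℝ)) y :=
    (hasDerivAt_const y x).prodMk (hasDerivAt_id y)
  exact h.differentiableAt.hasFDerivAt.comp_hasDerivAt y h1

theorem dyn_eq (k : ℕ) : ∀ {g : E × ℝ → ℝ} {x : E} {y : ℝ}, QAt M g (x, y) →
    DC.dy^[k] g (x, y) = iteratedDeriv k (fun y => g (x, y)) y := by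
  induction k with
  | zero => intro g x y h; simp
  | succ k ih =>
    intro g x y h
    rw [Function.iterate_succ_apply, ih h.dy, iteratedDeriv_succ']
    apply Filter.EventuallyEq.iteratedDeriv_eq
    have hc : ContinuousAt (fun y : ℝ => (x, y)) y := by fun_prop
    filter_upwards [hc.eventually h.eventually] with y' hy'
    exact (hasDerivAt_fiber hy').deriv.symm

/-- transport of the fiber derivative -/
theorem dyn_congr {E' : Type} [NormedAddCommGroup E'] [NormedSpace ℝ E'] {g : E × ℝ → ℝ}
    {g' : E' × ℝ → ℝ} {x : E} {x' : E'} {y y' s : ℝ} (h : QAt M g (x, y)) (h' : QAt M g' (x', y'))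
    (hs : y = s + y') (e : ∀ᶠ t in 𝓝 y', g' (x', t) = g (x, s + t)) (k : ℕ) :
    DC.dy^[k] g' (x', y') = DC.dy^[k] g (x, y) := by
  rw [dyn_eq k h, dyn_eq k h', Filter.EventuallyEq.iteratedDeriv_eq k e,
    iteratedDeriv_comp_const_add k (fun t => g (x, t)) s, hs]

theorem taylor_coeff (k : ℕ) : ∀ (n : ℕ) (c : ℕ → ℝ) (G F : ℝ → ℝ), k < n → ContDiffAt ℝ ∞ G 0 →
    (∀ᶠ y in 𝓝 0, F y = ∑ i ∈ Finset.range n, c i * y ^ i + y ^ n * G y) →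
    iteratedDeriv k F 0 = k ! * c k := by
  induction k with
  | zero =>
    intro n c G F hk hG he
    obtain ⟨n, rfl⟩ : ∃ k, n = k + 1 := ⟨n - 1, by omega⟩
    have := he.self_of_nhds
    simp [Finset.sum_range_succ', this]
  | succ k ih =>
    intro n c G F hk hG he
    obtain ⟨n, rfl⟩ : ∃ k, n = k + 1 := ⟨n - 1, by omega⟩
    rw [iteratedDeriv_succ']
    have hG' : ContDiffAt ℝ ∞ (deriv G) 0 := by
      exact hG.derivWithin (by simp)
    rw [ih n (fun i => c (i+1) * (i+1)) (fun y => (n+1) * G y + y * deriv G y) _ (by omega)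
      (by fun_prop)]
    · push_cast [Nat.factorial_succ]; ring
    · have hev : ∀ᶠ y in 𝓝 (0:ℝ), DifferentiableAt ℝ G y := by
        have := (hG.of_le (m := 1) (by simp)).eventually (by simp)
        exact this.mono fun y hy => hy.differentiableAt (by simp)
      filter_upwards [hev, he.eventually_nhds] with y h1 h2
      rw [Filter.EventuallyEq.deriv_eq h2]
      have h3 : HasDerivAt (fun y => ∑ i ∈ Finset.range (n+1), c i * y ^ i + y ^ (n+1) * G y)
        (∑ i ∈ Finset.range (n+1), c i * (i * y ^ (i-1)) +
          (((n+1 : ℕ) : ℝ) * y ^ (n+1-1) * G y + y ^ (n+1) * deriv G y)) y := by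
        refine HasDerivAt.add (HasDerivAt.fun_sum fun i _ => (hasDerivAt_pow i y).const_mul _) ?_
        exact (hasDerivAt_pow (n+1) y).mul h1.hasDerivAt
      rw [h3.deriv, Finset.sum_range_succ']
      simp only [Nat.cast_zero, zero_mul, mul_zero, add_zero, Nat.add_sub_cancel]
      push_cast
      rw [pow_succ y n]
      have : ∀ i, c (i + 1) * (((i:ℝ) + 1) * y ^ i) = c (i+1) * (i+1) * y ^ i := fun i => by ring
      simp only [this]
      ring

theorem poly_deriv (e : ℕ) : ∀ (c : ℕ → ℝ) (C z : ℝ),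
    iteratedDeriv e (fun z => ∑ i ∈ Finset.range e, c i * z ^ i + C * z ^ (e+1)) z
      = C * (e+1)! * z := by
  induction e with
  | zero => intro c C z; simp
  | succ e ih =>
    intro c C z
    rw [iteratedDeriv_succ']
    have : deriv (fun z => ∑ i ∈ Finset.range (e+1), c i * z ^ i + C * z ^ (e+1+1))
      = fun z => ∑ i ∈ Finset.range e, (c (i+1) * (i+1)) * z ^ i + (C * (e+2)) * z ^ (e+1) := by
      funext y
      have h3 : HasDerivAt (fun z => ∑ i ∈ Finset.range (e+1), c i * z ^ i + C * z ^ (e+1+1))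
        (∑ i ∈ Finset.range (e+1), c i * (i * y ^ (i-1)) +
          C * (((e+1+1 : ℕ) : ℝ) * y ^ (e+1+1-1))) y := by
        refine HasDerivAt.add (HasDerivAt.fun_sum fun i _ => (hasDerivAt_pow i y).const_mul _) ?_
        exact (hasDerivAt_pow (e+1+1) y).const_mul _
      rw [h3.deriv, Finset.sum_range_succ']
      simp only [Nat.cast_zero, zero_mul, mul_zero, add_zero, Nat.add_sub_cancel]
      push_cast
      have : ∀ i, c (i + 1) * (((i:ℝ) + 1) * y ^ i) = c (i+1) * (i+1) * y ^ i := fun i => by ring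
      simp only [this]
      ring
    rw [this, ih]
    push_cast [Nat.factorial_succ]; ring

theorem qtaylor {g : E × ℝ → ℝ} {a : E} (hg : QAt M g (a, 0)) (n : ℕ) :
    ∃ (A : ℕ → E → ℝ) (q : E × ℝ → ℝ), (∀ i, QAt M (A i) a) ∧ QAt M q (a, 0) ∧
      ∀ᶠ z in 𝓝 (a, (0:ℝ)), g z = ∑ i ∈ Finset.range n, A i z.1 * z.2 ^ i + z.2 ^ n * q z := by
  induction n with
  | zero => exact ⟨fun _ _ => 0, g, fun _ => QAt.const _ _, hg, by simp⟩
  | succ n ih =>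
    obtain ⟨A, q, hA, hq, he⟩ := ih
    obtain ⟨q', hq', he'⟩ := qdivide (ContinuousLinearMap.snd ℝ E ℝ) ((0, 1) : E × ℝ) hq
    have hA' : QAt M (fun x => q (x, 0)) a :=
      QAt.comp (g := q) (f := fun x => (x, (0:ℝ))) hq ((QAt.id a).prodMk (QAt.const _ _))
    classical
    refine ⟨fun i => if i = n then fun x => q (x, 0) else A i, q', fun i => ?_, hq', ?_⟩
    · by_cases h : i = n
      · simpa [h] using hA'
      · simpa [h] using hA i
    · filter_upwards [he, he'] with z h1 h2
      rw [h1, h2, Finset.sum_range_succ]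
      have : ∀ i ∈ Finset.range n, (if i = n then fun x => q (x, 0) else A i) z.1 * z.2 ^ i
          = A i z.1 * z.2 ^ i := by
        intro i hi
        rw [if_neg (by have := Finset.mem_range.1 hi; omega)]
      rw [Finset.sum_congr rfl this]
      have hz : z - z.2 • ((0:E), (1:ℝ)) = (z.1, 0) := by ext <;> simp
      simp only [ContinuousLinearMap.coe_snd', sub_zero, hz, if_true]
      ring

theorem taylor_dyn {g : E × ℝ → ℝ} {x : E} (hg : QAt M g (x, 0)) {n k : ℕ} (hk : k < n)
    {A : ℕ → E → ℝ} {q : E × ℝ → ℝ} (hq : QAt M q (x, 0))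
    (he : ∀ᶠ z in 𝓝 (x, (0:ℝ)), g z = ∑ i ∈ Finset.range n, A i z.1 * z.2 ^ i + z.2 ^ n * q z) :
    DC.dy^[k] g (x, 0) = k ! * A k x := by
  rw [dyn_eq k hg]
  have hc : ContinuousAt (fun y : ℝ => (x, y)) 0 := by fun_prop
  refine taylor_coeff k n (fun i => A i x) (fun y => q (x, y)) _ hk ?_ (hc.eventually he)
  exact ContDiffAt.comp (0:ℝ) (g := q) (f := fun y : ℝ => (x, y)) hq.contDiffAt (by fun_prop)

theorem fiber_ne {g : E × ℝ → ℝ} {x : E} {ε y : ℝ} {k : ℕ}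
    (hg : ∀ y ∈ Icc (-ε) ε, QAt M g (x, y)) (h0 : DC.dy^[k] g (x, 0) = 0)
    (h1 : ∀ y ∈ Icc (-ε) ε, DC.dy^[k+1] g (x, y) ≠ 0) (hy : y ∈ Icc (-ε) ε) (hy0 : y ≠ 0) :
    DC.dy^[k] g (x, y) ≠ 0 := by
  intro hyz
  have h00 : (0:ℝ) ∈ Icc (-ε) ε := by
    have := hy.1.trans hy.2
    constructor <;> linarith
  have hd : ∀ t ∈ Icc (-ε) ε, HasDerivAt (fun y => DC.dy^[k] g (x, y)) (DC.dy^[k+1] g (x, t)) t := by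
    intro t ht
    rw [Function.iterate_succ_apply']
    exact hasDerivAt_fiber ((hg t ht).dyn k)
  rcases lt_or_gt_of_ne hy0 with h | h
  · have hsub : Icc y 0 ⊆ Icc (-ε) ε := Icc_subset_Icc hy.1 h00.2
    obtain ⟨t, ht, e⟩ := exists_hasDerivAt_eq_zero h
      (fun t ht => (hd t (hsub ht)).continuousAt.continuousWithinAt) (hyz.trans h0.symm)
      (fun t ht => hd t (hsub (Ioo_subset_Icc_self ht)))
    exact h1 t (hsub (Ioo_subset_Icc_self ht)) e
  · have hsub : Icc 0 y ⊆ Icc (-ε) ε := Icc_subset_Icc h00.1 hy.2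
    obtain ⟨t, ht, e⟩ := exists_hasDerivAt_eq_zero h
      (fun t ht => (hd t (hsub ht)).continuousAt.continuousWithinAt) (h0.trans hyz.symm)
      (fun t ht => hd t (hsub (Ioo_subset_Icc_self ht)))
    exact h1 t (hsub (Ioo_subset_Icc_self ht)) e

end dy
end DC

namespace DC

open Set Filter Topology
open scoped ContDiff Nat

section ML
variable {M : ℕ → ℝ} [hM : Wt M] {m : ℕ}

/-- The inductive claim. -/
def NP (M : ℕ → ℝ) (m d : ℕ) : Prop :=
  ∀ (a : Fin m → ℝ) (b : ℝ) (p : (Fin m → ℝ) → ℝ) (g : (Fin m → ℝ) × ℝ → ℝ),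
    QAt M p a → ¬ p =ᶠ[𝓝 a] 0 → QAt M g (a, b) → DC.dy^[d] g (a, b) ≠ 0 →
    Res M (m+1) (fun z => p z.1 * g z) (a, b)

theorem NCAt.not_zero {h : (Fin m → ℝ) → ℝ} {c : Fin m → ℝ} (H : NCAt M h c) :
    ¬ h =ᶠ[𝓝 c] 0 := by
  obtain ⟨α, u, hu, hu0, he⟩ := H
  intro hz
  obtain ⟨δ, hδ, ⟨h1, h2⟩, h3⟩ :=
    exists_near ((he.and hz).and (hu.continuousAt.eventually_ne hu0)) 1
  rw [h2] at h1
  have := (mul_eq_zero.1 h1.symm).resolve_right h3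
  obtain ⟨i, hi, _⟩ := mon_eq_zero this
  simp at hi
  exact hδ hi

theorem ev_box {X : Type} [NormedAddCommGroup X] {a : X} {b : ℝ} {Q : X × ℝ → Prop}
    (h : ∀ᶠ z in 𝓝 (a, b), Q z) : ∃ ε > 0, ∀ x ∈ Metric.closedBall a ε,
      ∀ y ∈ Icc (b - ε) (b + ε), Q (x, y) := by
  obtain ⟨ε, hε, hs⟩ := Metric.nhds_basis_closedBall.mem_iff.1 h
  refine ⟨ε, hε, fun x hx y hy => hs ?_⟩
  rw [← closedBall_prod_same]
  refine ⟨hx, ?_⟩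
  rw [Real.closedBall_eq_Icc]; exact hy

/-- scaling one coordinate -/
def sc (j : Fin m) (z : (Fin m → ℝ) × ℝ) : Fin m → ℝ := fun i => (if i = j then z.2 else 1) * z.1 i

theorem mon_sc (j : Fin m) (α : Fin m → ℕ) (z) : mon 0 α (sc j z) = z.2 ^ α j * mon 0 α z.1 := by
  simp only [mon, sc, Pi.zero_apply, sub_zero, mul_pow, Finset.prod_mul_distrib, ite_pow, one_pow]
  simp

theorem QAt.sc (j : Fin m) (z) : QAt M (sc j) z := by
  refine QAt.pi fun i => ?_
  have h1 : QAt M (fun z : (Fin m → ℝ) × ℝ => z.1 i) z := (QAt.id z).fst.apply i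
  by_cases h : i = j
  · simp only [DC.sc, h, if_true]; rw [h] at h1
    exact (QAt.id z).snd.mul h1
  · simpa only [DC.sc, h, if_false, one_mul] using h1

theorem QAt.comp_fst {f : (Fin m → ℝ) → ℝ} {z : (Fin m → ℝ) × ℝ} (h : QAt M f z.1) :
    QAt M (fun z : (Fin m → ℝ) × ℝ => f z.1) z :=
  QAt.comp (g := f) (f := fun z : (Fin m → ℝ) × ℝ => z.1) h (QAt.id z).fst

theorem main_lemma (e : ℕ) (H : ∀ d ≤ e, NP M m d) (n : ℕ) : ∀ (β : Fin m → ℕ)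
    (p : (Fin m → ℝ) → ℝ) (b : ℕ → (Fin m → ℝ) → ℝ) (v : (Fin m → ℝ) × ℝ → ℝ) (i₀ : ℕ),
    ∑ i, β i = n → NCAt M p 0 → (∀ i, QAt M (b i) 0) → QAt M v (0, 0) → v (0, 0) ≠ 0 → i₀ < e →
    b i₀ 0 ≠ 0 → Res M (m+1) (fun z => p z.1 * (∑ i ∈ Finset.range e,
      mon 0 ((e+1-i) • β) z.1 * b i z.1 * z.2 ^ i + z.2 ^ (e+1) * v z)) (0, 0) := by
  induction n with
  | zero =>
    intro β p b v i₀ hβ hp hb hv hv0 hi₀ hbi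
    have : β = 0 := by
      ext i
      simpa using (Finset.sum_eq_zero_iff.1 hβ) i (Finset.mem_univ i)
    subst this
    simp only [smul_zero, mon_zero, one_mul]
    have hq : QAt M (fun z : (Fin m → ℝ) × ℝ => z.2 * v z) (0, 0) := (QAt.id _).snd.mul hv
    have hg : QAt M (fun z : (Fin m → ℝ) × ℝ => ∑ i ∈ Finset.range e,
        b i z.1 * z.2 ^ i + z.2 ^ (e+1) * v z) (0, 0) :=
      (QAt.sum fun i _ => (QAt.comp_fst (z := (0, 0)) (hb i)).mul ((QAt.id _).snd.pow i)).add
        (((QAt.id _).snd.pow _).mul hv)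
    refine H i₀ hi₀.le 0 0 p _ hp.qat hp.not_zero hg ?_
    rw [taylor_dyn hg hi₀ (A := b) hq]
    · exact mul_ne_zero (by exact_mod_cast (Nat.factorial_pos _).ne') hbi
    · exact Eventually.of_forall fun z => by rw [pow_succ]; ring
  | succ n ih =>
    intro β p b v i₀ hβ hp hb hv hv0 hi₀ hbi
    obtain ⟨j, hj⟩ : ∃ j, β j ≠ 0 := by
      by_contra hcon; push Not at hcon
      simp [hcon] at hβ
    have hβ' : β = Pi.single j 1 + (β - Pi.single j 1) := by
      ext i
      by_cases hi : i = j
      · subst hi; simp; omega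
      · simp [hi]
    set β' := β - Pi.single j 1 with hβ'def
    have hsum : ∑ i, β' i = n := by
      rw [hβ'] at hβ
      simp only [Pi.add_apply, Finset.sum_add_distrib, Finset.sum_pi_single',
        Finset.mem_univ, if_true] at hβ
      omega
    have hmon : ∀ k x, mon 0 (k • β) x = x j ^ k * mon 0 (k • β') x := by
      intro k x
      rw [mon_smul, mon_smul, ← mul_pow]
      conv_lhs => rw [hβ', mon_add, mon_single, pow_one]
      simp
    set F : (Fin m → ℝ) × ℝ → ℝ := fun z => p z.1 * (∑ i ∈ Finset.range e,
      mon 0 ((e+1-i) • β) z.1 * b i z.1 * z.2 ^ i + z.2 ^ (e+1) * v z) with hF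
    -- chart B
    set ψB : (Fin m → ℝ) × ℝ → (Fin m → ℝ) × ℝ := fun z => (sc j z, z.2) with hψB
    have qB : ∀ z, QAt M ψB z := fun z => (QAt.sc j z).prodMk (QAt.id z).snd
    have hsc0 : sc j ((0 : Fin m → ℝ), (0:ℝ)) = 0 := by ext i; simp [sc]
    have hψB0 : ψB (0, 0) = (0, 0) := by simp [hψB, hsc0]
    have RB : Res M (m+1) (fun z => F (ψB z)) (0, 0) := by
      obtain ⟨α, u, hu, hu0, he⟩ := hp
      have hqu : QAt M (fun z => u (sc j z)) ((0 : Fin m → ℝ), (0:ℝ)) :=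
        QAt.comp (by rw [hsc0]; exact hu) (QAt.sc j _)
      have hqb : ∀ i, QAt M (fun z => b i (sc j z)) ((0 : Fin m → ℝ), (0:ℝ)) := fun i =>
        QAt.comp (by rw [hsc0]; exact hb i) (QAt.sc j _)
      have hqv : QAt M (fun z => v (ψB z)) ((0 : Fin m → ℝ), (0:ℝ)) :=
        QAt.comp (by rw [hψB0]; exact hv) (qB _)
      refine Res.of_NC2 (α := α) (k := α j + (e+1)) (u := fun z => u (sc j z) *
        (∑ i ∈ Finset.range e, z.2 ^ ((e+1-i) * (β' j)) * mon 0 ((e+1-i) • β) z.1 * b i (sc j z) +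
          v (ψB z))) (hqu.mul (QAt.add (QAt.sum fun i _ => ?_) hqv)) ?_ ?_
      · exact (((QAt.id _).snd.pow _).mul (QAt.comp_fst (z := (0, 0)) (QAt.mon _ _ _))).mul (hqb i)
      · rw [hsc0, hψB0]
        refine mul_ne_zero hu0 ?_
        rw [Finset.sum_eq_zero, zero_add]
        · exact hv0
        · intro i hi
          have : i < e := Finset.mem_range.1 hi
          rw [mon_self_of_ne]
          · simp
          · intro h0
            have := congrFun h0 j
            simp only [Pi.smul_apply, smul_eq_mul, Pi.zero_apply, mul_eq_zero] at this
            omega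
      · have hcont : ContinuousAt (sc j) ((0 : Fin m → ℝ), (0:ℝ)) :=
          (QAt.sc (M := M) j _).continuousAt
        have h1 := hcont.eventually (p := fun x => p x = mon 0 α x * u x) (by rw [hsc0]; exact he)
        filter_upwards [h1] with z hz
        simp only [hF, hψB, hz, mon_sc, sub_zero]
        have h2 : ∑ i ∈ Finset.range e, z.2 ^ ((e+1-i) • β) j * mon 0 ((e+1-i) • β) z.1
            * b i (sc j z) * z.2 ^ i = z.2 ^ (e+1) * ∑ i ∈ Finset.range e,
            z.2 ^ ((e+1-i) * (β' j)) * mon 0 ((e+1-i) • β) z.1 * b i (sc j z) := by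
          rw [Finset.mul_sum]
          refine Finset.sum_congr rfl fun i hi => ?_
          have : i < e := Finset.mem_range.1 hi
          have h3 : ((e+1-i) • β) j = (e+1-i) + (e+1-i) * β' j := by
            conv_lhs => rw [hβ']
            simp [mul_add]
          have h4 : z.2 ^ (e+1) = z.2 ^ (e+1-i) * z.2 ^ i := by
            rw [← pow_add]; congr 1; omega
          rw [h3, pow_add, h4]; ring
        rw [h2, pow_add]; ring
    -- chart A
    set ψA : (Fin m → ℝ) × ℝ → (Fin m → ℝ) × ℝ := fun z => (z.1, z.1 j * z.2) with hψA
    have qA : ∀ z, QAt M ψA z := fun z =>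
      (QAt.id z).fst.prodMk (((QAt.id z).fst.apply j).mul (QAt.id z).snd)
    have hψA0 : ∀ z, ψA (0, z) = (0, 0) := by intro z; simp [hψA]
    set p' : (Fin m → ℝ) → ℝ := fun x => p x * mon 0 (Pi.single j (e+1)) x with hp'
    have hp'NC : NCAt M p' 0 := hp.mul (NCAt.mon 0 _)
    set G : (Fin m → ℝ) × ℝ → ℝ := fun z => ∑ i ∈ Finset.range e,
      mon 0 ((e+1-i) • β') z.1 * b i z.1 * z.2 ^ i + z.2 ^ (e+1) * v (ψA z) with hG
    have hqv : ∀ z, QAt M (fun z => v (ψA z)) ((0 : Fin m → ℝ), z) := fun z =>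
      QAt.comp (by rw [hψA0]; exact hv) (qA _)
    have hqG : ∀ z, QAt M G ((0 : Fin m → ℝ), z) := fun z =>
      (QAt.sum fun i _ => (QAt.mul (QAt.comp_fst (z := (0, z)) (QAt.mon _ _ _))
        (QAt.comp_fst (z := (0, z)) (hb i))).mul ((QAt.id _).snd.pow i)).add
        (((QAt.id _).snd.pow _).mul (hqv z))
    have hFA : (fun z => F (ψA z)) = fun z => p' z.1 * G z := by
      funext z
      simp only [hF, hψA, hG, hp', mon_single, Pi.zero_apply, sub_zero]
      have h2 : ∑ i ∈ Finset.range e, mon 0 ((e+1-i) • β) z.1 * b i z.1 * (z.1 j * z.2) ^ i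
          = z.1 j ^ (e+1) * ∑ i ∈ Finset.range e, mon 0 ((e+1-i) • β') z.1 * b i z.1 * z.2 ^ i := by
        rw [Finset.mul_sum]
        refine Finset.sum_congr rfl fun i hi => ?_
        have : i < e := Finset.mem_range.1 hi
        have h4 : z.1 j ^ (e+1) = z.1 j ^ (e+1-i) * z.1 j ^ i := by
          rw [← pow_add]; congr 1; omega
        rw [hmon, h4, mul_pow]; ring
      rw [h2]; ring
    have RA : ∀ z : ℝ, Res M (m+1) (fun z => F (ψA z)) (0, z) := by
      intro z
      rw [hFA]
      by_cases hz : z = 0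
      · subst hz
        exact ih β' p' b _ i₀ hsum hp'NC hb (hqv 0) (by rw [hψA0]; exact hv0) hi₀ hbi
      · refine H e le_rfl 0 z p' G hp'NC.qat hp'NC.not_zero (hqG z) ?_
        rw [dyn_eq e (hqG z)]
        have : (fun y => G ((0 : Fin m → ℝ), y)) = fun y => ∑ i ∈ Finset.range e,
            (mon 0 ((e+1-i) • β') (0 : Fin m → ℝ) * b i 0) * y ^ i + v (0, 0) * y ^ (e+1) := by
          funext y
          simp only [hG, hψA0]
          ring
        rw [this, poly_deriv]
        exact mul_ne_zero (mul_ne_zero hv0 (by exact_mod_cast (Nat.factorial_pos _).ne')) hz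
    -- conclusion
    obtain ⟨ε, hε, hB⟩ := ev_box RB.eventually
    simp only [zero_sub, zero_add] at hB
    have hA := (isCompact_Icc (a := -ε⁻¹) (b := ε⁻¹)).eventually_forall_of_forall_eventually
      (x₀ := (0 : Fin m → ℝ)) (P := fun x y => Res M (m+1) (fun z => F (ψA z)) (x, y))
      fun y _ => (RA y).eventually
    obtain ⟨δ, hδ, hA⟩ := Metric.nhds_basis_closedBall.mem_iff.1 hA
    have cB := Cov.compact (g := F) (ψ := ψB)
      ((isCompact_closedBall (0 : Fin m → ℝ) ε).prod (isCompact_Icc (a := -ε) (b := ε)))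
      fun z hz => ⟨qB z, hB z.1 hz.1 z.2 hz.2⟩
    have cA := Cov.compact (g := F) (ψ := ψA)
      ((isCompact_closedBall (0 : Fin m → ℝ) δ).prod (isCompact_Icc (a := -ε⁻¹) (b := ε⁻¹)))
      fun z hz => ⟨qA z, hA hz.1 z.2 hz.2⟩
    refine ⟨_, ?_, Cov.union _ _ cA cB⟩
    have hmem : Metric.closedBall (0 : Fin m → ℝ) (min δ ε) ×ˢ Icc (-ε) ε ∈
        𝓝 ((0 : Fin m → ℝ), (0:ℝ)) :=
      prod_mem_nhds (Metric.closedBall_mem_nhds _ (lt_min hδ hε))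
        (Icc_mem_nhds (by linarith) (by linarith))
    filter_upwards [hmem]
    rintro ⟨t, y⟩ ⟨ht, hy⟩
    simp only [mem_closedBall_zero_iff] at ht
    have ht1 := ht.trans (min_le_left _ _)
    have ht2 := ht.trans (min_le_right _ _)
    by_cases hc : |y| ≤ ε⁻¹ * |t j|
    · left
      by_cases h0 : t j = 0
      · have : y = 0 := by rw [h0] at hc; simpa using hc
        refine ⟨(t, 0), ⟨by simpa using ht1, ?_⟩, by simp [hψA, this]⟩
        have : 0 < ε⁻¹ := inv_pos.2 hε
        constructor <;> simp [this.le]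
      · refine ⟨(t, y / t j), ⟨by simpa using ht1, ?_⟩, ?_⟩
        · rw [mem_Icc, ← abs_le, abs_div, div_le_iff₀ (abs_pos.2 h0)]; exact hc
        · simp only [hψA, Prod.mk.injEq, true_and]; field_simp
    · right
      push Not at hc
      have hy0 : y ≠ 0 := by
        rintro rfl
        have : 0 ≤ ε⁻¹ * |t j| := by positivity
        simp only [abs_zero] at hc; linarith
      refine ⟨(fun i => if i = j then t i / y else t i, y), ⟨?_, hy⟩, ?_⟩
      · simp only [mem_closedBall_zero_iff]
        rw [pi_norm_le_iff_of_nonneg hε.le]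
        intro i
        split_ifs with h
        · subst h
          rw [Real.norm_eq_abs, abs_div, div_le_iff₀ (abs_pos.2 hy0)]
          rw [inv_mul_lt_iff₀ hε] at hc; exact hc.le
        · exact (norm_le_pi_norm t i).trans ht2
      · simp only [hψB, Prod.mk.injEq, and_true]
        funext i
        by_cases h : i = j
        · simp only [sc, h, if_true]; field_simp
        · simp [sc, h]

end ML
end DC

namespace DC

open Set Filter Topology
open scoped ContDiff Nat

section loc
variable {M : ℕ → ℝ} [hM : Wt M] {m : ℕ}

theorem Cov.iUnion {Y : Type} [NormedAddCommGroup Y] [NormedSpace ℝ Y] {N : ℕ} {g : Y → ℝ}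
    {ι : Type} [Finite ι] {S : ι → Set Y} (h : ∀ i, Cov M N g (S i)) : Cov M N g (⋃ i, S i) := by
  have key : ∀ t : Set ι, t.Finite → Cov M N g (⋃ i ∈ t, S i) := by
    intro t ht
    induction t, ht using Set.Finite.induction_on with
    | empty => simpa using Cov.empty
    | insert _ _ ih => rw [biUnion_insert]; exact Cov.union _ _ (h _) ih
  simpa using key univ finite_univ

theorem Res.of_maps {Y Z : Type} [NormedAddCommGroup Y] [NormedSpace ℝ Y] [NormedAddCommGroup Z]
    [NormedSpace ℝ Z] [LocallyCompactSpace Z] {N : ℕ} {ι : Type} [Finite ι] {g : Y → ℝ}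
    {ψ : ι → Z → Y} {c : Z} {a : Y} (hψ : ∀ i, QAt M (ψ i) c)
    (hr : ∀ i, Res M N (fun z => g (ψ i z)) c) (σ : Y → ι) (τ : Y → Z)
    (hτ : Tendsto τ (𝓝 a) (𝓝 c)) (hs : ∀ y, ψ (σ y) (τ y) = y) : Res M N g a := by
  choose S hS hcov using hr
  choose C hC hsub hcpt using fun i => local_compact_nhds (hψ i).eventually
  refine ⟨_, ?_, Cov.iUnion fun i => (hcov i).push (hcpt i) (g := g) (ψ := ψ i)
    fun c hc => ⟨hsub i hc, EventuallyEq.rfl⟩⟩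
  have h1 : ∀ᶠ z in 𝓝 c, ∀ i, z ∈ S i ∩ C i :=
    eventually_all.2 fun i => inter_mem (hS i) (hC i)
  filter_upwards [hτ.eventually h1] with y hy
  exact mem_iUnion.2 ⟨σ y, τ y, hy _, hs y⟩

/-- signs -/
def sg (b : Bool) : ℝ := if b then 1 else -1

theorem sg_ne (b : Bool) : sg b ≠ 0 := by cases b <;> simp [sg]

/-- power substitution -/
def pws (c : Fin m → ℝ) (D : ℕ) (s : Fin m → Bool) (t : Fin m → ℝ) : Fin m → ℝ :=
  fun i => c i + sg (s i) * t i ^ D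

theorem pw_zero (c : Fin m → ℝ) {D : ℕ} (hD : D ≠ 0) (s : Fin m → Bool) : pws c D s 0 = c := by
  ext i; simp [pws, hD]

theorem QAt.pws (c : Fin m → ℝ) (D : ℕ) (s : Fin m → Bool) (t) : QAt M (pws c D s) t :=
  QAt.pi fun i => (QAt.const _ _).add ((QAt.const _ _).mul ((QAt.coord i t).pow D))

theorem mon_pw (c : Fin m → ℝ) (D : ℕ) (s : Fin m → Bool) (α : Fin m → ℕ) (t) :
    mon c α (pws c D s t) = (∏ i, sg (s i) ^ α i) * mon 0 (D • α) t := by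
  simp only [mon, pws, add_sub_cancel_left, mul_pow, Finset.prod_mul_distrib, Pi.zero_apply,
    sub_zero, Pi.smul_apply, smul_eq_mul, pow_mul]

theorem sgprod_ne (s : Fin m → Bool) (α : Fin m → ℕ) : (∏ i, sg (s i) ^ α i) ≠ 0 :=
  Finset.prod_ne_zero_iff.2 fun _ _ => pow_ne_zero _ (sg_ne _)

theorem Res.of_pw {G : (Fin m → ℝ) × ℝ → ℝ} {c : Fin m → ℝ} {D : ℕ} (hD : D ≠ 0)
    (h : ∀ s : Fin m → Bool, Res M (m+1) (fun z => G (pws c D s z.1, z.2)) (0, 0)) :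
    Res M (m+1) G (c, 0) := by
  refine Res.of_maps (ψ := fun (s : Fin m → Bool) (z : (Fin m → ℝ) × ℝ) => (pws c D s z.1, z.2))
    (c := (0, 0)) (fun s => ?_) h (fun z i => decide (0 ≤ z.1 i - c i))
    (fun z => (fun i => |z.1 i - c i| ^ ((D:ℝ)⁻¹), z.2)) ?_ ?_
  · exact (QAt.comp (g := DC.pws c D s) (f := fun z : (Fin m → ℝ) × ℝ => z.1) (QAt.pws c D s _)
      (QAt.id _).fst).prodMk (QAt.id _).snd
  · have hc : Continuous (fun z : (Fin m → ℝ) × ℝ => ((fun i => |z.1 i - c i| ^ ((D:ℝ)⁻¹)), z.2)) := by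
      refine Continuous.prodMk (continuous_pi fun i => ?_) continuous_snd
      exact Continuous.rpow_const (by fun_prop) fun _ => Or.inr (by positivity)
    have := hc.tendsto (c, 0)
    have e0 : (fun i => |((c, (0:ℝ)) : (Fin m → ℝ) × ℝ).1 i - c i| ^ ((D:ℝ)⁻¹)) = 0 := by
      funext i; simp [hD]
    rw [e0] at this
    exact this
  · rintro ⟨x, y⟩
    simp only [Prod.mk.injEq, and_true]
    ext i
    simp only [pws]
    rw [Real.rpow_inv_natCast_pow (abs_nonneg _) hD]
    by_cases h0 : 0 ≤ x i - c i
    · simp only [sg, h0, decide_true, if_true, abs_of_nonneg h0]; ring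
    · simp only [sg, h0, decide_false, abs_of_neg (not_le.1 h0)]; simp

theorem local_nc (e : ℕ) (H : ∀ d ≤ e, NP M m d) {c : Fin m → ℝ} {p : (Fin m → ℝ) → ℝ}
    {a : ℕ → (Fin m → ℝ) → ℝ} {u : (Fin m → ℝ) × ℝ → ℝ} (I : Finset ℕ) (hI : ∀ i ∈ I, i < e)
    (hp : NCAt M p c) (ha : ∀ i ∈ I, NCAt M (a i) c) (hz : ∀ i < e, i ∉ I → a i =ᶠ[𝓝 c] 0)
    (hu : QAt M u (c, 0)) (hu0 : u (c, 0) ≠ 0)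
    (hS : I.Nonempty → NCAt M (fun x => ∑ i ∈ I, (a i x ^ ((e+1)! / (e+1-i))) ^ 2) c) :
    Res M (m+1) (fun z => p z.1 * (∑ i ∈ Finset.range e, a i z.1 * z.2 ^ i + z.2 ^ (e+1) * u z))
      (c, 0) := by
  have hfst : Tendsto (fun z : (Fin m → ℝ) × ℝ => z.1) (𝓝 (c, (0:ℝ))) (𝓝 c) :=
    continuous_fst.tendsto _
  rcases I.eq_empty_or_nonempty with rfl | hne
  · obtain ⟨α, w, hw, hw0, he⟩ := hp
    refine Res.of_NC2 (α := α) (k := e+1) (u := fun z => w z.1 * u z)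
      ((QAt.comp_fst (z := (c, 0)) hw).mul hu) (mul_ne_zero hw0 hu0) ?_
    have hall : ∀ᶠ x in 𝓝 c, ∀ i ∈ Finset.range e, a i x = 0 :=
      (Finset.eventually_all _).2 fun i hi => hz i (Finset.mem_range.1 hi) (by simp)
    filter_upwards [hfst.eventually he, hfst.eventually hall] with z h1 h2
    rw [h1, Finset.sum_eq_zero (fun i hi => by rw [h2 i hi, zero_mul])]
    rw [sub_zero]; ring
  · specialize hS hne
    choose! α w hw hw0 he using ha
    set ex : ℕ → ℕ := fun i => (e+1)! / (e+1-i) with hex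
    have hexD : ∀ i ∈ I, (e+1-i) * ex i = (e+1)! := fun i hi =>
      Nat.mul_div_cancel' (Nat.dvd_factorial (by have := hI i hi; omega) (by omega))
    have hS' : NCAt M (fun x => ∑ i ∈ I, (mon c (ex i • α i) x * (w i x) ^ ex i) ^ 2) c := by
      refine hS.congr ?_
      have hall : ∀ᶠ x in 𝓝 c, ∀ i ∈ I, a i x = mon c (α i) x * w i x :=
        (Finset.eventually_all _).2 fun i hi => he i hi
      filter_upwards [hall] with x hx
      refine Finset.sum_congr rfl fun i hi => ?_
      rw [hx i hi, mul_pow _ _ (ex i), mon_smul]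
    obtain ⟨i₀, hi₀, hmin⟩ := NCAt.min_exp hne (fun i hi => (hw i hi).pow _)
      (fun i hi => pow_ne_zero _ (hw0 i hi)) hS'
    set β := ex i₀ • α i₀ with hβ
    have hD : (e+1)! ≠ 0 := (Nat.factorial_pos _).ne'
    set D := (e+1)! with hDdef
    refine Res.of_pw hD fun s => ?_
    have hpw0 := pw_zero c hD s
    have hpwc : Tendsto (pws c D s) (𝓝 0) (𝓝 c) := by
      have := (QAt.pws (M := M) c D s 0).continuousAt.tendsto
      rwa [hpw0] at this
    classical
    set b : ℕ → (Fin m → ℝ) → ℝ := fun i t => if i ∈ I then (∏ j, sg (s j) ^ α i j) *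
      mon 0 ((e+1-i) • (ex i • α i - β)) t * w i (pws c D s t) else 0 with hb
    have hwq : ∀ {f : (Fin m → ℝ) → ℝ}, QAt M f c → QAt M (fun t => f (pws c D s t)) 0 := by
      intro f hf
      exact QAt.comp (by rw [hpw0]; exact hf) (QAt.pws c D s 0)
    have hbq : ∀ i, QAt M (b i) 0 := by
      intro i
      by_cases hi : i ∈ I
      · simp only [hb, hi, if_true]
        exact ((QAt.const _ _).mul (QAt.mon _ _ _)).mul (hwq (hw i hi))
      · simp only [hb, hi, if_false]; exact QAt.const _ _
    have hp' : NCAt M (fun t => p (pws c D s t)) 0 := by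
      obtain ⟨α', w', hw', hw0', he'⟩ := hp
      refine ⟨D • α', fun t => (∏ j, sg (s j) ^ α' j) * w' (pws c D s t),
        (QAt.const _ _).mul (hwq hw'), ?_, ?_⟩
      · simp only [hpw0]; exact mul_ne_zero (sgprod_ne _ _) hw0'
      · filter_upwards [hpwc.eventually he'] with t ht
        rw [ht, mon_pw]; ring
    have hv : QAt M (fun z : (Fin m → ℝ) × ℝ => u (pws c D s z.1, z.2)) (0, 0) := by
      refine QAt.comp (g := u) (f := fun z : (Fin m → ℝ) × ℝ => (pws c D s z.1, z.2)) ?_ ?_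
      · simp only [hpw0]; exact hu
      · exact (QAt.comp (g := DC.pws c D s) (f := fun z : (Fin m → ℝ) × ℝ => z.1) (QAt.pws c D s _)
          (QAt.id _).fst).prodMk (QAt.id _).snd
    have := main_lemma e H (∑ i, β i) β (fun t => p (pws c D s t)) b _ i₀ rfl hp' hbq hv
      (by simp only [hpw0]; exact hu0) (hI i₀ hi₀) (by
        simp only [hb, hi₀, if_true, hpw0]
        refine mul_ne_zero (mul_ne_zero (sgprod_ne _ _) ?_) (hw0 i₀ hi₀)
        rw [← hβ, tsub_self, smul_zero, mon_zero]; exact one_ne_zero)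
    refine this.congr ?_
    have hall : ∀ᶠ x in 𝓝 c, ∀ i ∈ Finset.range e, (i ∈ I → a i x = mon c (α i) x * w i x) ∧
        (i ∉ I → a i x = 0) := by
      refine (Finset.eventually_all _).2 fun i hi => ?_
      by_cases h : i ∈ I
      · filter_upwards [he i h] with x hx using ⟨fun _ => hx, fun h' => absurd h h'⟩
      · filter_upwards [hz i (Finset.mem_range.1 hi) h] with x hx using ⟨fun h' => absurd h' h, fun _ => hx⟩
    have hfst0 : Tendsto (fun z : (Fin m → ℝ) × ℝ => z.1) (𝓝 (0, (0:ℝ))) (𝓝 0) :=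
      continuous_fst.tendsto _
    filter_upwards [(hpwc.comp hfst0).eventually hall] with z hz
    have : ∑ i ∈ Finset.range e, a i (pws c D s z.1) * z.2 ^ i =
        ∑ i ∈ Finset.range e, mon 0 ((e+1-i) • β) z.1 * b i z.1 * z.2 ^ i := by
      refine Finset.sum_congr rfl fun i hi => ?_
      congr 1
      have hzi := hz i hi
      by_cases h : i ∈ I
      · simp only [hb, h, if_true]
        have h1 := hzi.1 h
        simp only [Function.comp_apply] at h1
        rw [h1, mon_pw]
        have h2 : D • α i = (e+1-i) • β + (e+1-i) • (ex i • α i - β) := by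
          rw [← smul_add, add_tsub_cancel_of_le (hmin i h), smul_smul, hexD i h]
        rw [h2, mon_add]; ring
      · simp only [hb, h, if_false, mul_zero]
        exact hzi.2 h
    rw [this]

end loc
end DC

namespace DC

open Set Filter Topology
open scoped ContDiff Nat

section normal
variable {M : ℕ → ℝ} [hM : Wt M] {m : ℕ}

/-- local resolution in dimension `m` -/
def NN (M : ℕ → ℝ) (m : ℕ) : Prop :=
  ∀ (a : Fin m → ℝ) (g : (Fin m → ℝ) → ℝ), QAt M g a → ¬ g =ᶠ[𝓝 a] 0 → Res M m g a

theorem nz_mul {E : Type} [NormedAddCommGroup E] [NormedSpace ℝ E] {f h : E → ℝ} {c : E}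
    (hf : QAt M f c) (hh : QAt M h c) (hf0 : ¬ f =ᶠ[𝓝 c] 0) (hh0 : ¬ h =ᶠ[𝓝 c] 0) :
    ¬ (fun x => f x * h x) =ᶠ[𝓝 c] 0 := by
  intro hz
  rcases qa_domain hf hh hz with h | h
  · exact hf0 h
  · exact hh0 h

theorem nz_one {E : Type} [NormedAddCommGroup E] {c : E} : ¬ (fun _ : E => (1:ℝ)) =ᶠ[𝓝 c] 0 :=
  fun h => one_ne_zero h.self_of_nhds

theorem nz_prod {E : Type} [NormedAddCommGroup E] [NormedSpace ℝ E] {f : ℕ → E → ℝ} {c : E}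
    (I : Finset ℕ) (hf : ∀ i ∈ I, QAt M (f i) c) (hf0 : ∀ i ∈ I, ¬ f i =ᶠ[𝓝 c] 0) :
    ¬ (fun x => ∏ i ∈ I, f i x) =ᶠ[𝓝 c] 0 := by
  classical
  induction I using Finset.induction_on with
  | empty => simpa using nz_one
  | insert i I hi ih =>
    simp only [Finset.prod_insert hi]
    exact nz_mul (hf i (by simp)) (QAt.prod fun j hj => hf j (by simp [hj])) (hf0 i (by simp))
      (ih (fun j hj => hf j (by simp [hj])) fun j hj => hf0 j (by simp [hj]))

theorem NP_zero (N : NN M m) : NP M m 0 := by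
  intro a b p g hp hp0 hg hg0
  obtain ⟨ε, hε, hB⟩ := ev_box (hg.eventually.and (hg.continuousAt.eventually_ne hg0))
  refine Res.lift (N a p hp hp0) (Metric.closedBall_mem_nhds a hε) hε ?_
  intro f c hf hfc hNC y hy
  obtain ⟨h1, h2⟩ := hB _ hfc y hy
  obtain ⟨α, w, hw, hw0, he⟩ := hNC
  have hq : QAt M (fun z : (Fin m → ℝ) × ℝ => g (f z.1, z.2)) (c, y) :=
    QAt.comp (g := g) (f := fun z : (Fin m → ℝ) × ℝ => (f z.1, z.2)) h1
      ((QAt.comp (g := f) (f := fun z : (Fin m → ℝ) × ℝ => z.1) hf (QAt.id _).fst).prodMk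
        (QAt.id _).snd)
  refine Res.of_NC2 (α := α) (k := 0) (u := fun z => w z.1 * g (f z.1, z.2))
    ((QAt.comp_fst (z := (c, y)) hw).mul hq) (mul_ne_zero hw0 h2) ?_
  have hfst : Tendsto (fun z : (Fin m → ℝ) × ℝ => z.1) (𝓝 (c, y)) (𝓝 c) :=
    continuous_fst.tendsto _
  filter_upwards [hfst.eventually he] with z hz
  rw [hz]; ring

theorem NP_core (N : NN M m) (e : ℕ) (H : ∀ d ≤ e, NP M m d) {a : Fin m → ℝ}
    {p : (Fin m → ℝ) → ℝ} {g : (Fin m → ℝ) × ℝ → ℝ} (hp : QAt M p a) (hp0 : ¬ p =ᶠ[𝓝 a] 0)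
    (hg : QAt M g (a, 0)) (hg1 : DC.dy^[e+1] g (a, 0) ≠ 0)
    (hg0 : ∀ᶠ x in 𝓝 a, DC.dy^[e] g (x, 0) = 0) :
    Res M (m+1) (fun z => p z.1 * g z) (a, 0) := by
  classical
  obtain ⟨A, q, hA, hq, he⟩ := qtaylor hg (e+2)
  have hin : Tendsto (fun x : Fin m → ℝ => (x, (0:ℝ))) (𝓝 a) (𝓝 (a, 0)) :=
    (by fun_prop : Continuous fun x : Fin m → ℝ => (x, (0:ℝ))).tendsto a
  have hfst : Tendsto (fun z : (Fin m → ℝ) × ℝ => z.1) (𝓝 (a, (0:ℝ))) (𝓝 a) :=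
    continuous_fst.tendsto _
  have hAe : ∀ᶠ x in 𝓝 a, A e x = 0 := by
    filter_upwards [hg0, hin.eventually hg.eventually, hin.eventually hq.eventually,
      hin.eventually he.eventually_nhds] with x h0 h1 h2 h3
    rw [taylor_dyn h1 (by omega) h2 h3] at h0
    exact (mul_eq_zero.1 h0).resolve_left (by exact_mod_cast (Nat.factorial_pos _).ne')
  set u : (Fin m → ℝ) × ℝ → ℝ := fun z => A (e+1) z.1 + z.2 * q z with hu
  have huq : QAt M u (a, 0) :=
    (QAt.comp_fst (z := (a, 0)) (hA _)).add ((QAt.id _).snd.mul hq)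
  have hu0 : u (a, 0) ≠ 0 := by
    rw [taylor_dyn hg (by omega) hq he] at hg1
    simp only [hu, zero_mul, add_zero]
    exact right_ne_zero_of_mul hg1
  have he' : ∀ᶠ z in 𝓝 (a, (0:ℝ)), g z = ∑ i ∈ Finset.range e, A i z.1 * z.2 ^ i
      + z.2 ^ (e+1) * u z := by
    filter_upwards [he, hfst.eventually hAe] with z h1 h2
    rw [h1, Finset.sum_range_succ, Finset.sum_range_succ, h2]
    simp only [hu]; ring
  set I : Finset ℕ := (Finset.range e).filter fun i => ¬ A i =ᶠ[𝓝 a] 0 with hI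
  have hIlt : ∀ i ∈ I, i < e := fun i hi => Finset.mem_range.1 (Finset.mem_filter.1 hi).1
  set S : (Fin m → ℝ) → ℝ := if I.Nonempty then fun x =>
    ∑ i ∈ I, (A i x ^ ((e+1)! / (e+1-i))) ^ 2 else fun _ => 1 with hS
  have hSq : ∀ x, (∀ i ∈ I, QAt M (A i) x) → QAt M S x := by
    intro x hx
    by_cases h : I.Nonempty
    · simp only [hS, h, if_true]
      exact QAt.sum fun i hi => ((hx i hi).pow _).pow 2
    · simp only [hS, h, if_false]; exact QAt.const _ _
  have hS0 : ¬ S =ᶠ[𝓝 a] 0 := by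
    by_cases h : I.Nonempty
    · simp only [hS, h, if_true]
      intro hz
      obtain ⟨i, hi⟩ := h
      refine (Finset.mem_filter.1 hi).2 ?_
      filter_upwards [hz] with x hx
      have := (Finset.sum_eq_zero_iff_of_nonneg (fun i _ => sq_nonneg _)).1 hx i hi
      by_contra hne
      exact pow_ne_zero _ (pow_ne_zero _ hne) this
    · simp only [hS, h, if_false]; exact nz_one
  have hPq := QAt.prod (s := I) (fun i _ => hA i)
  have hP : Res M m (fun x => p x * ((∏ i ∈ I, A i x) * S x)) a :=
    N a _ (hp.mul (hPq.mul (hSq a fun i _ => hA i)))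
      (nz_mul hp (hPq.mul (hSq a fun i _ => hA i)) hp0 (nz_mul hPq (hSq a fun i _ => hA i)
        (nz_prod I (fun i _ => hA i) fun i hi => (Finset.mem_filter.1 hi).2) hS0))
  have hV : ∀ᶠ x in 𝓝 a, QAt M p x ∧ DC.dy^[e] g (x, 0) = 0 ∧
      (∀ i ∈ Finset.range e, QAt M (A i) x ∧ (i ∉ I → A i =ᶠ[𝓝 x] 0)) := by
    refine hp.eventually.and (hg0.and ((Finset.eventually_all _).2 fun i hi => ?_))
    refine (hA i).eventually.and ?_
    by_cases h : i ∈ I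
    · exact Eventually.of_forall fun x hx => absurd h hx
    · have : A i =ᶠ[𝓝 a] 0 := by
        by_contra hn
        exact h (Finset.mem_filter.2 ⟨hi, hn⟩)
      exact this.eventuallyEq_nhds.mono fun x hx _ => hx
  have hbox := hg.eventually.and (((hg.dyn (e+1)).continuousAt.eventually_ne hg1).and
    (huq.eventually.and ((huq.continuousAt.eventually_ne hu0).and he'.eventually_nhds)))
  obtain ⟨ε, hε, hB⟩ := ev_box hbox
  refine Res.lift hP (inter_mem hV (Metric.closedBall_mem_nhds a hε)) hε ?_
  simp only [zero_sub, zero_add] at hB ⊢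
  rintro f c hf ⟨⟨v1, v2, v3⟩, hfc⟩ hNC y hy
  have hBy := hB (f c) hfc
  have hpf : QAt M (fun x => p (f x)) c := QAt.comp v1 hf
  have hAf : ∀ i ∈ I, QAt M (fun x => A i (f x)) c := fun i hi =>
    QAt.comp (v3 i (Finset.mem_range.2 (hIlt i hi))).1 hf
  have hSf : QAt M (fun x => S (f x)) c :=
    QAt.comp (hSq _ fun i hi => (v3 i (Finset.mem_range.2 (hIlt i hi))).1) hf
  have hprodf : QAt M (fun x => ∏ i ∈ I, A i (f x)) c := QAt.prod fun i hi => hAf i hi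
  have nc1 : NCAt M (fun x => p (f x)) c := NCAt.factor hpf (hprodf.mul hSf) hNC
  have nc2 := NCAt.factor_right hpf (hprodf.mul hSf) hNC
  have nc3 := NCAt.factor_prod (f := fun i x => A i (f x)) hAf (NCAt.factor hprodf hSf nc2)
  have nc4 := NCAt.factor_right hprodf hSf nc2
  have hfz : ∀ y, QAt M (fun z : (Fin m → ℝ) × ℝ => (f z.1, z.2)) (c, y) := fun y =>
    (QAt.comp (g := f) (f := fun z : (Fin m → ℝ) × ℝ => z.1) hf (QAt.id _).fst).prodMk
        (QAt.id _).snd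
  have hgf : QAt M (fun z : (Fin m → ℝ) × ℝ => g (f z.1, z.2)) (c, y) :=
    QAt.comp (g := g) (f := fun z : (Fin m → ℝ) × ℝ => (f z.1, z.2)) (hBy y hy).1 (hfz y)
  by_cases hy0 : y = 0
  · subst hy0
    obtain ⟨-, -, b3, b4, b5⟩ := hBy 0 hy
    have := local_nc e H (c := c) (p := fun x => p (f x)) (a := fun i x => A i (f x))
      (u := fun z => u (f z.1, z.2)) I hIlt nc1 nc3 ?_
      (QAt.comp (g := u) (f := fun z : (Fin m → ℝ) × ℝ => (f z.1, z.2)) b3 (hfz 0)) b4 ?_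
    · refine this.congr ?_
      filter_upwards [(hfz 0).continuousAt.eventually b5] with z hz
      rw [hz]
    · intro i hi hiI
      exact hf.continuousAt.eventually ((v3 i (Finset.mem_range.2 hi)).2 hiI)
    · intro hne
      simpa only [hS, hne, if_true] using nc4
  · refine H e le_rfl c y _ _ hpf nc1.not_zero hgf ?_
    rw [dyn_congr (hBy y hy).1 hgf (s := 0) (zero_add y).symm (by simp)]
    exact fiber_ne (fun y hy => (hBy y hy).1) v2 (fun y hy => (hBy y hy).2.1) hy hy0

theorem NP_all (N : NN M m) (d : ℕ) : NP M m d := by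
  induction d using Nat.strong_induction_on with
  | _ d ih =>
    rcases d with _ | e
    · exact NP_zero N
    · intro a b p g hp hp0 hg hg1
      by_cases h0 : DC.dy^[e] g (a, b) = 0
      · have h1 : fderiv ℝ (DC.dy^[e] g) (a, b) (0, 1) ≠ 0 := by
          rw [Function.iterate_succ_apply'] at hg1
          exact hg1
        obtain ⟨r, hr, hrb, hre⟩ := ift (hg.dyn e) h0 h1
        set ψ : (Fin m → ℝ) × ℝ → (Fin m → ℝ) × ℝ := fun z => (z.1, r z.1 + z.2) with hψ
        have hψ0 : ψ (a, 0) = (a, b) := by simp [hψ, hrb]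
        have hψq : QAt M ψ (a, 0) := (QAt.id _).fst.prodMk
          ((QAt.comp_fst (z := (a, 0)) hr).add (QAt.id _).snd)
        have hgq : QAt M (fun z => g (ψ z)) (a, 0) := QAt.comp (by rw [hψ0]; exact hg) hψq
        have hin : Tendsto (fun x : Fin m → ℝ => (x, (0:ℝ))) (𝓝 a) (𝓝 (a, 0)) :=
          (by fun_prop : Continuous fun x : Fin m → ℝ => (x, (0:ℝ))).tendsto a
        have hψc : Tendsto ψ (𝓝 (a, 0)) (𝓝 (a, b)) := by
          have := hψq.continuousAt.tendsto
          rwa [hψ0] at this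
        have key := NP_core N e (fun d hd => ih d (by omega)) (a := a) (p := p)
          (g := fun z => g (ψ z)) hp hp0 hgq ?_ ?_
        · rw [← hψ0]
          refine Res.of_map hψq (h := fun z => p z.1 * g (ψ z)) EventuallyEq.rfl key ?_
          have hinv : Tendsto (fun z : (Fin m → ℝ) × ℝ => (z.1, z.2 - r z.1)) (𝓝 (ψ (a, 0)))
              (𝓝 (a, 0)) := by
            rw [hψ0]
            have hc : ContinuousAt (fun z : (Fin m → ℝ) × ℝ => (z.1, z.2 - r z.1)) (a, b) := by
              have : ContinuousAt (fun z : (Fin m → ℝ) × ℝ => r z.1) (a, b) :=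
                ContinuousAt.comp (g := r) hr.continuousAt continuous_fst.continuousAt
              exact continuousAt_fst.prodMk (continuousAt_snd.sub this)
            have := hc.tendsto
            simpa [hrb] using this
          intro s hs
          have := hinv (mem_map.1 hs)
          filter_upwards [this] with z hz
          simpa [hψ] using hz
        · rw [dyn_congr hg hgq (s := b) (by simp) (by simp [hψ, hrb])]
          exact hg1
        · filter_upwards [hre, hin.eventually hgq.eventually,
            (hψc.comp hin).eventually hg.eventually] with x h1 h2 h3
          have h3' : QAt M g (x, r x) := by simpa [hψ] using h3
          rw [dyn_congr h3' h2 (s := r x) (by simp) (by simp [hψ])]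
          exact h1
      · exact ih e (by omega) a b p g hp hp0 hg h0

theorem NN_zero : NN M 0 := by
  intro a g hg h0
  refine Res.of_NC (NCAt.unit hg fun h => h0 ?_)
  exact Eventually.of_forall fun x => by rw [Subsingleton.elim x a]; exact h

/-- linear coordinates adapted to a direction -/
theorem exists_adapted (v : Fin (m+1) → ℝ) (hv : v ≠ 0) :
    ∃ L : ((Fin m → ℝ) × ℝ) ≃L[ℝ] (Fin (m+1) → ℝ), L (0, 1) = v := by
  obtain ⟨j, hj⟩ : ∃ j, v j ≠ 0 := by
    by_contra hcon; push Not at hcon; exact hv (funext hcon)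
  refine ⟨LinearEquiv.toContinuousLinearEquiv
    { toFun := fun z => fun k => (j.insertNth 0 z.1 : Fin (m+1) → ℝ) k + z.2 * v k
      invFun := fun w => (fun i => w (j.succAbove i) - w j / v j * v (j.succAbove i), w j / v j)
      map_add' := ?_
      map_smul' := ?_
      left_inv := ?_
      right_inv := ?_ }, ?_⟩
  · intro x y
    funext k
    refine Fin.succAboveCases j ?_ (fun i => ?_) k <;> simp <;> ring
  · intro c x
    funext k
    refine Fin.succAboveCases j ?_ (fun i => ?_) k <;> simp <;> ring
  · intro z
    ext <;> simp [hj]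
  · intro w
    funext k
    refine Fin.succAboveCases j ?_ (fun i => ?_) k <;> simp [hj]
  · funext k
    refine Fin.succAboveCases j ?_ (fun i => ?_) k <;> simp

theorem NN_succ (N : NN M m) : NN M (m+1) := by
  intro a g hg h0
  by_cases hga : g a = 0
  · obtain ⟨v, d, hd⟩ := qa_nonflat hg h0
    have hv : v ≠ 0 := by
      rintro rfl
      apply hd
      simp [hga]
    obtain ⟨L, hL⟩ := exists_adapted v hv
    obtain ⟨⟨x, y⟩, hz⟩ := L.surjective a
    have hq : QAt M (fun z => g (L z)) (x, y) :=
      QAt.comp (by rw [hz]; exact hg) (QAt.clm (L : ((Fin m → ℝ) × ℝ) →L[ℝ] (Fin (m+1) → ℝ)) _)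
    rw [← hz]
    refine Res.of_equiv L ?_
    have := NP_all N d x y (fun _ => 1) (fun z => g (L z)) (QAt.const _ _) nz_one hq ?_
    · simpa using this
    · rw [dyn_eq d hq]
      have e1 : (fun t : ℝ => g (a + t • v)) = fun t => (fun y => g (L (x, y))) (y + t) := by
        funext t
        have : ((x, y + t) : (Fin m → ℝ) × ℝ) = (x, y) + t • (0, 1) := by ext <;> simp
        simp only [this, map_add, map_smul, hz, hL]
      rw [e1, iteratedDeriv_comp_const_add d (fun y => g (L (x, y))) y] at hd
      simpa using hd
  · exact Res.of_NC (NCAt.unit hg hga)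

theorem NN_all (m : ℕ) : NN M m := by
  induction m with
  | zero => exact NN_zero
  | succ m ih => exact NN_succ ih

end normal
end DC

namespace DC

open Set Filter Topology
open scoped ContDiff Nat

section noeth
variable {M : ℕ → ℝ} [hM : Wt M] {m : ℕ}

/-- the decreasing sequence of zero sets stabilizes on `S` -/
def Stab {X : Type} (g : ℕ → X → ℝ) (S : Set X) : Prop :=
  ∃ k, ∀ j ≥ k, ∀ x ∈ S, g k x = 0 → g j x = 0

theorem zero_anti {X : Type} {g : ℕ → X → ℝ} {U : Set X}
    (h : ∀ j, ∀ x ∈ U, g (j+1) x = 0 → g j x = 0) {i j : ℕ} (hij : i ≤ j) {x : X} (hx : x ∈ U)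
    (hz : g j x = 0) : g i x = 0 := by
  induction j, hij using Nat.le_induction with
  | base => exact hz
  | succ j _ ih => exact ih (h j x hx hz)

theorem Stab.mono {X : Type} {g : ℕ → X → ℝ} {S T : Set X} (h : Stab g S) (hT : T ⊆ S) :
    Stab g T := by
  obtain ⟨k, hk⟩ := h
  exact ⟨k, fun j hj x hx => hk j hj x (hT hx)⟩

theorem Stab.union {X : Type} {g : ℕ → X → ℝ} {U S T : Set X}
    (h : ∀ j, ∀ x ∈ U, g (j+1) x = 0 → g j x = 0) (hS : Stab g S) (hT : Stab g T) (hSU : S ⊆ U)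
    (hTU : T ⊆ U) : Stab g (S ∪ T) := by
  obtain ⟨k, hk⟩ := hS
  obtain ⟨l, hl⟩ := hT
  refine ⟨max k l, fun j hj x hx hz => ?_⟩
  rcases hx with hx | hx
  · exact hk j (le_trans (le_max_left _ _) hj) x hx
      (zero_anti h (le_max_left k l) (hSU hx) hz)
  · exact hl j (le_trans (le_max_right _ _) hj) x hx
      (zero_anti h (le_max_right k l) (hTU hx) hz)

/-- local stabilization in dimension `m` -/
def TN (M : ℕ → ℝ) (m : ℕ) : Prop :=
  ∀ (a : Fin m → ℝ) (U : Set (Fin m → ℝ)), IsOpen U → a ∈ U → ∀ g : ℕ → (Fin m → ℝ) → ℝ,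
    (∀ j, ∀ x ∈ U, QAt M (g j) x) → (∀ j, ∀ x ∈ U, g (j+1) x = 0 → g j x = 0) →
    ∃ S ∈ 𝓝 a, Stab g S

theorem TN_zero : TN M 0 := by
  intro a U hU ha g hg hd
  refine ⟨univ, univ_mem, ?_⟩
  by_cases h : ∃ k, g k a ≠ 0
  · obtain ⟨k, hk⟩ := h
    refine ⟨k, fun j _ x _ hz => absurd hz ?_⟩
    rw [Subsingleton.elim x a]; exact hk
  · push Not at h
    refine ⟨0, fun j _ x _ _ => ?_⟩
    rw [Subsingleton.elim x a]; exact h j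

theorem QAt.insertNth (i : Fin (m+1)) (c : ℝ) (t : Fin m → ℝ) :
    QAt M (fun t : Fin m → ℝ => (i.insertNth c t : Fin (m+1) → ℝ)) t := by
  refine QAt.pi fun k => ?_
  refine Fin.succAboveCases i ?_ (fun l => ?_) k
  · simpa using QAt.const _ _
  · simpa using QAt.coord l t

theorem insertNth_self {i : Fin (m+1)} {c : ℝ} {x : Fin (m+1) → ℝ} (h : x i = c) :
    (i.insertNth c (fun l => x (i.succAbove l)) : Fin (m+1) → ℝ) = x := by
  funext k
  refine Fin.succAboveCases i ?_ (fun l => ?_) k <;> simp [h]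

theorem TN_chart (T : TN M m) {h : (Fin (m+1) → ℝ) → ℝ} {c : Fin (m+1) → ℝ} (hNC : NCAt M h c)
    {U : Set (Fin (m+1) → ℝ)} (hU : U ∈ 𝓝 c) {g : ℕ → (Fin (m+1) → ℝ) → ℝ}
    (hg : ∀ j, ∀ x ∈ U, QAt M (g j) x) (hd : ∀ j, ∀ x ∈ U, g (j+1) x = 0 → g j x = 0) {j₀ : ℕ}
    (hj₀ : ∀ x ∈ U, g j₀ x = h x) : ∃ S ∈ 𝓝 c, Stab g S := by
  obtain ⟨α, u, hu, hu0, he⟩ := hNC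
  have hW := inter_mem hU (he.and (hu.continuousAt.eventually_ne hu0))
  obtain ⟨W, hWsub, hWo, hcW⟩ := mem_nhds_iff.1 hW
  have step : ∀ i : Fin (m+1), ∃ S ∈ 𝓝 (fun l => c (i.succAbove l)),
      Stab (fun j (t : Fin m → ℝ) => g j (i.insertNth (c i) t)) S := by
    intro i
    have hcont : Continuous (fun t : Fin m → ℝ => (i.insertNth (c i) t : Fin (m+1) → ℝ)) :=
      continuous_iff_continuousAt.2 fun t => (QAt.insertNth (M := M) i (c i) t).continuousAt
    refine T _ ((fun t : Fin m → ℝ => (i.insertNth (c i) t : Fin (m+1) → ℝ)) ⁻¹' W)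
      (hWo.preimage hcont) ?_ _ ?_ ?_
    · simp only [mem_preimage]; rw [insertNth_self rfl]; exact hcW
    · intro j t ht
      exact QAt.comp (hg j _ (hWsub ht).1) (QAt.insertNth i (c i) t)
    · intro j t ht
      exact hd j _ (hWsub ht).1
  choose S hS k hk using step
  refine ⟨W ∩ ⋂ i, (fun x : Fin (m+1) → ℝ => fun l => x (i.succAbove l)) ⁻¹' S i, ?_,
    max j₀ (Finset.univ.sup k), ?_⟩
  · refine inter_mem (hWo.mem_nhds hcW) ((iInter_mem).2 fun i => ?_)
    have : Continuous (fun x : Fin (m+1) → ℝ => fun l => x (i.succAbove l)) := by fun_prop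
    exact this.continuousAt.preimage_mem_nhds (hS i)
  · rintro j hj x ⟨hxW, hxS⟩ hz
    obtain ⟨hxU, hx1, hx2⟩ := hWsub hxW
    have h1 : g j₀ x = 0 := zero_anti hd (le_max_left _ _) hxU hz
    rw [hj₀ x hxU, hx1] at h1
    obtain ⟨i, hi, _⟩ := mon_eq_zero ((mul_eq_zero.1 h1).resolve_right hx2)
    have hki : k i ≤ max j₀ (Finset.univ.sup k) :=
      le_trans (Finset.le_sup (f := k) (Finset.mem_univ i)) (le_max_right _ _)
    have h2 : g (k i) x = 0 := zero_anti hd hki hxU hz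
    have h3 := hk i j (hki.trans hj) _ (mem_iInter.1 hxS i)
    simp only [insertNth_self hi] at h3
    exact h3 h2

theorem TN_succ (T : TN M m) : TN M (m+1) := by
  intro a U hU ha g hg hd
  by_cases hall : ∀ j, g j =ᶠ[𝓝 a] 0
  · obtain ⟨r, hr, hsub⟩ := Metric.isOpen_iff.1 hU a ha
    refine ⟨Metric.ball a r, Metric.ball_mem_nhds a hr, 0, fun j _ x hx _ => ?_⟩
    exact qa_ball (fun z hz => hg j z (hsub hz)) (Metric.mem_ball_self hr) (hall j) x hx
  · push Not at hall
    obtain ⟨j₀, hj₀⟩ := hall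
    obtain ⟨S, hS, hcov⟩ := NN_all (M := M) (m+1) a (g j₀) (hg j₀ a ha) hj₀
    obtain ⟨C, hC, hCU, hcpt⟩ := local_compact_nhds (hU.mem_nhds ha)
    have key : ∀ S, Cov M (m+1) (g j₀) S → Stab g (S ∩ C) := by
      intro S hS
      induction hS with
      | chart f K hK hf =>
        have hcont : ContinuousOn f K := fun c hc => (hf c hc).1.continuousAt.continuousWithinAt
        have hK' : IsCompact (K ∩ f ⁻¹' C) :=
          hK.of_isClosed_subset (hcont.preimage_isClosed_of_isClosed hK.isClosed hcpt.isClosed)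
            inter_subset_left
        have hsubU : ∀ T : Set (Fin (m+1) → ℝ), f '' (T ∩ (K ∩ f ⁻¹' C)) ⊆ U := by
          rintro T _ ⟨x, ⟨_, _, hx⟩, rfl⟩
          exact hCU hx
        have : Stab g (f '' ((K ∩ f ⁻¹' C) ∩ (K ∩ f ⁻¹' C))) := by
          refine hK'.induction_on (p := fun T => Stab g (f '' (T ∩ (K ∩ f ⁻¹' C)))) ?_ ?_ ?_ ?_
          · exact ⟨0, by simp⟩
          · intro s t hst ht
            exact ht.mono (image_mono (inter_subset_inter_left _ hst))
          · intro s t hs ht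
            rw [union_inter_distrib_right, image_union]
            exact Stab.union hd hs ht (hsubU _) (hsubU _)
          · rintro c ⟨hcK, hcC⟩
            obtain ⟨hfq, hNC⟩ := hf c hcK
            have hUc : {x | QAt M f x ∧ f x ∈ U} ∈ 𝓝 c :=
              hfq.eventually.and (hfq.continuousAt.eventually (hU.mem_nhds (hCU hcC)))
            obtain ⟨T', hT', k, hk⟩ := TN_chart T hNC hUc (g := fun j x => g j (f x))
              (fun j x hx => QAt.comp (hg j _ hx.2) hx.1) (fun j x hx => hd j _ hx.2)
              (j₀ := j₀) (fun x _ => rfl)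
            refine ⟨T', mem_nhdsWithin_of_mem_nhds hT', k, ?_⟩
            rintro j hj _ ⟨x, ⟨hx, _⟩, rfl⟩
            exact hk j hj x hx
        refine this.mono ?_
        rintro _ ⟨⟨x, hx, rfl⟩, hxC⟩
        exact ⟨x, ⟨⟨hx, hxC⟩, ⟨hx, hxC⟩⟩, rfl⟩
      | empty => exact ⟨0, by simp⟩
      | union S T _ _ h1 h2 =>
        rw [union_inter_distrib_right]
        exact Stab.union hd h1 h2 (inter_subset_right.trans hCU) (inter_subset_right.trans hCU)
      | mono S T _ hT h1 => exact h1.mono (inter_subset_inter_left _ hT)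
    exact ⟨S ∩ C, inter_mem hS hC, key S hcov⟩

theorem TN_all (m : ℕ) : TN M m := by
  induction m with
  | zero => exact TN_zero
  | succ m ih => exact TN_succ ih

end noeth
end DC

namespace DC

open Set Filter Topology
open scoped ContDiff Nat

section bridge
variable {M : ℕ → ℝ} {ι : Type} [Fintype ι] [DecidableEq ι]

/-- iterated partial derivative along a list of directions -/
noncomputable def pdl (l : List ι) (f : EuclideanSpace ℝ ι → ℝ) : EuclideanSpace ℝ ι → ℝ :=
  l.foldr pd f

theorem pdl_replicate (i : ι) (n : ℕ) (f : EuclideanSpace ℝ ι → ℝ) :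
    (pd i)^[n] f = pdl (List.replicate n i) f := by
  induction n with
  | zero => rfl
  | succ n ih => rw [Function.iterate_succ_apply', ih]; rfl

theorem mderiv_eq_aux (α : ι → ℕ) (L : List ι) (f : EuclideanSpace ℝ ι → ℝ) :
    L.foldr (fun i g => (pd i)^[α i] g) f = pdl (L.flatMap fun i => List.replicate (α i) i) f := by
  induction L with
  | nil => rfl
  | cons i t ih =>
    rw [List.foldr_cons, ih, pdl_replicate]
    simp [pdl, List.foldr_append]

theorem mderiv_eq (α : ι → ℕ) (f : EuclideanSpace ℝ ι → ℝ) :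
    mderiv α f = pdl ((Finset.univ : Finset ι).toList.flatMap fun i => List.replicate (α i) i) f :=
  mderiv_eq_aux _ _ _

variable {U : Set (EuclideanSpace ℝ ι)} {f : EuclideanSpace ℝ ι → ℝ}

theorem pd_smooth (hU : IsOpen U) (hf : ContDiffOn ℝ ∞ f U) (i : ι) :
    ContDiffOn ℝ ∞ (pd i f) U := by
  have h : ContDiffOn ℝ ∞ (fderiv ℝ f) U := hf.fderiv_of_isOpen hU (by simp)
  exact h.clm_apply contDiffOn_const

theorem pdl_smooth (hU : IsOpen U) (hf : ContDiffOn ℝ ∞ f U) (l : List ι) :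
    ContDiffOn ℝ ∞ (pdl l f) U := by
  induction l with
  | nil => exact hf
  | cons i t ih => exact pd_smooth hU ih i

theorem pd_congr (hU : IsOpen U) {g : EuclideanSpace ℝ ι → ℝ} (h : EqOn f g U) (i : ι) :
    EqOn (pd i f) (pd i g) U := by
  intro x hx
  have : f =ᶠ[𝓝 x] g := h.eventuallyEq_of_mem (hU.mem_nhds hx)
  simp only [pd, this.fderiv_eq]

theorem pd_comm (hU : IsOpen U) (hf : ContDiffOn ℝ ∞ f U) (i j : ι) :
    EqOn (pd i (pd j f)) (pd j (pd i f)) U := by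
  intro x hx
  have hc : ContDiffAt ℝ ∞ f x := hf.contDiffAt (hU.mem_nhds hx)
  have hd : DifferentiableAt ℝ (fderiv ℝ f) x :=
    (hc.fderiv_right (m := ∞) (by simp)).differentiableAt (by simp)
  have key : ∀ a b : ι, pd a (pd b f) x = fderiv ℝ (fderiv ℝ f) x (EuclideanSpace.single a 1)
      (EuclideanSpace.single b 1) := by
    intro a b
    have : pd b f = fun y => fderiv ℝ f y (EuclideanSpace.single b 1) := rfl
    rw [pd, this, fderiv_clm_apply hd (differentiableAt_const _)]
    simp
  rw [key, key]
  have hs : IsSymmSndFDerivAt ℝ f x := hc.isSymmSndFDerivAt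
    (by simp only [minSmoothness_of_isRCLikeNormedField]; exact WithTop.coe_le_coe.2 (le_top : (2:ℕ∞) ≤ ⊤))
  exact hs _ _

theorem pdl_perm (hU : IsOpen U) (hf : ContDiffOn ℝ ∞ f U) {l l' : List ι} (h : l.Perm l') :
    EqOn (pdl l f) (pdl l' f) U := by
  induction h with
  | nil => exact fun _ _ => rfl
  | cons i _ ih => exact pd_congr hU ih i
  | swap i j t => exact pd_comm hU (pdl_smooth hU hf t) j i
  | trans _ _ h1 h2 => exact h1.trans h2

theorem pdl_eq (hU : IsOpen U) (hf : ContDiffOn ℝ ∞ f U) (k : ℕ) : ∀ (v : Fin k → ι),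
    ∀ x ∈ U, pdl (List.ofFn v) f x =
      iteratedFDeriv ℝ k f x (fun r => EuclideanSpace.single (v r) 1) := by
  induction k with
  | zero => intro v x hx; simp [pdl]
  | succ k ih =>
    intro v x hx
    have hc : ContDiffAt ℝ ∞ f x := hf.contDiffAt (hU.mem_nhds hx)
    have hd : DifferentiableAt ℝ (iteratedFDeriv ℝ k f) x :=
      hc.differentiableAt_iteratedFDeriv (by exact_mod_cast WithTop.coe_lt_top _)
    rw [List.ofFn_succ, iteratedFDeriv_succ_apply_left]
    have e : pdl (List.ofFn fun i => v i.succ) f =ᶠ[𝓝 x] fun y =>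
        iteratedFDeriv ℝ k f y (fun r => EuclideanSpace.single (v r.succ) 1) := by
      filter_upwards [hU.mem_nhds hx] with y hy using ih _ y hy
    change fderiv ℝ (pdl (List.ofFn fun i => v i.succ) f) x _ = _
    rw [e.fderiv_eq, fderiv_continuousMultilinear_apply_const_apply hd]
    rfl

theorem multi_bound {k : ℕ}
    (T : ContinuousMultilinearMap ℝ (fun _ : Fin k => EuclideanSpace ℝ ι) ℝ) (C : ℝ) (hC : 0 ≤ C)
    (h : ∀ v : Fin k → ι, |T (fun r => EuclideanSpace.single (v r) 1)| ≤ C) :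
    ‖T‖ ≤ (Fintype.card ι : ℝ) ^ k * C := by
  refine T.opNorm_le_bound (by positivity) fun m => ?_
  have hm : m = fun r => ∑ i, (m r i) • (EuclideanSpace.single i (1:ℝ) : EuclideanSpace ℝ ι) := by
    funext r
    ext j
    simp [Pi.single_apply]
  have hT : T m = ∑ v : Fin k → ι, (∏ r, m r (v r)) *
      T (fun r => EuclideanSpace.single (v r) 1) := by
    conv_lhs => rw [hm]
    rw [T.map_sum]
    refine Finset.sum_congr rfl fun v _ => ?_
    rw [T.map_smul_univ, smul_eq_mul]
  rw [hT, Real.norm_eq_abs]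
  refine (Finset.abs_sum_le_sum_abs _ _).trans ?_
  have : ∀ v ∈ (Finset.univ : Finset (Fin k → ι)), |(∏ r, m r (v r)) *
      T (fun r => EuclideanSpace.single (v r) 1)| ≤ (∏ r, ‖m r‖) * C := by
    intro v _
    rw [abs_mul, Finset.abs_prod]
    refine mul_le_mul ?_ (h v) (abs_nonneg _) (by positivity)
    exact Finset.prod_le_prod (fun _ _ => abs_nonneg _) fun r _ => PiLp.norm_apply_le (m r) (v r)
  refine (Finset.sum_le_sum this).trans (le_of_eq ?_)
  simp
  ring

theorem CRM.qat [hM : Wt M] (hU : IsOpen U) (h : CRM M U f) {x : EuclideanSpace ℝ ι} (hx : x ∈ U) :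
    QAt M f x := by
  obtain ⟨hs, hb⟩ := h
  have hs : ContDiffOn ℝ ∞ f U := hs
  obtain ⟨K, hK, hKU, hKc⟩ := local_compact_nhds (hU.mem_nhds hx)
  obtain ⟨A, B, hA, hB, hb⟩ := hb K hKU hKc
  refine QAt.mk_of A (Fintype.card ι * B) ?_
  filter_upwards [hK] with y hy
  refine ⟨hs.contDiffAt (hU.mem_nhds (hKU hy)), fun k => ?_⟩
  have hMk := hM.pos k
  refine (multi_bound _ (A * B ^ k * k ! * M k) (by positivity) fun v => ?_).trans
    (le_of_eq (by rw [mul_pow]; ring))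
  rw [← pdl_eq hU hs k v y (hKU hy)]
  set α : ι → ℕ := fun i => (List.ofFn v).count i with hα
  have hp : (List.ofFn v).Perm
      ((Finset.univ : Finset ι).toList.flatMap fun i => List.replicate (α i) i) := by
    rw [List.perm_iff_count]
    intro a
    rw [List.count_flatMap]
    have : (List.count a ∘ fun i => List.replicate (α i) i) = fun i => if i = a then α i else 0 := by
      funext i
      simp [List.count_replicate]
    rw [this, Finset.sum_map_toList]
    simp [hα]
  have hsum : ∑ i, α i = k := by
    have := hp.length_eq
    rw [List.length_ofFn, List.length_flatMap] at this
    rw [this, Finset.sum_map_toList]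
    simp
  rw [pdl_perm hU hs hp (hKU hy), ← mderiv_eq]
  have h1 := hb y hy α
  rw [hsum] at h1
  have hpos : (0:ℝ) < ∏ i, ((α i)! : ℝ) := Finset.prod_pos fun i _ => by positivity
  rw [one_div, inv_mul_le_iff₀ hpos] at h1
  have hle : (∏ i, ((α i)! : ℝ)) ≤ (k ! : ℝ) := by
    have := Nat.le_of_dvd (Nat.factorial_pos _)
      (Nat.prod_factorial_dvd_factorial_sum (Finset.univ : Finset ι) α)
    rw [hsum] at this
    exact_mod_cast this
  refine h1.trans ((mul_le_mul_of_nonneg_right hle (by positivity)).trans (le_of_eq (by ring)))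

theorem stab_final [hM : Wt M] (hU : IsOpen U) {K : Set (EuclideanSpace ℝ ι)} (hK : IsCompact K)
    (hKU : K ⊆ U) (g : ℕ → EuclideanSpace ℝ ι → ℝ) (hg : ∀ j, ∀ x ∈ U, QAt M (g j) x)
    (hd : ∀ j, ∀ x ∈ U, g (j+1) x = 0 → g j x = 0) :
    ∃ W, IsOpen W ∧ K ⊆ W ∧ W ⊆ U ∧ Stab g W := by
  have hloc : ∀ x ∈ U, ∃ S ∈ 𝓝 x, Stab g S := by
    intro x hx
    let e : EuclideanSpace ℝ ι ≃L[ℝ] (Fin (Fintype.card ι) → ℝ) :=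
      (EuclideanSpace.equiv ι ℝ).trans
        (ContinuousLinearEquiv.piCongrLeft ℝ (fun _ => ℝ) (Fintype.equivFin ι))
    obtain ⟨S, hS, k, hk⟩ := TN_all (M := M) (Fintype.card ι) (e x) (e.symm ⁻¹' U)
      (hU.preimage e.symm.continuous) (by simpa using hx) (fun j t => g j (e.symm t))
      (fun j t ht => QAt.comp (g := g j) (f := fun t => e.symm t) (hg j _ ht)
        (QAt.clm (e.symm : (Fin (Fintype.card ι) → ℝ) →L[ℝ] EuclideanSpace ℝ ι) t))
      (fun j t ht hz => hd j _ ht hz)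
    refine ⟨e ⁻¹' S, e.continuous.continuousAt.preimage_mem_nhds hS, k, fun j hj y hy hz => ?_⟩
    have := hk j hj (e y) hy (by simpa using hz)
    simpa using this
  refine hK.induction_on (p := fun K => ∃ W, IsOpen W ∧ K ⊆ W ∧ W ⊆ U ∧ Stab g W) ?_ ?_ ?_ ?_
  · exact ⟨∅, isOpen_empty, Subset.rfl, empty_subset _, 0, by simp⟩
  · rintro s t hst ⟨W, h1, h2, h3⟩
    exact ⟨W, h1, hst.trans h2, h3⟩
  · rintro s t ⟨W, h1, h2, h3, h4⟩ ⟨W', h1', h2', h3', h4'⟩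
    exact ⟨W ∪ W', h1.union h1', union_subset_union h2 h2', union_subset h3 h3',
      h4.union hd h4' h3 h3'⟩
  · intro x hx
    obtain ⟨S, hS, hst⟩ := hloc x (hKU hx)
    refine ⟨interior S ∩ U, mem_nhdsWithin_of_mem_nhds
      (inter_mem (interior_mem_nhds.2 hS) (hU.mem_nhds (hKU hx))), interior S ∩ U,
      isOpen_interior.inter hU, Subset.rfl, inter_subset_right,
      hst.mono (inter_subset_left.trans interior_subset)⟩

end bridge
end DC

/-- Topological Noetherianity: a decreasing sequence of zero sets of
finitely generated ideals of `C_M(U)` stabilizes in a neighborhood of any compact set. -/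
theorem stmt10 {n : ℕ} (M : ℕ → ℝ)
    (hpos : ∀ j, 0 < M j) (hmono : Monotone M) (hM0 : M 0 = 1)
    (hlog : ∀ j : ℕ, M (j+1) / M j ≤ M (j+2) / M (j+1))
    (hqa : ∑' k : ℕ, ENNReal.ofReal (M k / (((k : ℝ) + 1) * M (k+1))) = ⊤)
    (hder : ∃ C : ℝ, ∀ j : ℕ, 1 ≤ j → (M (j+1) / M j) ^ ((1 : ℝ) / j) ≤ C)
    (U : Set (EuclideanSpace ℝ (Fin n ⊕ Fin n))) (hUopen : IsOpen U) (hUconn : IsConnected U)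
    (p : ℕ → ℕ)
    (f : (j : ℕ) → Fin (p j) → (EuclideanSpace ℝ (Fin n ⊕ Fin n) → ℂ))
    (hf : ∀ j i, CMc M U (f j i))
    (hdec : ∀ j : ℕ, {x ∈ U | ∀ i, f (j+1) i x = 0} ⊆ {x ∈ U | ∀ i, f j i x = 0})
    (K : Set (EuclideanSpace ℝ (Fin n ⊕ Fin n))) (hKcpt : IsCompact K) (hKU : K ⊆ U) :
    ∃ W : Set (EuclideanSpace ℝ (Fin n ⊕ Fin n)), IsOpen W ∧ K ⊆ W ∧ W ⊆ U ∧
      ∃ k : ℕ, ∀ j : ℕ, k ≤ j →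
        {x ∈ U | ∀ i, f j i x = 0} ∩ W = {x ∈ U | ∀ i, f k i x = 0} ∩ W := by
  have : DC.Wt M := ⟨hpos, hmono, hM0, hlog, hqa, hder⟩
  let g : ℕ → EuclideanSpace ℝ (Fin n ⊕ Fin n) → ℝ :=
    fun j x => ∑ i, ((f j i x).re ^ 2 + (f j i x).im ^ 2)
  have hg0 : ∀ j x, g j x = 0 ↔ ∀ i, f j i x = 0 := by
    intro j x
    rw [Finset.sum_eq_zero_iff_of_nonneg (fun i _ => by positivity)]
    refine ⟨fun h i => ?_, fun h i _ => by simp [h i]⟩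
    have := h i (Finset.mem_univ i)
    apply Complex.ext <;> simp only [Complex.zero_re, Complex.zero_im] <;> nlinarith
  have hd : ∀ j, ∀ x ∈ U, g (j+1) x = 0 → g j x = 0 := fun j x hx hz =>
    (hg0 j x).2 (hdec j ⟨hx, (hg0 _ x).1 hz⟩).2
  obtain ⟨W, hW, hKW, hWU, k, hk⟩ := DC.stab_final (M := M) hUopen hKcpt hKU g
    (fun j x hx => DC.QAt.sum fun i _ => ((DC.CRM.qat hUopen (hf j i).1 hx).pow 2).add
      ((DC.CRM.qat hUopen (hf j i).2 hx).pow 2)) hd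
  refine ⟨W, hW, hKW, hWU, k, fun j hj => ?_⟩
  ext x
  constructor
  · rintro ⟨⟨hx, hz⟩, hxW⟩
    exact ⟨⟨hx, (hg0 k x).1 (DC.zero_anti hd hj hx ((hg0 j x).2 hz))⟩, hxW⟩
  · rintro ⟨⟨hx, hz⟩, hxW⟩
    exact ⟨⟨hx, (hg0 j x).1 (hk j hj x hxW ((hg0 k x).2 hz))⟩, hxW⟩
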